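/- arXiv:0811.4230 — 4 statements merged into one kernel-verified Lean document; each statement's English description precedes it below -/
import Mathlib

section
/- Let (X,T) be a topological dynamical system with finite topological entropy, i.e. h_top(T,X) < ∞. Then for every real number h with 0 ≤ h ≤ h_top(T,X) there exists a non-empty compact subset K_h of X such that h^B(T,K_h) = h(T,K_h) = h. In particular, (X,T) is lowerable. -/
open Filter Set Metric MeasureTheory
open scoped ENNReal Topology

noncomputable section

variable {X Y : Type*}

def IsSep [PseudoMetricSpace X] (T : X → X) (n : ℕ) (ε : ℝ) (E : Set X) : Prop :=
  E.Pairwise fun x y => ∃ i < n, ε < dist (T^[i] x) (T^[i] y)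

def sepMaxCard [PseudoMetricSpace X] (T : X → X) (n : ℕ) (ε : ℝ) (K : Set X) : ℝ≥0∞ :=
  ⨆ (E : Finset X) (_ : ↑E ⊆ K ∧ IsSep T n ε (↑E : Set X)), (E.card : ℝ≥0∞)

def sepEnt [PseudoMetricSpace X] (T : X → X) (ε : ℝ) (K : Set X) : EReal :=
  Filter.atTop.limsup fun n : ℕ => ENNReal.log (sepMaxCard T n ε K) / (n : EReal)

def subEnt [PseudoMetricSpace X] (T : X → X) (K : Set X) : EReal :=
  ⨆ (ε : ℝ) (_ : 0 < ε), sepEnt T ε K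

/-- `(X,T)` is lowerable. -/
def Lowerable [PseudoMetricSpace X] (T : X → X) : Prop :=
  ∀ h : EReal, 0 ≤ h → h ≤ subEnt T (univ : Set X) →
    ∃ K : Set X, K.Nonempty ∧ IsCompact K ∧ subEnt T K = h

/-- `(X,T)` is hereditarily lowerable. -/
def HerLowerable [PseudoMetricSpace X] (T : X → X) : Prop :=
  ∀ K : Set X, K.Nonempty → IsCompact K → ∀ h : EReal, 0 ≤ h → h ≤ subEnt T K →
    ∃ K' : Set X, K' ⊆ K ∧ K'.Nonempty ∧ IsCompact K' ∧ subEnt T K' = h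

/-- `(X,T)` is hereditarily uniformly lowerable: the lowering subset can moreover be chosen
with at most one limit (accumulation) point. -/
def HUL [PseudoMetricSpace X] (T : X → X) : Prop :=
  ∀ K : Set X, K.Nonempty → IsCompact K → ∀ h : EReal, 0 ≤ h → h ≤ subEnt T K →
    ∃ K' : Set X, K' ⊆ K ∧ K'.Nonempty ∧ IsCompact K' ∧ subEnt T K' = h ∧
      {x | AccPt x (𝓟 K')}.Subsingleton

/-- `Φ_ε(x) = {y : d(T^n x, T^n y) ≤ ε for all n ≥ 0}`. -/
def Phi [PseudoMetricSpace X] (T : X → X) (ε : ℝ) (x : X) : Set X :=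
  {y | ∀ n : ℕ, dist (T^[n] x) (T^[n] y) ≤ ε}

/-- `h*_T(ε) = sup_x h(T, Φ_ε(x))`. -/
def hStar [PseudoMetricSpace X] (T : X → X) (ε : ℝ) : EReal :=
  ⨆ x : X, subEnt T (Phi T ε x)

/-- `(X,T)` is asymptotically `h`-expansive: `h*_T(ε) → 0` as `ε → 0+`. -/
def AsympHExpansive [PseudoMetricSpace X] (T : X → X) : Prop :=
  Tendsto (fun ε : ℝ => hStar T ε) (𝓝[>] 0) (𝓝 (0 : EReal))

/-- `T^n` for `n : ℤ`, for a homeomorphism `T`. -/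
def iterZ [TopologicalSpace X] (T : X ≃ₜ X) : ℤ → X → X
  | Int.ofNat n => (⇑T)^[n]
  | Int.negSucc n => (⇑T.symm)^[n + 1]

/-- `T` is expansive with expansive constant `δ`. -/
def ExpansiveWith [MetricSpace X] (T : X ≃ₜ X) (δ : ℝ) : Prop :=
  ∀ x y : X, x ≠ y → ∃ n : ℤ, δ < dist (iterZ T n x) (iterZ T n y)

/-- `K ⪰ 𝒲` : `K` is contained in some member of the family `𝒲`. -/
def Refines (K : Set X) (W : Finset (Set X)) : Prop := ∃ A ∈ W, K ⊆ A

/-- The join `U ∨ V` of two finite covers. -/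
def covJoin (U V : Finset (Set X)) : Finset (Set X) :=
  letI := Classical.decEq (Set X)
  (U ×ˢ V).image fun p => p.1 ∩ p.2

/-- `dynCov T U n = U_0^{n-1} = ⋁_{i=0}^{n-1} T^{-i} U` (with `U_0^{-1} = {univ}`). -/
def dynCov (T : X → X) (U : Finset (Set X)) : ℕ → Finset (Set X)
  | 0 => {(univ : Set X)}
  | n + 1 =>
      letI := Classical.decEq (Set X)
      covJoin (dynCov T U n) (U.image fun A => T^[n] ⁻¹' A)

/-- `n_{T,U}(K)`: `0` if `K ⋠ U`; `+∞` if `T^i K ⪰ U` for all `i`; otherwise the largest `j`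
with `T^i K ⪰ U` for all `0 ≤ i ≤ j-1`. -/
def nTU (T : X → X) (U : Finset (Set X)) (K : Set X) : ℕ∞ :=
  ⨆ (j : ℕ) (_ : ∀ i < j, Refines (T^[i] '' K) U), (j : ℕ∞)

/-- `e^{-λ n}` for `n : ℕ∞`, valued in `ℝ≥0∞` (with the conventions `e^{-λ·∞} = 0` for `λ > 0`,
`= 1` for `λ = 0` and `= ∞` for `λ < 0`). -/
def expWeight (lam : ℝ) (n : ℕ∞) : ℝ≥0∞ :=
  if n = ⊤ then (if 0 < lam then 0 else if lam = 0 then 1 else ⊤)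
  else ENNReal.ofReal (Real.exp (-(lam * (n.toNat : ℝ))))

/-- `m_{T,U}(K,λ,k)`: the infimum of `∑_{E ∈ 𝓔} e^{-λ n_{T,U}(E)}` over all countable families
`𝓔` of subsets of `X` with `∪𝓔 ⊇ K` and `E ⪰ U_0^{k-1}` for every `E ∈ 𝓔`. -/
def mTU (T : X → X) (U : Finset (Set X)) (K : Set X) (lam : ℝ) (k : ℕ) : ℝ≥0∞ :=
  ⨅ (ℰ : Set (Set X)) (_ : ℰ.Countable ∧ K ⊆ ⋃₀ ℰ ∧ ∀ E ∈ ℰ, Refines E (dynCov T U k)),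
    ∑' E : ℰ, expWeight lam (nTU T U (E : Set X))

/-- `m_{T,U}(K,λ) = lim_{k→∞} m_{T,U}(K,λ,k)`; since `m_{T,U}(K,λ,k)` is nondecreasing in `k`,
the limit is the supremum. -/
def mTUlim (T : X → X) (U : Finset (Set X)) (K : Set X) (lam : ℝ) : ℝ≥0∞ :=
  ⨆ k : ℕ, mTU T U K lam k

/-- `h^B_U(T,K) = inf {λ : m_{T,U}(K,λ) = 0}`. -/
def hBU (T : X → X) (U : Finset (Set X)) (K : Set X) : EReal :=
  ⨅ (lam : ℝ) (_ : mTUlim T U K lam = 0), (lam : EReal)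

/-- The dimensional entropy `h^B(T,K) = sup_U h^B_U(T,K)`, supremum over finite open covers. -/
def hB [TopologicalSpace X] (T : X → X) (K : Set X) : EReal :=
  ⨆ (U : Finset (Set X)) (_ : (∀ A ∈ U, IsOpen A) ∧ ⋃₀ (↑U : Set (Set X)) = univ),
    hBU T U K

/-- `N(U,K)`: the minimal cardinality of a subfamily of `U` covering `K` (`0` for `K = ∅`,
`∞` if no subfamily covers `K`). -/
def covCard (U : Finset (Set X)) (K : Set X) : ℝ≥0∞ :=
  ⨅ (V : Finset (Set X)) (_ : V ⊆ U ∧ K ⊆ ⋃₀ (↑V : Set (Set X))), (V.card : ℝ≥0∞)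

/-- `h_U(T,K) = limsup_{n→∞} (1/n) log N(U_0^{n-1},K)`. -/
def hCov (T : X → X) (U : Finset (Set X)) (K : Set X) : EReal :=
  Filter.atTop.limsup fun n : ℕ => ENNReal.log (covCard (dynCov T U n) K) / (n : EReal)

/-- Topological entropy of a subset via open covers: `h(T,K) = sup_U h_U(T,K)`. -/
def hCovSup [TopologicalSpace X] (T : X → X) (K : Set X) : EReal :=
  ⨆ (U : Finset (Set X)) (_ : (∀ A ∈ U, IsOpen A) ∧ ⋃₀ (↑U : Set (Set X)) = univ),
    hCov T U K

/-- The atom of the (finite) partition `P` containing `x`. -/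
def atomAt (P : Finset (Set X)) (x : X) : Set X := ⋃₀ {A | A ∈ P ∧ x ∈ A}

/-- `P` is a finite Borel partition. -/
def IsFinPartition [MeasurableSpace X] (P : Finset (Set X)) : Prop :=
  (∀ A ∈ P, MeasurableSet A) ∧ ⋃₀ (↑P : Set (Set X)) = univ ∧
    (↑P : Set (Set X)).Pairwise fun A B => Disjoint A B

/-- The Shannon entropy `H_μ(P) = ∑_{A ∈ P} -μ(A) log μ(A)` of a finite partition. -/
def partEnt [MeasurableSpace X] (μ : Measure X) (P : Finset (Set X)) : ℝ :=
  ∑ A ∈ P, -((μ A).toReal * Real.log (μ A).toReal)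

/-- The measure-theoretic (Kolmogorov–Sinai) entropy `h_μ(T)`: the supremum over finite Borel
partitions `P` of `lim_n (1/n) H_μ(P_0^{n-1})`; by subadditivity this limit is the infimum. -/
def ksEntropy [MeasurableSpace X] (T : X → X) (μ : Measure X) : EReal :=
  ⨆ (P : Finset (Set X)) (_ : IsFinPartition P),
    ⨅ n : ℕ, ((partEnt μ (dynCov T P (n + 1)) / (n + 1) : ℝ) : EReal)

/-- `π` is a principal factor map from `(X,T)` to `(Y,S)` : `h_μ(T) = h_{πμ}(S)` for every
`T`-invariant Borel probability measure `μ`. -/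
def IsPrincipal [MeasurableSpace X] [MeasurableSpace Y] (T : X → X) (S : Y → Y)
    (π : X → Y) : Prop :=
  ∀ μ : Measure X, IsProbabilityMeasure μ → Measure.map T μ = μ →
    ksEntropy T μ = ksEntropy S (Measure.map π μ)

/-- The relative topological entropy `h_top(T,X|π) = sup_{y ∈ Y} h(T, π^{-1}(y))`. -/
def relEnt [PseudoMetricSpace X] (T : X → X) (π : X → Y) : EReal :=
  ⨆ y : Y, subEnt T (π ⁻¹' {y})

/-- The canonical conversion `EReal → ℝ≥0∞` (`⊥` and negative reals go to `0`). -/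
def erealToENNReal (x : EReal) : ℝ≥0∞ := if x = ⊤ then ⊤ else ENNReal.ofReal x.toReal


def BowClose [PseudoMetricSpace X] (T : X → X) (n : ℕ) (ε : ℝ) (x y : X) : Prop :=
  ∀ i < n, dist (T^[i] x) (T^[i] y) ≤ ε

lemma BowClose.symm [PseudoMetricSpace X] {T : X → X} {n : ℕ} {ε : ℝ} {x y : X}
    (h : BowClose T n ε x y) : BowClose T n ε y x := fun i hi => by
  rw [dist_comm]; exact h i hi

lemma BowClose.trans [PseudoMetricSpace X] {T : X → X} {n : ℕ} {ε δ : ℝ} {x y z : X}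
    (h : BowClose T n ε x y) (h2 : BowClose T n δ y z) : BowClose T n (ε + δ) x z := fun i hi =>
  (dist_triangle _ _ _).trans (add_le_add (h i hi) (h2 i hi))

lemma BowClose.mono [PseudoMetricSpace X] {T : X → X} {n m : ℕ} {ε δ : ℝ} {x y : X}
    (h : BowClose T n ε x y) (hm : m ≤ n) (hε : ε ≤ δ) : BowClose T m δ x y := fun i hi =>
  (h i (hi.trans_le hm)).trans hε

/-- an `(n,ε)`-separated set injects into any family of `(n,ε)`-small cells covering it -/
lemma card_le_of_cells [PseudoMetricSpace X] {ι : Type*} {T : X → X} {n : ℕ} {ε : ℝ}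
    (E : Finset X) (hE : IsSep T n ε (↑E : Set X)) (S : Finset ι) (B : ι → Set X)
    (hB : ∀ y ∈ S, ∀ x ∈ B y, ∀ x' ∈ B y, BowClose T n ε x x')
    (hc : ∀ x ∈ E, ∃ y ∈ S, x ∈ B y) : E.card ≤ S.card := by
  classical
  rcases E.eq_empty_or_nonempty with rfl | ⟨e, he⟩
  · simp
  have : Nonempty ι := ⟨(hc e he).choose⟩
  choose! f hf using hc
  apply Finset.card_le_card_of_injOn f (fun x hx => (hf x hx).1)
  intro x hx y hy hxy
  by_contra hne
  obtain ⟨i, hi, hd⟩ := hE hx hy hne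
  have := hB _ (hf x hx).1 x (hf x hx).2 y (by rw [hxy]; exact (hf y hy).2) i hi
  linarith

lemma exists_fin_span [MetricSpace X] [CompactSpace X] {T : X → X} (hT : Continuous T)
    (n : ℕ) {ε : ℝ} (hε : 0 < ε) :
    ∃ S : Finset X, ∀ x, ∃ y ∈ S, BowClose T n ε x y := by
  have hopen : ∀ y : X, IsOpen {x | ∀ i < n, dist (T^[i] x) (T^[i] y) < ε} := by
    intro y
    have : {x | ∀ i < n, dist (T^[i] x) (T^[i] y) < ε} =
        ⋂ i ∈ Finset.range n, {x | dist (T^[i] x) (T^[i] y) < ε} := by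
      ext x; simp
    rw [this]
    apply isOpen_biInter_finset
    intro i _
    exact isOpen_lt ((hT.iterate i).dist continuous_const) continuous_const
  obtain ⟨S, hS⟩ := isCompact_univ.elim_finite_subcover _ hopen (fun x _ => by
    simp only [mem_iUnion, mem_ofPred_eq]
    exact ⟨x, fun i _ => by simpa using hε⟩)
  refine ⟨S, fun x => ?_⟩
  have := hS (mem_univ x)
  simp only [mem_iUnion, mem_ofPred_eq] at this
  obtain ⟨y, hy, h⟩ := this
  exact ⟨y, hy, fun i hi => (h i hi).le⟩

lemma exists_maxSep [MetricSpace X] [CompactSpace X] {T : X → X} (hT : Continuous T)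
    (n : ℕ) {ε : ℝ} (hε : 0 < ε) (K : Set X) :
    ∃ S : Finset X, ↑S ⊆ K ∧ IsSep T n ε (↑S : Set X) ∧ sepMaxCard T n ε K = S.card ∧
      (∀ E : Finset X, ↑E ⊆ K → IsSep T n ε (↑E : Set X) → E.card ≤ S.card) ∧
      ∀ x ∈ K, ∃ y ∈ S, BowClose T n ε x y := by
  classical
  obtain ⟨S0, hS0⟩ := exists_fin_span hT n (half_pos hε)
  have hbd : ∀ E : Finset X, IsSep T n ε (↑E : Set X) → E.card ≤ S0.card := by
    intro E hE
    apply card_le_of_cells E hE S0 (fun y => {x | BowClose T n (ε/2) x y})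
    · intro y _ x hx x' hx'
      have := BowClose.trans hx (BowClose.symm hx')
      simpa using this
    · intro x _
      exact hS0 x
  let P : ℕ → Prop := fun c => ∃ E : Finset X, ↑E ⊆ K ∧ IsSep T n ε (↑E : Set X) ∧ E.card = c
  have hP0 : P 0 := ⟨∅, by simp, by simp [IsSep], rfl⟩
  have hPm := Nat.findGreatest_spec (P := P) (n := S0.card) (Nat.zero_le _) hP0
  obtain ⟨S, hSK, hSs, hSc⟩ := hPm
  have hmax : ∀ E : Finset X, ↑E ⊆ K → IsSep T n ε (↑E : Set X) → E.card ≤ S.card := by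
    intro E h1 h2
    rw [hSc]
    exact Nat.le_findGreatest (hbd E h2) ⟨E, h1, h2, rfl⟩
  refine ⟨S, hSK, hSs, ?_, hmax, ?_⟩
  · apply le_antisymm
    · apply iSup₂_le
      intro E hE
      exact_mod_cast hmax E hE.1 hE.2
    · exact le_iSup₂_of_le S ⟨hSK, hSs⟩ le_rfl
  · intro x hx
    by_contra hcon
    push Not at hcon
    have hxS : x ∉ S := fun h => hcon x h (fun i _ => by simpa using hε.le)
    have h1 : IsSep T n ε (↑(insert x S) : Set X) := by
      rw [Finset.coe_insert]
      rw [IsSep, Set.pairwise_insert]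
      refine ⟨hSs, fun y hy _ => ?_⟩
      have := hcon y hy
      simp only [BowClose] at this
      push Not at this
      obtain ⟨i, hi, h⟩ := this
      exact ⟨⟨i, hi, h⟩, ⟨i, hi, by rwa [dist_comm]⟩⟩
    have h2 := hmax (insert x S) (by
      rw [Finset.coe_insert]; exact insert_subset hx hSK) h1
    rw [Finset.card_insert_of_notMem hxS] at h2
    omega

lemma sepMaxCard_mono [PseudoMetricSpace X] {T : X → X} {n : ℕ} {ε ε' : ℝ} {K K' : Set X}
    (hK : K ⊆ K') (hε : ε' ≤ ε) : sepMaxCard T n ε K ≤ sepMaxCard T n ε' K' := by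
  apply iSup₂_le
  intro E hE
  refine le_iSup₂_of_le E ⟨hE.1.trans hK, hE.2.mono' ?_⟩ le_rfl
  rintro x y ⟨i, hi, h⟩
  exact ⟨i, hi, hε.trans_lt h⟩

lemma log_div_le_iff {c : ℝ≥0∞} {n : ℕ} (hn : 0 < n) (b : ℝ) :
    ENNReal.log c / (n : EReal) ≤ (b : EReal) ↔ c ≤ ENNReal.ofReal (Real.exp (b * n)) := by
  rw [EReal.div_le_iff_le_mul (by exact_mod_cast hn) (EReal.natCast_ne_top n),
    ← ENNReal.log_le_log_iff, ENNReal.log_ofReal_of_pos (Real.exp_pos _), Real.log_exp]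
  have : ((n : EReal) * (b : EReal)) = ((b * n : ℝ) : EReal) := by
    rw [EReal.coe_mul, mul_comm]; rfl
  rw [this]

lemma subEnt_le_of [PseudoMetricSpace X] {T : X → X} {K : Set X} {h : ℝ}
    (H : ∀ ε > 0, ∀ δ > 0, ∀ᶠ n : ℕ in atTop,
      sepMaxCard T n ε K ≤ ENNReal.ofReal (Real.exp ((h + δ) * n))) :
    subEnt T K ≤ (h : EReal) := by
  apply iSup₂_le
  intro ε hε
  apply EReal.le_of_forall_lt_iff_le.1
  intro z hz
  have hz' : h < z := by exact_mod_cast hz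
  apply Filter.limsup_le_of_le (by isBoundedDefault)
  filter_upwards [H ε hε (z - h) (by linarith), eventually_gt_atTop 0] with n hn hn0
  rw [log_div_le_iff hn0]
  simpa using hn

lemma sepMaxCard_le_of_subEnt [PseudoMetricSpace X] {T : X → X} {K : Set X} {h : ℝ}
    (H : subEnt T K ≤ (h : EReal)) {ε : ℝ} (hε : 0 < ε) {δ : ℝ} (hδ : 0 < δ) :
    ∀ᶠ n : ℕ in atTop, sepMaxCard T n ε K ≤ ENNReal.ofReal (Real.exp ((h + δ) * n)) := by
  have h1 : sepEnt T ε K ≤ h := (le_iSup₂_of_le ε hε le_rfl).trans H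
  have h2 : sepEnt T ε K < ((h + δ : ℝ) : EReal) :=
    h1.trans_lt (by exact_mod_cast (by linarith : h < h + δ))
  have h3 := Filter.eventually_lt_of_limsup_lt h2 (by isBoundedDefault)
  filter_upwards [h3, eventually_gt_atTop 0] with n hn hn0
  exact (log_div_le_iff hn0 _).1 hn.le

lemma exists_freq_of_lt_subEnt [PseudoMetricSpace X] {T : X → X} {K : Set X} {l : ℝ}
    (H : (l : EReal) < subEnt T K) : ∃ ε > 0, ∃ᶠ n : ℕ in atTop,
      ENNReal.ofReal (Real.exp (l * n)) < sepMaxCard T n ε K := by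
  obtain ⟨ε, h⟩ := lt_iSup_iff.1 H
  obtain ⟨hε, h⟩ := lt_iSup_iff.1 h
  refine ⟨ε, hε, ?_⟩
  have := Filter.frequently_lt_of_lt_limsup (by isBoundedDefault) h
  refine (this.and_eventually (eventually_gt_atTop 0)).mono ?_
  rintro n ⟨hn, hn0⟩
  by_contra hcon
  push Not at hcon
  exact absurd ((log_div_le_iff hn0 _).2 hcon) (not_le.2 hn)

lemma refines_dynCov {T : X → X} {U : Finset (Set X)} {E : Set X} :
    ∀ k : ℕ, (∀ i < k, Refines (T^[i] '' E) U) → Refines E (dynCov T U k)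
  | 0, _ => ⟨univ, by simp [dynCov], subset_univ _⟩
  | k + 1, h => by
    classical
    obtain ⟨A, hA, hEA⟩ := refines_dynCov k (fun i hi => h i (by omega))
    obtain ⟨B, hB, hEB⟩ := h k (by omega)
    refine ⟨A ∩ T^[k] ⁻¹' B, ?_, subset_inter hEA (image_subset_iff.1 hEB)⟩
    simp only [dynCov, covJoin, Finset.mem_image, Finset.mem_product]
    exact ⟨(A, T^[k] ⁻¹' B), ⟨hA, B, hB, rfl⟩, rfl⟩

lemma refines_of_le_nTU {T : X → X} {U : Finset (Set X)} {E : Set X} {n : ℕ}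
    (h : (n : ℕ∞) ≤ nTU T U E) : ∀ i < n, Refines (T^[i] '' E) U := by
  intro i hi
  have h1 : (i : ℕ∞) < nTU T U E := lt_of_lt_of_le (by exact_mod_cast hi) h
  obtain ⟨j, hj⟩ := lt_iSup_iff.1 h1
  obtain ⟨hj1, hj2⟩ := lt_iSup_iff.1 hj
  exact hj1 i (by exact_mod_cast hj2)

lemma le_nTU {T : X → X} {U : Finset (Set X)} {E : Set X} {n : ℕ}
    (h : ∀ i < n, Refines (T^[i] '' E) U) : (n : ℕ∞) ≤ nTU T U E :=
  le_iSup₂_of_le n h le_rfl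

lemma expWeight_coe (lam : ℝ) (n : ℕ) :
    expWeight lam (n : ℕ∞) = ENNReal.ofReal (Real.exp (-(lam * n))) := by
  simp [expWeight]

lemma expWeight_top_pos {lam : ℝ} (h : 0 < lam) : expWeight lam ⊤ = 0 := by
  simp [expWeight, h]

lemma one_le_expWeight {lam : ℝ} (h : lam ≤ 0) (N : ℕ∞) : 1 ≤ expWeight lam N := by
  induction N using ENat.recTopCoe with
  | top =>
    simp only [expWeight, if_true, not_lt.2 h, if_false]
    split_ifs <;> simp
  | coe n =>
    rw [expWeight_coe, ENNReal.one_le_ofReal]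
    apply Real.one_le_exp
    have : lam * n ≤ 0 := mul_nonpos_of_nonpos_of_nonneg h (Nat.cast_nonneg n)
    linarith

lemma expWeight_le {lam : ℝ} (h : 0 < lam) {n : ℕ} {N : ℕ∞} (hn : (n : ℕ∞) ≤ N) :
    expWeight lam N ≤ ENNReal.ofReal (Real.exp (-(lam * n))) := by
  induction N using ENat.recTopCoe with
  | top => simp [expWeight_top_pos h]
  | coe m =>
    rw [expWeight_coe]
    have : (n : ℝ) ≤ m := by exact_mod_cast hn
    gcongr

lemma expWeight_anti {lam g : ℝ} (h : lam ≤ g) (N : ℕ∞) : expWeight g N ≤ expWeight lam N := by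
  rcases le_or_gt g 0 with hg | hg
  · induction N using ENat.recTopCoe with
    | top =>
      rcases h.lt_or_eq with h1 | rfl
      · have : expWeight lam ⊤ = ⊤ := by
          simp [expWeight, not_lt.2 (h.trans hg), (h1.trans_le hg).ne]
        rw [this]; exact le_top
      · exact le_rfl
    | coe n =>
      simp only [expWeight_coe]
      gcongr
  · induction N using ENat.recTopCoe with
    | top => simp [expWeight_top_pos hg]
    | coe n =>
      simp only [expWeight_coe]
      gcongr

lemma mTU_mono {T : X → X} {U : Finset (Set X)} {K K' : Set X} (hK : K ⊆ K') {lam g : ℝ}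
    (h : lam ≤ g) (k : ℕ) : mTU T U K g k ≤ mTU T U K' lam k := by
  apply le_iInf₂
  intro F hF
  refine iInf₂_le_of_le F ⟨hF.1, hK.trans hF.2.1, hF.2.2⟩ ?_
  exact ENNReal.tsum_le_tsum fun E => expWeight_anti h _

lemma mTUlim_mono {T : X → X} {U : Finset (Set X)} {K K' : Set X} (hK : K ⊆ K') {lam g : ℝ}
    (h : lam ≤ g) : mTUlim T U K g ≤ mTUlim T U K' lam :=
  iSup_mono fun k => mTU_mono hK h k

lemma hBU_mono {T : X → X} {U : Finset (Set X)} {K K' : Set X} (hK : K ⊆ K') :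
    hBU T U K ≤ hBU T U K' := by
  apply le_iInf₂
  intro lam h
  have h0 : mTUlim T U K lam = 0 := le_antisymm ((mTUlim_mono hK le_rfl).trans h.le) zero_le
  exact iInf₂_le lam h0

lemma hB_mono [TopologicalSpace X] {T : X → X} {K K' : Set X} (hK : K ⊆ K') :
    hB T K ≤ hB T K' := iSup₂_mono fun _ _ => hBU_mono hK

lemma mTU_union_zero {T : X → X} {U : Finset (Set X)} {A B : Set X} {lam : ℝ} {k : ℕ}
    (hA : mTU T U A lam k = 0) (hB : mTU T U B lam k = 0) : mTU T U (A ∪ B) lam k = 0 := by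
  apply le_antisymm _ (zero_le)
  apply le_of_forall_pos_le_add
  intro δ hδ
  have hδ2 : 0 < δ / 2 := ENNReal.half_pos hδ.ne'
  obtain ⟨F, hF⟩ := iInf_lt_iff.1 (hA.le.trans_lt hδ2)
  obtain ⟨hF1, hF2⟩ := iInf_lt_iff.1 hF
  obtain ⟨G, hG⟩ := iInf_lt_iff.1 (hB.le.trans_lt hδ2)
  obtain ⟨hG1, hG2⟩ := iInf_lt_iff.1 hG
  refine iInf₂_le_of_le (F ∪ G) ⟨hF1.1.union hG1.1, ?_, ?_⟩ ?_
  · rw [sUnion_union]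
    exact union_subset_union hF1.2.1 hG1.2.1
  · rintro E (h | h)
    · exact hF1.2.2 E h
    · exact hG1.2.2 E h
  · refine (ENNReal.tsum_union_le (fun E => expWeight lam (nTU T U E)) F G).trans ?_
    refine (add_le_add hF2.le hG2.le).trans ?_
    rw [ENNReal.add_halves, zero_add]

lemma mTU_empty {T : X → X} {U : Finset (Set X)} {lam : ℝ} {k : ℕ} :
    mTU T U ∅ lam k = 0 := by
  apply le_antisymm _ (zero_le)
  exact iInf₂_le_of_le ∅ ⟨countable_empty, by simp, by simp⟩ (by simp)

lemma mTUlim_biUnion_zero {ι : Type*} {T : X → X} {U : Finset (Set X)} {lam : ℝ}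
    (S : Finset ι) (B : ι → Set X) (h : ∀ y ∈ S, mTUlim T U (B y) lam = 0) :
    mTUlim T U (⋃ y ∈ S, B y) lam = 0 := by
  classical
  simp only [mTUlim, ENNReal.iSup_eq_zero] at h ⊢
  intro k
  induction S using Finset.induction_on with
  | empty => simpa using mTU_empty
  | insert a s ha ih =>
    rw [Finset.set_biUnion_insert]
    exact mTU_union_zero (h a (by simp) k) (ih fun y hy => h y (by simp [hy]))

lemma exists_hBU_piece {ι : Type*} {T : X → X} {U : Finset (Set X)} {g : ℝ} {K : Set X}
    (hg : (g : EReal) < hBU T U K) (S : Finset ι) (B : ι → Set X) (hc : K ⊆ ⋃ y ∈ S, B y) :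
    ∃ y ∈ S, (g : EReal) ≤ hBU T U (K ∩ B y) := by
  by_contra hcon
  push Not at hcon
  have h1 : ∀ y ∈ S, mTUlim T U (K ∩ B y) g = 0 := by
    intro y hy
    obtain ⟨lam, hl⟩ := iInf_lt_iff.1 (hcon y hy)
    obtain ⟨hl1, hl2⟩ := iInf_lt_iff.1 hl
    exact le_antisymm ((mTUlim_mono subset_rfl (by exact_mod_cast hl2.le)).trans hl1.le) (zero_le)
  have h2 := mTUlim_biUnion_zero S _ h1
  have h3 : mTUlim T U K g = 0 := by
    apply le_antisymm _ (zero_le)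
    rw [← h2]
    apply mTUlim_mono _ le_rfl
    intro x hx
    have := hc hx
    simp only [mem_iUnion] at this ⊢
    obtain ⟨y, hy, hxy⟩ := this
    exact ⟨y, hy, hx, hxy⟩
  exact absurd (iInf₂_le g h3 : hBU T U K ≤ g) (not_le.2 hg)

lemma zero_le_hB [TopologicalSpace X] {T : X → X} {K : Set X} (hK : K.Nonempty) :
    0 ≤ hB T K := by
  refine le_iSup₂_of_le {univ} ⟨by simp, by simp⟩ ?_
  apply le_iInf₂
  intro lam h
  by_contra hcon
  push Not at hcon
  have hl : lam ≤ 0 := by exact_mod_cast hcon.le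
  have : (1 : ℝ≥0∞) ≤ 0 := by
    rw [← h]
    refine le_iSup_of_le 0 ?_
    apply le_iInf₂
    intro F hF
    obtain ⟨x, hx⟩ := hK
    obtain ⟨E, hE, -⟩ := hF.2.1 hx
    exact (one_le_expWeight hl _).trans (ENNReal.le_tsum (⟨E, hE⟩ : F))
  simp at this

lemma hB_le_of_subEnt [MetricSpace X] [CompactSpace X] {T : X → X} (hT : Continuous T)
    {K : Set X} {h : ℝ} (h0 : 0 ≤ h) (H : subEnt T K ≤ (h : EReal)) : hB T K ≤ (h : EReal) := by
  classical
  apply iSup₂_le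
  intro U hU
  apply EReal.le_of_forall_lt_iff_le.1
  intro z hz
  have hz' : h < z := by exact_mod_cast hz
  have hz0 : 0 < z := h0.trans_lt hz'
  refine iInf₂_le z ?_
  simp only [mTUlim, ENNReal.iSup_eq_zero]
  intro k
  obtain ⟨ε, hε, hleb⟩ := lebesgue_number_lemma_of_metric_sUnion (s := univ) (c := (↑U : Set (Set X)))
    isCompact_univ (fun A hA => hU.1 A hA) hU.2.ge
  have hev := sepMaxCard_le_of_subEnt H (half_pos hε) (half_pos (sub_pos.2 hz'))
  have hlim : Tendsto (fun n : ℕ => ENNReal.ofReal (Real.exp (-((z - h) / 2) * n))) atTop (𝓝 0) := by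
    rw [← ENNReal.ofReal_zero]
    apply ENNReal.tendsto_ofReal
    apply Real.tendsto_exp_atBot.comp
    exact tendsto_natCast_atTop_atTop.const_mul_atTop_of_neg (by linarith)
  apply le_antisymm _ (zero_le)
  apply ge_of_tendsto hlim
  filter_upwards [hev, eventually_ge_atTop k] with n hn hnk
  obtain ⟨S, hSK, hSs, hSc, -, hspan⟩ := exists_maxSep hT n (half_pos hε) K
  let B : X → Set X := fun y => {x | BowClose T n (ε / 2) x y}
  have hBr : ∀ y, ∀ i < n, Refines (T^[i] '' B y) U := by
    intro y i hi
    obtain ⟨A, hA, hAs⟩ := hleb (T^[i] y) (mem_univ _)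
    refine ⟨A, hA, ?_⟩
    rintro _ ⟨x, hx, rfl⟩
    apply hAs
    rw [mem_ball]
    exact (hx i hi).trans_lt (half_lt_self hε)
  refine iInf₂_le_of_le (↑(S.image B) : Set (Set X)) ⟨Finset.countable_toSet _, ?_, ?_⟩ ?_
  · intro x hx
    obtain ⟨y, hy, hxy⟩ := hspan x hx
    exact ⟨B y, by simpa using ⟨y, hy, rfl⟩, hxy⟩
  · intro E hE
    simp only [Finset.coe_image, mem_image] at hE
    obtain ⟨y, hy, rfl⟩ := hE
    exact refines_dynCov k fun i hi => hBr y i (hi.trans_le hnk)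
  · rw [Finset.tsum_subtype' (S.image B) (fun E => expWeight z (nTU T U E))]
    calc ∑ E ∈ S.image B, expWeight z (nTU T U E)
        ≤ ∑ E ∈ S.image B, ENNReal.ofReal (Real.exp (-(z * n))) := by
          apply Finset.sum_le_sum
          intro E hE
          obtain ⟨y, hy, rfl⟩ := Finset.mem_image.1 hE
          exact expWeight_le hz0 (le_nTU (hBr y))
      _ = (S.image B).card * ENNReal.ofReal (Real.exp (-(z * n))) := by simp
      _ ≤ S.card * ENNReal.ofReal (Real.exp (-(z * n))) := by
          gcongr; exact Finset.card_image_le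
      _ ≤ ENNReal.ofReal (Real.exp ((h + (z - h) / 2) * n)) *
            ENNReal.ofReal (Real.exp (-(z * n))) := by
          gcongr; rw [← hSc]; exact hn
      _ = ENNReal.ofReal (Real.exp (-((z - h) / 2) * n)) := by
          rw [← ENNReal.ofReal_mul (Real.exp_pos _).le, ← Real.exp_add]
          congr 2; ring

lemma card_small_le [MetricSpace X] {T : X → X} {ε : ℝ} (hε : 0 < ε) {n j : ℕ}
    (S : Finset X) (hS : IsSep T n ε (↑S : Set X)) (S' : Finset X)
    (hmax : ∀ E : Finset X, IsSep T (n - j) ε (↑E : Set X) → E.card ≤ S'.card)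
    (hSA : ∀ x ∈ S, ∀ y ∈ S, BowClose T j ε x y) : S.card ≤ S'.card := by
  classical
  have key : ∀ x ∈ S, ∀ y ∈ S, x ≠ y →
      ∃ i < n - j, ε < dist (T^[i] (T^[j] x)) (T^[i] (T^[j] y)) := by
    intro x hx y hy hxy
    obtain ⟨i, hi, hd⟩ := hS hx hy hxy
    have hij : j ≤ i := by
      by_contra h
      exact absurd (hSA x hx y hy i (by omega)) (not_le.2 hd)
    refine ⟨i - j, by omega, ?_⟩
    rw [← Function.iterate_add_apply, ← Function.iterate_add_apply, Nat.sub_add_cancel hij]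
    exact hd
  have hinj : Set.InjOn (T^[j]) (↑S : Set X) := by
    intro x hx y hy hxy
    by_contra hne
    obtain ⟨i, _, hd⟩ := key x hx y hy hne
    rw [hxy, dist_self] at hd
    linarith
  rw [← Finset.card_image_of_injOn hinj]
  apply hmax
  intro x hx y hy hxy
  simp only [Finset.coe_image, Set.mem_image, Finset.mem_coe] at hx hy
  obtain ⟨x, hx, rfl⟩ := hx
  obtain ⟨y, hy, rfl⟩ := hy
  exact key x hx y hy (fun h => hxy (by rw [h]))

lemma exists_records {a : ℕ → ℝ} (h : ∀ B : ℝ, ∃ n, B < a n) (M : ℕ) :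
    ∃ n ≥ M, ∀ j ≤ n, a j ≤ a n := by
  obtain ⟨b, -, hb⟩ := Finset.exists_max_image (Finset.range (M + 1)) a ⟨0, by simp⟩
  obtain ⟨n, hn⟩ := h (a b)
  obtain ⟨c, hc0, hc⟩ := Finset.exists_max_image (Finset.range (n + 1)) a ⟨0, by simp⟩
  simp only [Finset.mem_range] at hb hc hc0
  refine ⟨c, ?_, fun j hj => hc j (by omega)⟩
  by_contra hcon
  have h1 := hb c (by omega)
  have h2 := hc n (by omega)
  linarith

lemma exists_fam [MetricSpace X] [CompactSpace X] {T : X → X} (hT : Continuous T) {l : ℝ}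
    (hl : (l : EReal) < subEnt T (univ : Set X)) :
    ∃ ε > 0, ∃ ν : Set X → ℝ, (∀ A, 0 ≤ ν A) ∧ ν univ = 1 ∧
      (∀ A B, Disjoint A B → ν (A ∪ B) = ν A + ν B) ∧
      ∀ (j : ℕ) (A : Set X), (∀ x ∈ A, ∀ y ∈ A, BowClose T j ε x y) →
        ν A ≤ Real.exp (-(l * j)) := by
  classical
  obtain ⟨l2, hl2, hl2'⟩ := EReal.lt_iff_exists_real_btwn.1 hl
  have hl2 : l < l2 := by exact_mod_cast hl2
  obtain ⟨ε, hε, hfr⟩ := exists_freq_of_lt_subEnt hl2'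
  refine ⟨ε, hε, ?_⟩
  choose S _ hS hcard hmax hspan using fun n => exists_maxSep hT n hε (univ : Set X)
  have hfr' : ∃ᶠ n : ℕ in atTop, Real.exp (l2 * n) < (S n).card := by
    refine hfr.mono fun n hn => ?_
    rw [hcard n, ← ENNReal.ofReal_natCast] at hn
    exact (ENNReal.ofReal_lt_ofReal_iff_of_nonneg (Real.exp_pos _).le).1 hn
  have hX : Nonempty X := by
    obtain ⟨n, hn⟩ := hfr'.exists
    have : 0 < (S n).card := by
      have := (Real.exp_pos _).trans hn
      exact_mod_cast this
    exact ⟨(Finset.card_pos.1 this).choose⟩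
  have hpos : ∀ n, 0 < (S n).card := fun n =>
    Finset.card_pos.2 ⟨_, (hspan n hX.some (mem_univ _)).choose_spec.1⟩
  set a : ℕ → ℝ := fun n => Real.log (S n).card - l * n with ha
  have hunb : ∀ B : ℝ, ∃ n, B < a n := by
    intro B
    have hten : Tendsto (fun n : ℕ => (l2 - l) * (n : ℝ)) atTop atTop :=
      Tendsto.const_mul_atTop (by linarith) tendsto_natCast_atTop_atTop
    obtain ⟨n, hn, hn2⟩ := (hfr'.and_eventually (hten.eventually_gt_atTop B)).exists
    refine ⟨n, ?_⟩
    have := Real.log_lt_log (Real.exp_pos _) hn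
    rw [Real.log_exp] at this
    simp only [ha]
    linarith
  choose r hr hrec using exists_records hunb
  set f : ℕ → Set X → ℝ := fun M A =>
    (((S (r M)).filter (· ∈ A)).card : ℝ) / (S (r M)).card with hf
  have hposR : ∀ n, (0 : ℝ) < (S n).card := fun n => by exact_mod_cast hpos n
  have hlim : ∀ A : Set X, ∃ c ∈ Icc (0 : ℝ) 1,
      Tendsto (fun M => f M A) (hyperfilter ℕ) (𝓝 c) := by
    intro A
    have := isCompact_Icc.ultrafilter_le_nhds' ((hyperfilter ℕ).map (fun M => f M A))
      (s := Icc (0 : ℝ) 1) (by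
        rw [Ultrafilter.mem_map]
        apply Filter.univ_mem'
        intro M
        refine ⟨by positivity, ?_⟩
        rw [div_le_one (hposR _)]
        exact_mod_cast Finset.card_filter_le _ _)
    exact this
  choose ν hν hνlim using hlim
  refine ⟨ν, fun A => (hν A).1, ?_, ?_, ?_⟩
  · refine tendsto_nhds_unique (hνlim univ) (tendsto_const_nhds.congr fun M => ?_)
    simp [hf, (hposR _).ne']
  · intro A B hAB
    refine tendsto_nhds_unique (hνlim _) (((hνlim A).add (hνlim B)).congr fun M => ?_)
    simp only [hf]
    rw [← add_div, ← Nat.cast_add, ← Finset.card_union_of_disjoint]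
    · congr 3
      ext x; simp only [Finset.mem_union, Finset.mem_filter, Set.mem_union]; tauto
    · rw [Finset.disjoint_left]
      intro x hx hx'
      exact Set.disjoint_left.1 hAB (Finset.mem_filter.1 hx).2 (Finset.mem_filter.1 hx').2
  · intro j A hA
    refine le_of_tendsto (hνlim A) ?_
    have : ∀ᶠ M : ℕ in hyperfilter ℕ, j ≤ M :=
      (Nat.hyperfilter_le_atTop) (eventually_ge_atTop j)
    filter_upwards [this] with M hM
    have h1 := card_small_le hε (n := r M) (j := j) ((S (r M)).filter (· ∈ A))
      ((hS (r M)).mono (by intro x hx; exact (Finset.mem_filter.1 hx).1)) (S (r M - j))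
      (fun E hE => hmax _ E (subset_univ _) hE)
      (fun x hx y hy => hA x (Finset.mem_filter.1 hx).2 y (Finset.mem_filter.1 hy).2)
    have h2 := hrec M (r M - j) (by omega)
    simp only [ha] at h2
    have hrj : j ≤ r M := hM.trans (hr M)
    rw [Nat.cast_sub hrj] at h2
    simp only [hf]
    rw [div_le_iff₀ (hposR _)]
    have h3 : ((S (r M - j)).card : ℝ) = Real.exp (Real.log ((S (r M - j)).card)) :=
      (Real.exp_log (hposR _)).symm
    have h4 : ((S (r M)).card : ℝ) = Real.exp (Real.log ((S (r M)).card)) :=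
      (Real.exp_log (hposR _)).symm
    calc (((S (r M)).filter (· ∈ A)).card : ℝ) ≤ (S (r M - j)).card := by exact_mod_cast h1
      _ ≤ _ := by
        rw [h3, h4, ← Real.exp_add]
        apply Real.exp_le_exp.2
        linarith

structure FA (ν : Set X → ℝ) : Prop where
  nonneg : ∀ A, 0 ≤ ν A
  add : ∀ A B, Disjoint A B → ν (A ∪ B) = ν A + ν B

lemma FA.mono {ν : Set X → ℝ} (h : FA ν) {A B : Set X} (hAB : A ⊆ B) : ν A ≤ ν B := by
  have := h.add A (B \ A) disjoint_sdiff_right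
  rw [union_diff_cancel hAB] at this
  linarith [h.nonneg (B \ A)]

lemma FA.empty {ν : Set X → ℝ} (h : FA ν) : ν ∅ = 0 := by
  have := h.add ∅ ∅ (by simp)
  rw [empty_union] at this
  linarith

lemma FA.union_le {ν : Set X → ℝ} (h : FA ν) (A B : Set X) : ν (A ∪ B) ≤ ν A + ν B := by
  have := h.add A (B \ A) disjoint_sdiff_right
  rw [union_diff_self] at this
  linarith [h.mono (diff_subset : B \ A ⊆ B)]

lemma FA.biUnion_le {ι : Type*} {ν : Set X → ℝ} (h : FA ν) (s : Finset ι) (B : ι → Set X) :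
    ν (⋃ i ∈ s, B i) ≤ ∑ i ∈ s, ν (B i) := by
  classical
  induction s using Finset.induction_on with
  | empty => simp [h.empty]
  | insert a s ha ih =>
    rw [Finset.sum_insert ha, Finset.set_biUnion_insert]
    linarith [h.union_le (B a) (⋃ i ∈ s, B i)]

lemma FA.sum_disj {ι : Type*} {ν : Set X → ℝ} (h : FA ν) (s : Finset ι) (B : ι → Set X)
    (hd : ∀ i j, i ≠ j → Disjoint (B i) (B j)) :
    ∑ i ∈ s, ν (B i) = ν (⋃ i ∈ s, B i) := by
  classical
  induction s using Finset.induction_on with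
  | empty => simp [h.empty]
  | insert a s ha ih =>
    rw [Finset.sum_insert ha, Finset.set_biUnion_insert, ih, h.add]
    simp only [disjoint_iUnion_right]
    intro i hi
    exact hd a i (fun e => ha (e ▸ hi))

lemma exists_partition [MetricSpace X] [CompactSpace X] {ε η : ℝ} (hε : 0 < ε) (hη : 0 < η) :
    ∃ r > 0, ∃ (k m : ℕ) (Q : Fin k → Fin m → Set X), (∀ ρ j, IsClosed (Q ρ j)) ∧
      (∀ ρ j, ∀ x ∈ Q ρ j, ∀ y ∈ Q ρ j, dist x y ≤ ε) ∧
      (∀ ρ j j', ∀ x ∈ Q ρ j, ∀ y ∈ Q ρ j', dist x y < r → j = j') ∧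
      ∀ ν : Set X → ℝ, FA ν → ∃ ρ, (1 - η) * ν univ ≤ ∑ j, ν (Q ρ j) := by
  classical
  obtain ⟨S, hS⟩ := exists_fin_span (X := X) continuous_id 1 (show (0 : ℝ) < ε / 4 by positivity)
  set m := S.card
  set c : Fin m → X := fun j => (S.equivFin.symm j : X) with hc
  have hnet : ∀ x, ∃ j, dist x (c j) ≤ ε / 4 := by
    intro x
    obtain ⟨y, hy, h⟩ := hS x
    refine ⟨S.equivFin ⟨y, hy⟩, ?_⟩
    simpa [hc] using h 0 one_pos
  obtain ⟨k0, hk0⟩ := exists_nat_gt ((m : ℝ) / η)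
  set k := k0 + 1
  have hkpos : (0 : ℝ) < k := by positivity
  have hk : (m : ℝ) ≤ k * η := by
    rw [div_lt_iff₀ hη] at hk0
    have : (k : ℝ) = k0 + 1 := by simp [k]
    nlinarith
  set r := ε / (8 * k) with hr
  have hr0 : 0 < r := by positivity
  have hrk : 8 * k * r = ε := by rw [hr]; field_simp
  set R : Fin k → ℝ := fun ρ => ε / 4 + (2 * (ρ : ℕ) + 1) * r with hR
  have hR1 : ∀ ρ, ε / 4 ≤ R ρ - r := by
    intro ρ
    simp only [hR]
    nlinarith [mul_nonneg (Nat.cast_nonneg (α := ℝ) (ρ : ℕ)) hr0.le]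
  have hR2 : ∀ ρ, R ρ - r ≤ ε / 2 := by
    intro ρ
    simp only [hR]
    have : ((ρ : ℕ) : ℝ) ≤ k := by exact_mod_cast ρ.2.le
    nlinarith
  set Q : Fin k → Fin m → Set X := fun ρ j =>
    {x | dist x (c j) ≤ R ρ - r ∧ ∀ l < j, R ρ + r ≤ dist x (c l)} with hQ
  set Sh : Fin k → Fin m → Set X := fun ρ l => {x | |dist x (c l) - R ρ| < r} with hSh
  refine ⟨2 * r, by positivity, k, m, Q, ?_, ?_, ?_, ?_⟩
  · intro ρ j
    have : Q ρ j = {x | dist x (c j) ≤ R ρ - r} ∩ ⋂ l : Fin m, ⋂ (_ : l < j),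
        {x | R ρ + r ≤ dist x (c l)} := by
      ext x; simp [hQ]
    rw [this]
    refine (isClosed_le (by fun_prop) (by fun_prop)).inter ?_
    exact isClosed_iInter fun l => isClosed_iInter fun _ =>
      isClosed_le (by fun_prop) (by fun_prop)
  · intro ρ j x hx y hy
    have := dist_triangle_right x y (c j)
    linarith [hx.1, hy.1, hR2 ρ]
  · intro ρ j j' x hx y hy hxy
    rcases lt_trichotomy j j' with h | h | h
    · have h1 := hy.2 j h
      have h2 := dist_triangle_left y (c j) x
      linarith [hx.1]
    · exact h
    · have h1 := hx.2 j' h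
      have h2 := dist_triangle x y (c j')
      linarith [hy.1]
  · intro ν hν
    have hcov : ∀ ρ, (univ : Set X) ⊆
        (⋃ j ∈ (Finset.univ : Finset (Fin m)), Q ρ j) ∪
        (⋃ l ∈ (Finset.univ : Finset (Fin m)), Sh ρ l) := by
      intro ρ x _
      by_cases hx : ∃ l, x ∈ Sh ρ l
      · right; simpa using hx
      · left
        push Not at hx
        have hne : (Finset.univ.filter fun j : Fin m => dist x (c j) ≤ R ρ - r).Nonempty := by
          obtain ⟨j, hj⟩ := hnet x
          exact ⟨j, by simpa using hj.trans (hR1 ρ)⟩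
        set j := Finset.min' _ hne
        have hj := Finset.min'_mem _ hne
        have hjm : ∀ l < j, ¬ dist x (c l) ≤ R ρ - r := by
          intro l hl h
          have : j ≤ l := Finset.min'_le _ _ (by simpa using h)
          exact absurd hl (not_lt.2 this)
        simp only [Finset.mem_univ, iUnion_true, mem_iUnion]
        refine ⟨j, by simpa using hj, fun l hl => ?_⟩
        have h1 := hjm l hl
        have h2 := hx l
        simp only [hSh, mem_setOf_eq, abs_lt, not_and_or, not_lt] at h2
        push Not at h1
        rcases h2 with h2 | h2 <;> linarith
    have hbd : ∀ ρ, ν univ ≤ ∑ j, ν (Q ρ j) + ∑ l, ν (Sh ρ l) := by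
      intro ρ
      exact (hν.mono (hcov ρ)).trans ((hν.union_le _ _).trans
        (add_le_add (hν.biUnion_le _ _) (hν.biUnion_le _ _)))
    have hdisj : ∀ l, ∀ ρ ρ' : Fin k, ρ ≠ ρ' → Disjoint (Sh ρ l) (Sh ρ' l) := by
      have : ∀ l, ∀ ρ ρ' : Fin k, ρ < ρ' → Disjoint (Sh ρ l) (Sh ρ' l) := by
        intro l ρ ρ' h
        rw [Set.disjoint_left]
        intro x hx hx'
        simp only [hSh, mem_setOf_eq, abs_lt, hR] at hx hx'
        have : ((ρ : ℕ) : ℝ) + 1 ≤ (ρ' : ℕ) := by exact_mod_cast h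
        nlinarith [hx.1, hx'.2, hx.2, hx'.1]
      intro l ρ ρ' h
      rcases lt_or_gt_of_ne h with h | h
      · exact this l _ _ h
      · exact (this l _ _ h).symm
    have htot : ∑ ρ, ∑ l, ν (Sh ρ l) ≤ m * ν univ := by
      rw [Finset.sum_comm]
      calc ∑ l, ∑ ρ, ν (Sh ρ l) ≤ ∑ l : Fin m, ν univ := by
            apply Finset.sum_le_sum
            intro l _
            rw [hν.sum_disj _ _ (hdisj l)]
            exact hν.mono (subset_univ _)
        _ = _ := by simp
    obtain ⟨ρ, hρ⟩ : ∃ ρ : Fin k, ∑ l, ν (Sh ρ l) ≤ η * ν univ := by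
      by_contra hcon
      push Not at hcon
      have : ∑ ρ : Fin k, η * ν univ < ∑ ρ : Fin k, ∑ l, ν (Sh ρ l) :=
        Finset.sum_lt_sum_of_nonempty ⟨⟨0, by simp [k]⟩, Finset.mem_univ _⟩ (fun ρ _ => hcon ρ)
      simp only [Finset.sum_const, Finset.card_univ, Fintype.card_fin, nsmul_eq_mul] at this
      have := mul_le_mul_of_nonneg_right hk (hν.nonneg univ)
      linarith
    exact ⟨ρ, by linarith [hbd ρ]⟩

def treeA {m k : ℕ} (T : X → X) (ν : Set X → ℝ) (Q : Fin k → Fin m → Set X)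
    (P : (Set X → ℝ) → Fin k) : List (Fin m) → Set X
  | [] => univ
  | j :: w => treeA T ν Q P w ∩ T^[w.length] ⁻¹'
      Q (P fun B => ν (treeA T ν Q P w ∩ T^[w.length] ⁻¹' B)) j

def treeI {m : ℕ} (μ : List (Fin m) → ℝ) : List (Fin m) → ℝ × ℝ
  | [] => (0, 2)
  | j :: w => ((treeI μ w).1 + (treeI μ w).2 *
        ∑ i ∈ Finset.univ.filter (fun i : Fin m => (i : ℕ) < j),
          μ (i :: w) / ∑ i', μ (i' :: w),
      (treeI μ w).2 * (μ (j :: w) / ∑ i', μ (i' :: w)))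

lemma exists_slot {m : ℕ} (p : Fin m → ℝ) (hs : ∑ i, p i = 1) {u : ℝ} (h0 : 0 < u) (h1 : u ≤ 1) :
    ∃ j : Fin m, ∑ i ∈ Finset.univ.filter (fun i : Fin m => (i : ℕ) < j), p i < u ∧
      u ≤ ∑ i ∈ Finset.univ.filter (fun i : Fin m => (i : ℕ) < j), p i + p j := by
  classical
  set F : ℕ → ℝ := fun k => ∑ i ∈ Finset.univ.filter (fun i : Fin m => (i : ℕ) < k), p i with hF
  have hF0 : F 0 = 0 := by simp [hF]
  have hFm : F m = 1 := by
    rw [← hs]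
    simp only [hF]
    congr 1
    ext i; simp
  have hex : ∃ k, u ≤ F k := ⟨m, by rw [hFm]; exact h1⟩
  have hk := Nat.find_spec hex
  have hkm : Nat.find hex ≤ m := Nat.find_min' hex (by rw [hFm]; exact h1)
  rcases hk' : Nat.find hex with _ | k
  · rw [hk', hF0] at hk; linarith
  · rw [hk'] at hk hkm
    refine ⟨⟨k, hkm⟩, ?_, ?_⟩
    · have := Nat.find_min hex (m := k) (by omega)
      exact not_le.1 this
    · refine hk.trans_eq ?_
      simp only [hF]
      have : (Finset.univ.filter fun i : Fin m => (i : ℕ) < k + 1) =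
          insert ⟨k, hkm⟩ (Finset.univ.filter fun i : Fin m => (i : ℕ) < k) := by
        ext i
        simp only [Finset.mem_filter, Finset.mem_univ, true_and, Finset.mem_insert, Fin.ext_iff]
        omega
      rw [this, Finset.sum_insert (by simp)]
      ring

lemma exists_tree [MetricSpace X] [CompactSpace X] {T : X → X} (hT : Continuous T) {l l' : ℝ}
    (hll : l' < l) (hl : (l : EReal) < subEnt T (univ : Set X)) :
    ∃ r > 0, ∃ (m : ℕ) (A : List (Fin m) → Set X) (a b : List (Fin m) → ℝ),
      (∀ w, IsClosed (A w)) ∧ (∀ j w, A (j :: w) ⊆ A w) ∧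
      (∀ w, b w ≤ 2 * Real.exp (-(l' * w.length))) ∧ a [] = 0 ∧ b [] = 2 ∧
      (∀ w, ∀ t ∈ Ioc (a w) (a w + b w), ∃ j, t ∈ Ioc (a (j :: w)) (a (j :: w) + b (j :: w))) ∧
      (∀ w, 0 < b w → (A w).Nonempty) ∧
      (∀ n w w', w.length = n → w'.length = n → ∀ x ∈ A w, ∀ y ∈ A w',
        (∀ i < n, dist (T^[i] x) (T^[i] y) < r) → w = w') := by
  classical
  obtain ⟨ε, hε, ν, hν0, hν1, hνadd, hνsmall⟩ := exists_fam hT hl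
  have hν : FA ν := ⟨hν0, hνadd⟩
  have hexp : Real.exp (l' - l) < 1 := Real.exp_lt_one_iff.2 (by linarith)
  obtain ⟨r, hr, k, m, Q, hQc, hQd, hQs, hQν⟩ :=
    exists_partition (X := X) hε (show (0 : ℝ) < 1 - Real.exp (l' - l) by linarith)
  have hk : Nonempty (Fin k) := ⟨(hQν ν hν).choose⟩
  choose! P hP using hQν
  set A := treeA T ν Q P with hA
  set μ : List (Fin m) → ℝ := fun w => ν (A w) with hμ
  have hsub : ∀ j w, A (j :: w) ⊆ A w := fun j w => inter_subset_left
  have hq : ∀ w, Real.exp (l' - l) * μ w ≤ ∑ i', μ (i' :: w) := by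
    intro w
    have hfa : FA fun B => ν (A w ∩ T^[w.length] ⁻¹' B) := by
      refine ⟨fun B => hν0 _, fun B C hBC => ?_⟩
      rw [preimage_union, inter_union_distrib_left, hνadd]
      exact (hBC.preimage _).mono inter_subset_right inter_subset_right
    have := hP _ hfa
    simp only [sub_sub_cancel, preimage_univ, inter_univ] at this
    exact this
  have hsmall : ∀ w, ∀ x ∈ A w, ∀ y ∈ A w, BowClose T w.length ε x y := by
    intro w
    induction w with
    | nil => intro x _ y _ i hi; simp at hi
    | cons j w ih =>
      intro x hx y hy i hi
      rcases Nat.lt_succ_iff_lt_or_eq.1 hi with h | h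
      · exact ih x hx.1 y hy.1 i h
      · rw [h]; exact hQd _ _ _ hx.2 _ hy.2
  set I := treeI μ with hI
  have hb0 : ∀ w, 0 ≤ (I w).2 := by
    intro w
    induction w with
    | nil => simp [hI, treeI]
    | cons j w ih =>
      simp only [hI, treeI]
      exact mul_nonneg ih (div_nonneg (hν0 _) (Finset.sum_nonneg fun i _ => hν0 _))
  have hbμ : ∀ w, (I w).2 ≤ 2 * μ w * Real.exp ((l - l') * w.length) := by
    intro w
    induction w with
    | nil => simp [hI, treeI, hμ, hA, treeA, hν1]
    | cons j w ih =>
      have e1 : (I (j :: w)).2 = (I w).2 * (μ (j :: w) / ∑ i', μ (i' :: w)) := rfl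
      rw [e1]
      set s := ∑ i', μ (i' :: w) with hs
      have hs0 : 0 ≤ s := Finset.sum_nonneg fun i _ => hν0 _
      have hj0 : 0 ≤ μ (j :: w) := hν0 _
      rcases hs0.eq_or_lt with h0 | hspos
      · rw [← h0, div_zero, mul_zero]
        positivity
      · rw [← mul_div_assoc, div_le_iff₀ hspos]
        have h2 := hq w
        have h3 : Real.exp ((l - l') * ((j :: w).length : ℕ)) =
            Real.exp ((l - l') * w.length) * Real.exp (l - l') := by
          rw [← Real.exp_add]; congr 1; simp; ring
        rw [h3]
        have h4 : Real.exp (l - l') * Real.exp (l' - l) = 1 := by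
          rw [← Real.exp_add]; simp
        have h5 : μ w ≤ Real.exp (l - l') * s := by
          have := mul_le_mul_of_nonneg_left h2 (Real.exp_pos (l - l')).le
          rw [← mul_assoc, h4, one_mul] at this
          exact this
        calc (I w).2 * μ (j :: w) ≤ (2 * μ w * Real.exp ((l - l') * w.length)) * μ (j :: w) :=
              mul_le_mul_of_nonneg_right ih hj0
          _ = μ w * (2 * Real.exp ((l - l') * w.length) * μ (j :: w)) := by ring
          _ ≤ (Real.exp (l - l') * s) * (2 * Real.exp ((l - l') * w.length) * μ (j :: w)) :=
              mul_le_mul_of_nonneg_right h5 (by positivity)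
          _ = _ := by ring
  have hμpos : ∀ w, 0 < (I w).2 → 0 < μ w := by
    intro w hw
    by_contra h
    have h0 : μ w = 0 := le_antisymm (not_lt.1 h) (hν0 _)
    have := hbμ w
    rw [h0] at this
    simp at this
    linarith
  refine ⟨r, hr, m, A, fun w => (I w).1, fun w => (I w).2, ?_, hsub, ?_, rfl, rfl, ?_, ?_, ?_⟩
  · intro w
    induction w with
    | nil => exact isClosed_univ
    | cons j w ih => exact ih.inter ((hQc _ _).preimage (hT.iterate _))
  · intro w
    refine (hbμ w).trans ?_
    have h1 : μ w ≤ Real.exp (-(l * w.length)) := hνsmall _ _ (hsmall w)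
    calc 2 * μ w * Real.exp ((l - l') * w.length)
        ≤ 2 * Real.exp (-(l * w.length)) * Real.exp ((l - l') * w.length) := by gcongr
      _ = 2 * Real.exp (-(l' * w.length)) := by
        rw [mul_assoc, ← Real.exp_add]; congr 2; ring
  · intro w t ht
    have hw : 0 < (I w).2 := by have := ht.1.trans_le ht.2; simp only at this; linarith
    have hs : 0 < ∑ i', μ (i' :: w) :=
      lt_of_lt_of_le (mul_pos (Real.exp_pos _) (hμpos w hw)) (hq w)
    obtain ⟨j, hj1, hj2⟩ := exists_slot (fun j => μ (j :: w) / ∑ i', μ (i' :: w))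
      (by rw [← Finset.sum_div]; exact div_self hs.ne')
      (u := (t - (I w).1) / (I w).2) (div_pos (by linarith [ht.1]) hw)
      (by rw [div_le_one hw]; linarith [ht.2])
    rw [lt_div_iff₀ hw] at hj1
    rw [div_le_iff₀ hw] at hj2
    refine ⟨j, ?_, ?_⟩
    · simp only [hI, treeI]; simp only [hI] at hj1; linarith
    · simp only [hI, treeI]; simp only [hI] at hj2; linarith
  · intro w hw
    by_contra h
    rw [not_nonempty_iff_eq_empty] at h
    have := hμpos w hw
    simp only [hμ, h, hν.empty, lt_irrefl] at this
  · intro n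
    induction n with
    | zero =>
      intro w w' hw hw' _ _ _ _ _
      rw [List.length_eq_zero_iff] at hw hw'
      rw [hw, hw']
    | succ n ih =>
      rintro (_ | ⟨j, w⟩) (_ | ⟨j', w'⟩) hw hw' x hx y hy hxy
      · rfl
      · simp at hw
      · simp at hw'
      · simp only [List.length_cons, add_left_inj] at hw hw'
        obtain rfl := ih w w' hw hw' x hx.1 y hy.1 (fun i hi => hxy i (by omega))
        congr 1
        exact hQs _ _ _ _ hx.2 _ hy.2 (hxy _ (by omega))

def CovExp (β : ℝ) (D : Set ℝ) : Prop :=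
  ∀ n : ℕ, ∃ F : Finset ℝ, (F.card : ℝ) ≤ 2 * Real.exp (β * (n * Real.log 2)) ∧
    ∀ d ∈ D, ∃ f ∈ F, f ≤ d ∧ d ≤ f + Real.exp (-(n * Real.log 2))

lemma CovExp.neg {β : ℝ} {D : Set ℝ} (h : CovExp β D) : CovExp β {x | -x ∈ D} := by
  classical
  intro n
  obtain ⟨F, hF, hc⟩ := h n
  refine ⟨F.image fun f => -f - Real.exp (-(n * Real.log 2)), ?_, ?_⟩
  · exact le_trans (by exact_mod_cast Finset.card_image_le) hF
  · intro d hd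
    obtain ⟨f, hf, h1, h2⟩ := hc _ hd
    exact ⟨_, Finset.mem_image_of_mem _ hf, by linarith, by linarith⟩

lemma volume_add_le {β : ℝ} {D J : Set ℝ} (hβ : 0 ≤ β) (hD : CovExp β D) {a x : ℝ} (hx : 0 ≤ x)
    (hJ : J ⊆ Icc a (a + 2 * Real.exp (-x))) :
    volume {t | ∃ u ∈ J, ∃ d ∈ D, t = u + d} ≤ ENNReal.ofReal (8 * Real.exp (-((1 - β) * x))) := by
  classical
  have hlog : 0 < Real.log 2 := Real.log_pos (by norm_num)
  set n := ⌊x / Real.log 2⌋₊ with hn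
  have h1 : n * Real.log 2 ≤ x := by
    rw [← le_div_iff₀ hlog]; exact Nat.floor_le (by positivity)
  have h2 : x ≤ n * Real.log 2 + Real.log 2 := by
    have := (Nat.lt_floor_add_one (x / Real.log 2)).le
    rw [div_le_iff₀ hlog] at this
    linarith
  obtain ⟨F, hF, hc⟩ := hD n
  have h3 : Real.exp (-(n * Real.log 2)) ≤ 2 * Real.exp (-x) := by
    calc Real.exp (-(n * Real.log 2)) ≤ Real.exp (Real.log 2 + -x) :=
          Real.exp_le_exp.2 (by linarith)
      _ = _ := by rw [Real.exp_add, Real.exp_log (by norm_num)]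
  have hsub : {t | ∃ u ∈ J, ∃ d ∈ D, t = u + d} ⊆
      ⋃ f ∈ F, Icc (a + f) (a + f + 4 * Real.exp (-x)) := by
    rintro t ⟨u, hu, d, hd, rfl⟩
    obtain ⟨f, hf, hf1, hf2⟩ := hc d hd
    have := hJ hu
    simp only [mem_iUnion]
    refine ⟨f, hf, ?_, ?_⟩
    · linarith [this.1]
    · linarith [this.2]
  calc volume {t | ∃ u ∈ J, ∃ d ∈ D, t = u + d}
      ≤ volume (⋃ f ∈ F, Icc (a + f) (a + f + 4 * Real.exp (-x))) := measure_mono hsub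
    _ ≤ ∑ f ∈ F, volume (Icc (a + f) (a + f + 4 * Real.exp (-x))) := measure_biUnion_finset_le _ _
    _ = F.card * ENNReal.ofReal (4 * Real.exp (-x)) := by
      simp [Real.volume_Icc]
    _ = ENNReal.ofReal (F.card * (4 * Real.exp (-x))) := by
      rw [ENNReal.ofReal_mul (p := (F.card : ℝ)) (by positivity), ENNReal.ofReal_natCast]
    _ ≤ _ := by
      apply ENNReal.ofReal_le_ofReal
      calc F.card * (4 * Real.exp (-x)) ≤ (2 * Real.exp (β * x)) * (4 * Real.exp (-x)) := by
            apply mul_le_mul_of_nonneg_right _ (by positivity)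
            refine hF.trans ?_
            gcongr
        _ = 8 * (Real.exp (β * x) * Real.exp (-x)) := by ring
        _ = _ := by rw [← Real.exp_add]; congr 2; ring

lemma covExp_digits (S : ℕ → Prop) [DecidablePred S] {β : ℝ}
    (hS : ∀ n : ℕ, (((Finset.range n).filter S).card : ℝ) ≤ β * n + 1) :
    CovExp β {x | ∃ d : ℕ → Fin 2, (∀ i, ¬ S i → d i = 0) ∧ Real.ofDigits d = x} := by
  classical
  intro n
  refine ⟨((Finset.range n).filter S).powerset.image
    fun A => ∑ i ∈ A, ((2 : ℝ) ^ (i + 1))⁻¹, ?_, ?_⟩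
  · have h1 : ((((Finset.range n).filter S).powerset.image
        fun A => ∑ i ∈ A, ((2 : ℝ) ^ (i + 1))⁻¹).card : ℝ) ≤
        (2 : ℝ) ^ ((Finset.range n).filter S).card := by
      have := Finset.card_image_le (s := ((Finset.range n).filter S).powerset)
        (f := fun A => ∑ i ∈ A, ((2 : ℝ) ^ (i + 1))⁻¹)
      rw [Finset.card_powerset] at this
      exact_mod_cast this
    refine h1.trans ?_
    have hlog : 0 < Real.log 2 := Real.log_pos (by norm_num)
    have h2 : (2 : ℝ) ^ ((Finset.range n).filter S).card =
        Real.exp (((Finset.range n).filter S).card * Real.log 2) := by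
      rw [mul_comm, ← Real.rpow_def_of_pos (by norm_num), Real.rpow_natCast]
    rw [h2]
    calc Real.exp (((Finset.range n).filter S).card * Real.log 2)
        ≤ Real.exp (Real.log 2 + β * (n * Real.log 2)) := by
          apply Real.exp_le_exp.2
          nlinarith [hS n]
      _ = _ := by rw [Real.exp_add, Real.exp_log (by norm_num)]
  · rintro x ⟨d, hd, rfl⟩
    refine ⟨∑ i ∈ Finset.range n, Real.ofDigitsTerm d i, ?_, ?_⟩
    · rw [Finset.mem_image]
      refine ⟨(Finset.range n).filter fun i => d i ≠ 0, ?_, ?_⟩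
      · rw [Finset.mem_powerset]
        intro i hi
        rw [Finset.mem_filter] at hi ⊢
        exact ⟨hi.1, by by_contra h; exact hi.2 (hd i h)⟩
      · rw [Finset.sum_filter]
        apply Finset.sum_congr rfl
        intro i _
        simp only [Real.ofDigitsTerm]
        have : d i = 0 ∨ d i = 1 := by
          have := (d i).2
          rcases h : d i with ⟨v, hv⟩
          interval_cases v <;> simp
        rcases this with h | h <;> simp [h]
    · rw [Real.ofDigits_eq_sum_add_ofDigits d n]
      have h0 := Real.ofDigits_nonneg (fun i => d (i + n))
      have h1 := Real.ofDigits_le_one (fun i => d (i + n))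
      have h2 : Real.exp (-(n * Real.log 2)) = (((2 : ℕ) : ℝ) ^ n)⁻¹ := by
        rw [Real.exp_neg, mul_comm, ← Real.rpow_def_of_pos (by norm_num), Real.rpow_natCast]
        norm_num
      rw [h2]
      have h3 : 0 < (((2 : ℕ) : ℝ) ^ n)⁻¹ := by positivity
      constructor <;> nlinarith

lemma exists_CD {s : ℝ} (h0 : 0 < s) (h1 : s < 1) : ∃ C D : Set ℝ, C ⊆ Icc 0 1 ∧ C.Nonempty ∧
    (∀ t ∈ Icc (0 : ℝ) 1, ∃ c ∈ C, ∃ d ∈ D, c + d = t) ∧ CovExp s C ∧ CovExp (1 - s) D := by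
  classical
  set S : ℕ → Prop := fun i => ⌊s * (i + 1)⌋₊ ≠ ⌊s * i⌋₊ with hS
  have hcnt : ∀ n : ℕ, ((Finset.range n).filter S).card = ⌊s * n⌋₊ := by
    intro n
    induction n with
    | zero => simp
    | succ n ih =>
      rw [Finset.range_add_one, Finset.filter_insert]
      have hle : ⌊s * n⌋₊ ≤ ⌊s * (n + 1)⌋₊ := Nat.floor_mono (by nlinarith)
      have hle2 : ⌊s * (n + 1)⌋₊ ≤ ⌊s * n⌋₊ + 1 := by
        rw [← Nat.floor_add_one (by positivity)]
        exact Nat.floor_mono (by nlinarith)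
      push_cast
      by_cases h : S n
      · rw [if_pos h, Finset.card_insert_of_notMem (by simp), ih]
        simp only [hS] at h
        omega
      · rw [if_neg h, ih]
        simp only [hS, ne_eq, not_not] at h
        exact h.symm
  refine ⟨{x | ∃ d : ℕ → Fin 2, (∀ i, ¬ S i → d i = 0) ∧ Real.ofDigits d = x},
    {x | ∃ d : ℕ → Fin 2, (∀ i, ¬ ¬ S i → d i = 0) ∧ Real.ofDigits d = x}, ?_, ?_, ?_,
    covExp_digits S ?_, covExp_digits (fun i => ¬ S i) ?_⟩
  · rintro x ⟨d, _, rfl⟩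
    exact ⟨Real.ofDigits_nonneg _, Real.ofDigits_le_one _⟩
  · exact ⟨_, fun _ => 0, fun _ _ => rfl, rfl⟩
  · intro t ht
    obtain ⟨d, -, rfl⟩ := Real.ofDigits_SurjOn one_lt_two ht
    refine ⟨_, ⟨fun i => if S i then d i else 0, fun i hi => by simp [hi], rfl⟩,
      _, ⟨fun i => if S i then 0 else d i, fun i hi => by simp [not_not.1 hi], rfl⟩, ?_⟩
    simp only [Real.ofDigits]
    rw [← Summable.tsum_add Real.summable_ofDigitsTerm Real.summable_ofDigitsTerm]
    congr 1
    ext i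
    by_cases h : S i <;> simp [Real.ofDigitsTerm, h]
  · intro n
    rw [hcnt]
    linarith [Nat.floor_le (show 0 ≤ s * n by positivity)]
  · intro n
    have h2 := Finset.card_filter_add_card_filter_not (s := Finset.range n) S
    rw [hcnt, Finset.card_range] at h2
    have h3 : (⌊s * n⌋₊ : ℝ) + ((Finset.range n).filter fun i => ¬ S i).card = n := by
      exact_mod_cast h2
    have := Nat.lt_floor_add_one (s * n)
    linarith

structure IsTree [MetricSpace X] (T : X → X) (l' r : ℝ) {m : ℕ} (A : List (Fin m) → Set X)
    (a b : List (Fin m) → ℝ) : Prop where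
  closed : ∀ w, IsClosed (A w)
  sub : ∀ j w, A (j :: w) ⊆ A w
  len : ∀ w, b w ≤ 2 * Real.exp (-(l' * w.length))
  a0 : a [] = 0
  b0 : b [] = 2
  slot : ∀ w, ∀ t ∈ Ioc (a w) (a w + b w), ∃ j, t ∈ Ioc (a (j :: w)) (a (j :: w) + b (j :: w))
  ne : ∀ w, 0 < b w → (A w).Nonempty
  uniq : ∀ n w w', w.length = n → w'.length = n → ∀ x ∈ A w, ∀ y ∈ A w',
        (∀ i < n, dist (T^[i] x) (T^[i] y) < r) → w = w'

def Kt {m : ℕ} (A : List (Fin m) → Set X) (a b : List (Fin m) → ℝ) (C : Set ℝ) (t : ℝ) : Set X :=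
  ⋂ n : ℕ, ⋃ w ∈ {w : List (Fin m) | w.length = n ∧ ∃ c ∈ C, c + t ∈ Ioc (a w) (a w + b w)}, A w

lemma mem_Kt {m : ℕ} {A : List (Fin m) → Set X} {a b : List (Fin m) → ℝ} {C : Set ℝ} {t : ℝ}
    {x : X} : x ∈ Kt A a b C t ↔ ∀ n : ℕ, ∃ w : List (Fin m), w.length = n ∧
      (∃ c ∈ C, c + t ∈ Ioc (a w) (a w + b w)) ∧ x ∈ A w := by
  simp only [Kt, mem_iInter, mem_iUnion, mem_setOf_eq, exists_prop, and_assoc]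

lemma isClosed_Kt [MetricSpace X] {T : X → X} {l' r : ℝ} {m : ℕ} {A : List (Fin m) → Set X}
    {a b : List (Fin m) → ℝ} (h : IsTree T l' r A a b) (C : Set ℝ) (t : ℝ) :
    IsClosed (Kt A a b C t) := by
  apply isClosed_iInter
  intro n
  apply Set.Finite.isClosed_biUnion
  · exact (List.finite_length_eq (Fin m) n).subset fun w hw => hw.1
  · exact fun w _ => h.closed w

lemma exists_path [MetricSpace X] [CompactSpace X] {T : X → X} {l' r : ℝ} {m : ℕ}
    {A : List (Fin m) → Set X}
    {a b : List (Fin m) → ℝ} (h : IsTree T l' r A a b) {t : ℝ} (ht : t ∈ Ioc (0 : ℝ) 2) :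
    ∃ x, ∀ n : ℕ, ∃ w : List (Fin m), w.length = n ∧ t ∈ Ioc (a w) (a w + b w) ∧ x ∈ A w := by
  classical
  let nx : {w : List (Fin m) // t ∈ Ioc (a w) (a w + b w)} →
      {w : List (Fin m) // t ∈ Ioc (a w) (a w + b w)} := fun w =>
    ⟨(h.slot w.1 t w.2).choose :: w.1, (h.slot w.1 t w.2).choose_spec⟩
  let p : ℕ → {w : List (Fin m) // t ∈ Ioc (a w) (a w + b w)} := fun n =>
    Nat.rec ⟨[], by rw [h.a0, h.b0]; simpa using ht⟩ (fun _ w => nx w) n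
  have hp : ∀ n, (p n).1.length = n := by
    intro n
    induction n with
    | zero => rfl
    | succ n ih =>
      change ((h.slot (p n).1 t (p n).2).choose :: (p n).1).length = n + 1
      simp [ih]
  have hpA : ∀ n, A (p (n + 1)).1 ⊆ A (p n).1 := fun n => h.sub _ _
  obtain ⟨x, hx⟩ := IsCompact.nonempty_iInter_of_sequence_nonempty_isCompact_isClosed
    (fun n => A (p n).1) hpA
    (fun n => h.ne _ (by have := (p n).2.1.trans_le (p n).2.2; linarith))
    (h.closed _).isCompact (fun n => h.closed _)
  exact ⟨x, fun n => ⟨(p n).1, hp n, (p n).2, mem_iInter.1 hx n⟩⟩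

lemma Kt_nonempty [MetricSpace X] [CompactSpace X] {T : X → X} {l' r : ℝ} {m : ℕ}
    {A : List (Fin m) → Set X}
    {a b : List (Fin m) → ℝ} (h : IsTree T l' r A a b) {C : Set ℝ} (hC : C ⊆ Icc 0 1)
    (hC0 : C.Nonempty) {t : ℝ} (ht : t ∈ Ioc (0 : ℝ) 1) : (Kt A a b C t).Nonempty := by
  obtain ⟨c, hc⟩ := hC0
  obtain ⟨x, hx⟩ := exists_path h (t := c + t)
    ⟨by linarith [(hC hc).1, ht.1], by linarith [(hC hc).2, ht.2]⟩
  refine ⟨x, mem_Kt.2 fun n => ?_⟩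
  obtain ⟨w, hw, hw1, hw2⟩ := hx n
  exact ⟨w, hw, ⟨c, hc, hw1⟩, hw2⟩

lemma exists_fine_cover [MetricSpace X] [CompactSpace X] {r : ℝ} (hr : 0 < r) :
    ∃ U : Finset (Set X), (∀ A ∈ U, IsOpen A) ∧ ⋃₀ (↑U : Set (Set X)) = univ ∧
      ∀ A ∈ U, ∀ x ∈ A, ∀ y ∈ A, dist x y < r := by
  classical
  obtain ⟨S, hS⟩ := exists_fin_span (X := X) continuous_id 1 (show (0 : ℝ) < r / 4 by positivity)
  refine ⟨S.image fun y => ball y (r / 2), ?_, ?_, ?_⟩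
  · intro A hA
    obtain ⟨y, _, rfl⟩ := Finset.mem_image.1 hA
    exact isOpen_ball
  · rw [eq_univ_iff_forall]
    intro x
    obtain ⟨y, hy, h⟩ := hS x
    refine ⟨ball y (r / 2), by simpa using ⟨y, hy, rfl⟩, ?_⟩
    have := h 0 one_pos
    simp only [Function.iterate_zero, id] at this
    exact mem_ball.2 (by linarith)
  · intro A hA x hx z hz
    obtain ⟨y, _, rfl⟩ := Finset.mem_image.1 hA
    rw [mem_ball] at hx hz
    linarith [dist_triangle_right x z y]

lemma Kt_lower [MetricSpace X] [CompactSpace X] {T : X → X} {l' r s : ℝ} {m : ℕ}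
    {A : List (Fin m) → Set X} {a b : List (Fin m) → ℝ} (h : IsTree T l' r A a b)
    (hl' : 0 < l') (hs0 : 0 < s) (hs1 : s < 1) {C D : Set ℝ} (hC : C ⊆ Icc 0 1)
    (hCD : ∀ t ∈ Icc (0 : ℝ) 1, ∃ c ∈ C, ∃ d ∈ D, c + d = t) (hD : CovExp (1 - s) D)
    {U : Finset (Set X)} (hU : ∀ A ∈ U, ∀ x ∈ A, ∀ y ∈ A, dist x y < r)
    {t : ℝ} (ht : t ∈ Ioc (0 : ℝ) 1) : ((s * l' : ℝ) : EReal) ≤ hBU T U (Kt A a b C t) := by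
  classical
  have hsl : 0 < s * l' := by positivity
  have main : ∀ lam : ℝ, 0 < lam → lam < s * l' → mTUlim T U (Kt A a b C t) lam ≠ 0 := by
    intro lam hlam hlam2 h0
    have h00 : mTU T U (Kt A a b C t) lam 0 = 0 := by
      simp only [mTUlim, ENNReal.iSup_eq_zero] at h0; exact h0 0
    have hlt : mTU T U (Kt A a b C t) lam 0 < 8⁻¹ := by rw [h00]; simp
    obtain ⟨F, hF⟩ := iInf_lt_iff.1 hlt
    obtain ⟨⟨hFc, hFK, -⟩, hF2⟩ := iInf_lt_iff.1 hF
    set J : Set X → Set ℝ := fun E => {t' | (∃ c ∈ C, t' = c + t) ∧ ∃ x ∈ E, ∀ n : ℕ,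
      ∃ w : List (Fin m), w.length = n ∧ t' ∈ Ioc (a w) (a w + b w) ∧ x ∈ A w} with hJ
    have hJn : ∀ E, ∀ n : ℕ, (n : ℕ∞) ≤ nTU T U E →
        volume {v | ∃ u ∈ J E, ∃ d ∈ D, v = u + d} ≤
          ENNReal.ofReal (8 * Real.exp (-(s * l' * n))) := by
      intro E n hn
      have hex : ∃ a0, J E ⊆ Icc a0 (a0 + 2 * Real.exp (-(l' * n))) := by
        rcases (J E).eq_empty_or_nonempty with he | ⟨t1, -, x1, hx1, hw1⟩
        · exact ⟨0, by simp [he]⟩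
        · obtain ⟨w1, hw1l, hw1t, hw1A⟩ := hw1 n
          refine ⟨a w1, ?_⟩
          rintro t2 ⟨-, x2, hx2, hw2⟩
          obtain ⟨w2, hw2l, hw2t, hw2A⟩ := hw2 n
          have : w1 = w2 := by
            refine h.uniq n w1 w2 hw1l hw2l x1 hw1A x2 hw2A fun i hi => ?_
            obtain ⟨B, hB, hEB⟩ := refines_of_le_nTU hn i hi
            exact hU B hB _ (hEB (mem_image_of_mem _ hx1)) _ (hEB (mem_image_of_mem _ hx2))
          subst this
          have := h.len w1
          rw [hw1l] at this
          exact ⟨hw2t.1.le, hw2t.2.trans (by linarith)⟩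
      obtain ⟨a0, ha0⟩ := hex
      have := volume_add_le (by linarith) hD (by positivity : 0 ≤ l' * n) ha0
      refine this.trans_eq ?_
      congr 3
      ring
    have hJE : ∀ E, volume {v | ∃ u ∈ J E, ∃ d ∈ D, v = u + d} ≤
        8 * expWeight lam (nTU T U E) := by
      intro E
      have hJn' := hJn E
      generalize nTU T U E = N at hJn'
      induction N using ENat.recTopCoe with
      | top =>
        rw [expWeight_top_pos hlam, mul_zero]
        have hlim : Tendsto (fun n : ℕ => ENNReal.ofReal (8 * Real.exp (-(s * l' * n)))) atTop
            (𝓝 0) := by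
          rw [← ENNReal.ofReal_zero]
          apply ENNReal.tendsto_ofReal
          rw [← mul_zero (8 : ℝ)]
          apply Tendsto.const_mul
          apply Real.tendsto_exp_neg_atTop_nhds_zero.comp
          exact Tendsto.const_mul_atTop hsl tendsto_natCast_atTop_atTop
        exact ge_of_tendsto' hlim (fun n => hJn' n le_top)
      | coe n =>
        refine (hJn' n le_rfl).trans ?_
        rw [expWeight_coe, ENNReal.ofReal_mul (by norm_num)]
        have : (0 : ℝ) ≤ n := by positivity
        norm_num
        gcongr
    have hcov : Icc t (t + 1) ⊆ ⋃ E ∈ F, {v | ∃ u ∈ J E, ∃ d ∈ D, v = u + d} := by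
      intro v hv
      obtain ⟨c, hc, d, hd, hcd⟩ := hCD (v - t) ⟨by linarith [hv.1], by linarith [hv.2]⟩
      obtain ⟨x, hx⟩ := exists_path h (t := c + t)
        ⟨by linarith [(hC hc).1, ht.1], by linarith [(hC hc).2, ht.2]⟩
      have hxK : x ∈ Kt A a b C t := mem_Kt.2 fun n => by
        obtain ⟨w, hw, hw1, hw2⟩ := hx n
        exact ⟨w, hw, ⟨c, hc, hw1⟩, hw2⟩
      obtain ⟨E, hE, hxE⟩ := hFK hxK
      simp only [mem_iUnion]
      exact ⟨E, hE, c + t, ⟨⟨c, hc, rfl⟩, x, hxE, hx⟩, d, hd, by linarith⟩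
    have h1 : (1 : ℝ≥0∞) ≤ 8 * ∑' E : F, expWeight lam (nTU T U (E : Set X)) := by
      calc (1 : ℝ≥0∞) = volume (Icc t (t + 1)) := by rw [Real.volume_Icc]; simp
        _ ≤ volume (⋃ E ∈ F, {v | ∃ u ∈ J E, ∃ d ∈ D, v = u + d}) := measure_mono hcov
        _ ≤ ∑' E : F, volume {v | ∃ u ∈ J E, ∃ d ∈ D, v = u + d} :=
          measure_biUnion_le _ hFc _
        _ ≤ ∑' E : F, 8 * expWeight lam (nTU T U (E : Set X)) :=
          ENNReal.tsum_le_tsum fun E => hJE E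
        _ = _ := ENNReal.tsum_mul_left
    have h2 : 8 * ∑' E : F, expWeight lam (nTU T U (E : Set X)) < 8 * 8⁻¹ :=
      ENNReal.mul_lt_mul_right (by norm_num) (by norm_num) hF2
    rw [ENNReal.mul_inv_cancel (by norm_num) (by norm_num)] at h2
    exact absurd h1 (not_le.2 h2)
  apply le_iInf₂
  intro lam hlam
  by_contra hcon
  have hcon : lam < s * l' := by
    push Not at hcon
    exact_mod_cast hcon
  refine main (max lam (s * l' / 2)) (lt_max_of_lt_right (by positivity))
    (max_lt hcon (by linarith)) ?_
  exact le_antisymm ((mTUlim_mono subset_rfl (le_max_left _ _)).trans hlam.le) zero_le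

lemma markov_count {ι : Type*} (S : Finset ι) (G : ι → Set ℝ) (f : ℝ → ℝ≥0∞) {v c : ℝ≥0∞}
    (hf : ∀ t, c < f t → ∃ S' : Finset ι, S' ⊆ S ∧ (∀ y ∈ S', t ∈ G y) ∧ f t ≤ S'.card)
    (hv : ∀ y ∈ S, volume (G y) ≤ v) (hc : c ≠ 0) (hc' : c ≠ ⊤) :
    volume {t | c < f t} ≤ S.card * v / c := by
  classical
  set g : ι → Set ℝ := fun y => toMeasurable volume (G y) with hg
  set φ : ℝ → ℝ≥0∞ := fun t => ∑ y ∈ S, (g y).indicator 1 t with hφ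
  have hφm : Measurable φ := Finset.measurable_sum _ fun y _ =>
    measurable_one.indicator (measurableSet_toMeasurable _ _)
  have hint : ∫⁻ t, φ t ≤ S.card * v := by
    simp only [hφ]
    rw [lintegral_finsetSum _ fun y _ =>
      measurable_one.indicator (measurableSet_toMeasurable _ _)]
    calc ∑ y ∈ S, ∫⁻ t, (g y).indicator 1 t ≤ ∑ y ∈ S, v := by
          apply Finset.sum_le_sum
          intro y hy
          rw [lintegral_indicator_one (measurableSet_toMeasurable _ _), measure_toMeasurable]
          exact hv y hy
      _ = _ := by simp
  have hsub : {t | c < f t} ⊆ {t | c ≤ φ t} := by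
    intro t ht
    obtain ⟨S', hS', hS'G, hcard⟩ := hf t ht
    refine ht.le.trans (hcard.trans ?_)
    calc (S'.card : ℝ≥0∞) = ∑ y ∈ S', (g y).indicator (1 : ℝ → ℝ≥0∞) t := by
          rw [Finset.sum_congr rfl (g := fun _ => (1 : ℝ≥0∞))]
          · simp
          · intro y hy
            rw [indicator_of_mem (subset_toMeasurable _ _ (hS'G y hy))]
            rfl
      _ ≤ φ t := Finset.sum_le_sum_of_subset hS'
  rw [ENNReal.le_div_iff_mul_le (Or.inl hc) (Or.inl hc'), mul_comm]
  calc c * volume {t | c < f t} ≤ c * volume {t | c ≤ φ t} := by gcongr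
    _ ≤ ∫⁻ t, φ t := mul_meas_ge_le_lintegral hφm c
    _ ≤ _ := hint

lemma Kt_upper_vol [MetricSpace X] [CompactSpace X] {T : X → X} (hT : Continuous T) {l' r s : ℝ}
    {m : ℕ} {A : List (Fin m) → Set X} {a b : List (Fin m) → ℝ} (h : IsTree T l' r A a b)
    (hl' : 0 < l') (hs0 : 0 < s) {C : Set ℝ}
    (hC : CovExp s C) {ε : ℝ} (hε : 0 < ε) (hεr : ε < r) (n : ℕ) (κ : ℝ) :
    volume {t | ENNReal.ofReal (Real.exp (κ * n)) < sepMaxCard T n ε (Kt A a b C t)} ≤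
      sepMaxCard T n (ε / 2) univ * ENNReal.ofReal (8 * Real.exp (-((1 - s) * (l' * n)))) /
        ENNReal.ofReal (Real.exp (κ * n)) := by
  classical
  obtain ⟨S, -, -, hScard, -, hSspan⟩ := exists_maxSep hT n (half_pos hε) (univ : Set X)
  rw [hScard]
  have hcell : ∀ y x x', BowClose T n (ε / 2) x y → BowClose T n (ε / 2) x' y →
      BowClose T n ε x x' := by
    intro y x x' h1 h2
    have := h1.trans h2.symm
    rwa [add_halves] at this
  refine markov_count S (fun y => {t | ∃ w : List (Fin m), w.length = n ∧
    (∃ x ∈ A w, BowClose T n (ε / 2) x y) ∧ ∃ c ∈ C, c + t ∈ Ioc (a w) (a w + b w)}) _ ?_ ?_ ?_ ?_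
  · intro t _
    refine ⟨S.filter fun y => t ∈ {t | ∃ w : List (Fin m), w.length = n ∧
      (∃ x ∈ A w, BowClose T n (ε / 2) x y) ∧ ∃ c ∈ C, c + t ∈ Ioc (a w) (a w + b w)},
      Finset.filter_subset _ _, fun y hy => (Finset.mem_filter.1 hy).2, ?_⟩
    apply iSup₂_le
    rintro E ⟨hEK, hE⟩
    norm_cast
    refine card_le_of_cells E hE _ (fun y => {x | BowClose T n (ε / 2) x y}) ?_ ?_
    · intro y _ x hx x' hx'
      exact hcell y x x' hx hx'
    · intro x hx
      obtain ⟨y, hy, hxy⟩ := hSspan x (mem_univ _)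
      obtain ⟨w, hw, hwc, hwA⟩ := mem_Kt.1 (hEK hx) n
      exact ⟨y, Finset.mem_filter.2 ⟨hy, w, hw, ⟨x, hwA, hxy⟩, hwc⟩, hxy⟩
  · intro y _
    rcases Set.eq_empty_or_nonempty {t | ∃ w : List (Fin m), w.length = n ∧
      (∃ x ∈ A w, BowClose T n (ε / 2) x y) ∧ ∃ c ∈ C, c + t ∈ Ioc (a w) (a w + b w)} with
      he | ⟨t1, w1, hw1, ⟨x1, hx1, hxy1⟩, -⟩
    · rw [he]; simp
    · have := volume_add_le hs0.le hC.neg (by positivity : 0 ≤ l' * n)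
        (J := Ioc (a w1) (a w1 + b w1)) (a := a w1) (by
          intro u hu
          have := h.len w1
          rw [hw1] at this
          exact ⟨hu.1.le, hu.2.trans (by linarith)⟩)
      refine (measure_mono ?_).trans this
      rintro t ⟨w2, hw2, ⟨x2, hx2, hxy2⟩, c, hc, hct⟩
      have hww : w1 = w2 := h.uniq n w1 w2 hw1 hw2 x1 hx1 x2 hx2
        fun i hi => (hcell y x1 x2 hxy1 hxy2 i hi).trans_lt hεr
      subst hww
      exact ⟨c + t, hct, -c, by simpa using hc, by ring⟩
  · simp [Real.exp_pos]
  · exact ENNReal.ofReal_ne_top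

lemma Kt_upper_ae [MetricSpace X] [CompactSpace X] {T : X → X} (hT : Continuous T) {l' r s H δ : ℝ}
    {m : ℕ} {A : List (Fin m) → Set X} {a b : List (Fin m) → ℝ} (h : IsTree T l' r A a b)
    (hl' : 0 < l') (hs0 : 0 < s) {C : Set ℝ} (hδ : 0 < δ)
    (hH : subEnt T (univ : Set X) ≤ (H : EReal))
    (hC : CovExp s C) {ε : ℝ} (hε : 0 < ε) (hεr : ε < r) :
    ∀ᵐ t : ℝ, ∀ᶠ n : ℕ in atTop, sepMaxCard T n ε (Kt A a b C t) ≤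
      ENNReal.ofReal (Real.exp ((H + 2 * δ - (1 - s) * l') * n)) := by
  set κ := H + 2 * δ - (1 - s) * l' with hκ
  obtain ⟨n0, hn0⟩ := eventually_atTop.1 (sepMaxCard_le_of_subEnt hH (half_pos hε) hδ)
  have hbd : ∀ n : ℕ, volume {t | ENNReal.ofReal (Real.exp (κ * ((n + n0 : ℕ) : ℝ))) <
      sepMaxCard T (n + n0) ε (Kt A a b C t)} ≤
      ENNReal.ofReal (8 * Real.exp (n * (-δ))) := by
    intro n
    refine (Kt_upper_vol hT h hl' hs0 hC hε hεr (n + n0) κ).trans ?_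
    have h1 := hn0 (n + n0) (by omega)
    have hn : (0 : ℝ) ≤ n0 := by positivity
    refine (ENNReal.div_le_div_right (mul_le_mul_left h1 _) _).trans ?_
    rw [← ENNReal.ofReal_mul (Real.exp_pos _).le, ← ENNReal.ofReal_div_of_pos (Real.exp_pos _)]
    apply ENNReal.ofReal_le_ofReal
    rw [div_le_iff₀ (Real.exp_pos _), mul_left_comm, mul_assoc, ← Real.exp_add, ← Real.exp_add]
    apply mul_le_mul_of_nonneg_left _ (by norm_num : (0 : ℝ) ≤ 8)
    apply Real.exp_le_exp.2
    push_cast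
    rw [hκ]
    nlinarith
  have hsum : ∑' n : ℕ, volume {t | ENNReal.ofReal (Real.exp (κ * ((n + n0 : ℕ) : ℝ))) <
      sepMaxCard T (n + n0) ε (Kt A a b C t)} ≠ ⊤ := by
    refine ne_top_of_le_ne_top ?_ (ENNReal.tsum_le_tsum hbd)
    apply Summable.tsum_ofReal_ne_top
    exact (Real.summable_exp_nat_mul_iff.2 (by linarith)).mul_left 8
  filter_upwards [ae_eventually_notMem hsum] with t ht
  obtain ⟨N, hN⟩ := eventually_atTop.1 ht
  filter_upwards [eventually_ge_atTop (N + n0)] with n hn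
  have := hN (n - n0) (by omega)
  rw [Nat.sub_add_cancel (by omega)] at this
  exact not_lt.1 this

lemma approx [MetricSpace X] [CompactSpace X] {T : X → X} (hT : Continuous T) {H g h : ℝ}
    (hH : subEnt T (univ : Set X) = (H : EReal)) (hg : 0 < g) (hgh : g < h) (hhH : h ≤ H) :
    ∃ K : Set X, IsCompact K ∧ subEnt T K ≤ (h : EReal) ∧ ∃ U : Finset (Set X),
      (∀ A ∈ U, IsOpen A) ∧ ⋃₀ (↑U : Set (Set X)) = univ ∧ (g : EReal) < hBU T U K := by
  have hHpos : 0 < H := by linarith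
  set s := (g + h) / (2 * H) with hs
  set τ := (h - g) / 8 with hτ
  have hs0 : 0 < s := div_pos (by linarith) (by linarith)
  have hs1 : s < 1 := by rw [hs, div_lt_one (by positivity)]; linarith
  have hsH : s * H = (g + h) / 2 := by rw [hs]; field_simp
  have hτ0 : 0 < τ := by rw [hτ]; linarith
  have hl'0 : 0 < H - τ := by rw [hτ]; linarith
  obtain ⟨r, hr, m, A, a, b, h1, h2, h3, h4, h5, h6, h7, h8⟩ :=
    exists_tree hT (l := H - τ / 2) (l' := H - τ) (by linarith)
      (by rw [hH]; exact_mod_cast (by linarith : H - τ / 2 < H))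
  have htree : IsTree T (H - τ) r A a b := ⟨h1, h2, h3, h4, h5, h6, h7, h8⟩
  obtain ⟨C, D, hC, hC0, hCD, hCe, hDe⟩ := exists_CD hs0 hs1
  obtain ⟨U, hU1, hU2, hU3⟩ := exists_fine_cover (X := X) hr
  have hae : ∀ᵐ t : ℝ, ∀ k : ℕ, ∀ᶠ n : ℕ in atTop,
      sepMaxCard T n (min (1 / ((k : ℝ) + 1)) (r / 2)) (Kt A a b C t) ≤
      ENNReal.ofReal (Real.exp ((H + 2 * τ - (1 - s) * (H - τ)) * n)) := by
    rw [ae_all_iff]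
    intro k
    exact Kt_upper_ae hT htree hl'0 hs0 hτ0 hH.le hCe (by positivity)
      ((min_le_right _ _).trans_lt (by linarith))
  obtain ⟨t, ht, htK⟩ : ∃ t ∈ Ioc (0 : ℝ) 1, ∀ k : ℕ, ∀ᶠ n : ℕ in atTop,
      sepMaxCard T n (min (1 / ((k : ℝ) + 1)) (r / 2)) (Kt A a b C t) ≤
      ENNReal.ofReal (Real.exp ((H + 2 * τ - (1 - s) * (H - τ)) * n)) := by
    by_contra hcon
    push Not at hcon
    have : volume (Ioc (0 : ℝ) 1) ≤ 0 := by
      rw [ae_iff] at hae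
      rw [← hae]
      apply measure_mono
      intro t ht
      obtain ⟨k, hk⟩ := hcon t ht
      intro hall
      obtain ⟨n, hn1, hn2⟩ := (hk.and_eventually (hall k)).exists
      exact absurd hn2 (not_le.2 hn1)
    simp at this
  refine ⟨Kt A a b C t, (isClosed_Kt htree C t).isCompact, ?_, U, hU1, hU2, ?_⟩
  · apply subEnt_le_of
    intro ε hε δ hδ
    obtain ⟨k, hk⟩ := exists_nat_one_div_lt hε
    filter_upwards [htK k] with n hn
    refine (sepMaxCard_mono subset_rfl ((min_le_left _ _).trans hk.le)).trans (hn.trans ?_)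
    apply ENNReal.ofReal_le_ofReal
    apply Real.exp_le_exp.2
    apply mul_le_mul_of_nonneg_right _ (Nat.cast_nonneg _)
    nlinarith
  · refine lt_of_lt_of_le ?_ (Kt_lower htree hl'0 hs0 hs1 hC hCD hDe hU3 ht)
    norm_cast
    nlinarith

lemma sepMaxCard_union_le [PseudoMetricSpace X] {T : X → X} {n : ℕ} {ε : ℝ} (A B : Set X) :
    sepMaxCard T n ε (A ∪ B) ≤ sepMaxCard T n ε A + sepMaxCard T n ε B := by
  classical
  apply iSup₂_le
  rintro E ⟨hEK, hE⟩
  have h1 : ((E.filter (· ∈ A)).card : ℝ≥0∞) ≤ sepMaxCard T n ε A :=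
    le_iSup₂_of_le (E.filter (· ∈ A)) ⟨fun x hx => (Finset.mem_filter.1 hx).2,
      hE.mono fun x hx => (Finset.mem_filter.1 hx).1⟩ le_rfl
  have h2 : ((E.filter (¬ · ∈ A)).card : ℝ≥0∞) ≤ sepMaxCard T n ε B :=
    le_iSup₂_of_le (E.filter (¬ · ∈ A)) ⟨fun x hx => by
      have := Finset.mem_filter.1 hx
      exact (hEK this.1).resolve_left this.2,
      hE.mono fun x hx => (Finset.mem_filter.1 hx).1⟩ le_rfl
  have h3 := Finset.card_filter_add_card_filter_not (s := E) (· ∈ A)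
  rw [← h3]
  push_cast
  exact add_le_add h1 h2

lemma sepMaxCard_biUnion_le [PseudoMetricSpace X] {ι : Type*} {T : X → X} {n : ℕ} {ε : ℝ}
    (s : Finset ι) (B : ι → Set X) :
    sepMaxCard T n ε (⋃ i ∈ s, B i) ≤ ∑ i ∈ s, sepMaxCard T n ε (B i) := by
  classical
  induction s using Finset.induction_on with
  | empty =>
    apply iSup₂_le
    rintro E ⟨hEK, -⟩
    have : E = ∅ := by
      rw [Finset.eq_empty_iff_forall_notMem]
      intro x hx
      simpa using hEK hx
    simp [this]
  | insert a s ha ih =>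
    rw [Finset.sum_insert ha, Finset.set_biUnion_insert]
    exact (sepMaxCard_union_le _ _).trans (by gcongr)

lemma sepMaxCard_le_one [PseudoMetricSpace X] {T : X → X} {n : ℕ} {ε : ℝ} {K : Set X} {y : X}
    (h : ∀ x ∈ K, BowClose T n (ε / 2) x y) : sepMaxCard T n ε K ≤ 1 := by
  apply iSup₂_le
  rintro E ⟨hEK, hE⟩
  have := card_le_of_cells E hE ({()} : Finset Unit) (fun _ => K) (by
    intro _ _ x hx x' hx'
    have := (h x hx).trans (h x' hx').symm
    rwa [add_halves] at this) (fun x hx => ⟨(), by simp, hEK hx⟩)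
  simpa using this

lemma one_le_sepMaxCard [PseudoMetricSpace X] {T : X → X} {n : ℕ} {ε : ℝ} {K : Set X}
    (h : K.Nonempty) : 1 ≤ sepMaxCard T n ε K := by
  obtain ⟨x, hx⟩ := h
  refine le_iSup₂_of_le {x} ⟨by simpa using hx, ?_⟩ (by simp)
  simp [IsSep]

lemma zero_le_subEnt [PseudoMetricSpace X] {T : X → X} {K : Set X}
    (h : K.Nonempty) : 0 ≤ subEnt T K := by
  by_contra hcon
  push Not at hcon
  obtain ⟨z, hz1, hz2⟩ := EReal.lt_iff_exists_real_btwn.1 hcon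
  have hz2 : z < 0 := by exact_mod_cast hz2
  obtain ⟨n, hn, hn0⟩ := ((sepMaxCard_le_of_subEnt hz1.le one_pos
    (show 0 < -z / 2 by linarith)).and (eventually_gt_atTop 0)).exists
  have h1 := (one_le_sepMaxCard h).trans hn
  rw [ENNReal.one_le_ofReal, Real.one_le_exp_iff] at h1
  have : (0 : ℝ) < n := by exact_mod_cast hn0
  nlinarith

lemma le_subEnt_of_hB [MetricSpace X] [CompactSpace X] {T : X → X} (hT : Continuous T)
    {K : Set X} {h : ℝ} (hK : K.Nonempty) (h0 : 0 ≤ h) (H : (h : EReal) ≤ hB T K) :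
    (h : EReal) ≤ subEnt T K := by
  by_contra hcon
  push Not at hcon
  obtain ⟨z, hz1, hz2⟩ := EReal.lt_iff_exists_real_btwn.1 hcon
  have hz0 : 0 ≤ z := by
    have := (zero_le_subEnt (T := T) hK).trans hz1.le
    exact_mod_cast this
  exact absurd (H.trans (hB_le_of_subEnt hT hz0 hz1.le)) (not_le.2 hz2)

lemma isClosed_bow [MetricSpace X] {T : X → X} (hT : Continuous T) (n : ℕ) (ε : ℝ) (y : X) :
    IsClosed {z | BowClose T n ε z y} := by
  have : {z | BowClose T n ε z y} = ⋂ i : ℕ, ⋂ (_ : i < n), {z | dist (T^[i] z) (T^[i] y) ≤ ε} := by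
    ext z; simp [BowClose]
  rw [this]
  exact isClosed_iInter fun i => isClosed_iInter fun _ =>
    isClosed_le ((hT.iterate i).dist continuous_const) continuous_const

lemma pieces [MetricSpace X] [CompactSpace X] {T : X → X} (hT : Continuous T) {H h : ℝ}
    (hH : subEnt T (univ : Set X) = (H : EReal)) (h0 : 0 < h) (hhH : h ≤ H) (j : ℕ) :
    ∃ (K : Set X) (M : ℕ) (y : X), IsCompact K ∧ subEnt T K ≤ (h : EReal) ∧
      ((h - 1 / ((j : ℝ) + 1) : ℝ) : EReal) ≤ hB T K ∧ j ≤ M ∧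
      (∀ z ∈ K, BowClose T M (1 / ((j : ℝ) + 1)) z y) ∧
      ∀ n ≥ M, sepMaxCard T n (1 / ((j : ℝ) + 1)) K ≤
        ENNReal.ofReal (Real.exp ((h + 1 / ((j : ℝ) + 1)) * n)) := by
  have hj : (0 : ℝ) < 1 / ((j : ℝ) + 1) := by positivity
  obtain ⟨K, hKc, hKe, U, hU1, hU2, hU3⟩ := approx hT hH
    (g := max (h / 2) (h - 1 / ((j : ℝ) + 1))) (lt_max_of_lt_left (by positivity))
    (max_lt (by linarith) (by linarith)) hhH
  obtain ⟨M0, hM0⟩ := eventually_atTop.1 (sepMaxCard_le_of_subEnt hKe hj hj)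
  obtain ⟨S, hS⟩ := exists_fin_span hT (max M0 j) hj
  obtain ⟨y, hy, hyB⟩ := exists_hBU_piece hU3 S
    (fun y => {z | BowClose T (max M0 j) (1 / ((j : ℝ) + 1)) z y}) (by
      intro z _
      obtain ⟨y, hy, hzy⟩ := hS z
      simp only [mem_iUnion]
      exact ⟨y, hy, hzy⟩)
  have hmono : ∀ n ε, sepMaxCard T n ε
      (K ∩ {z | BowClose T (max M0 j) (1 / ((j : ℝ) + 1)) z y}) ≤ sepMaxCard T n ε K :=
    fun n ε => sepMaxCard_mono inter_subset_left le_rfl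
  refine ⟨K ∩ {z | BowClose T (max M0 j) (1 / ((j : ℝ) + 1)) z y}, max M0 j, y,
    hKc.inter_right (isClosed_bow hT _ _ _), ?_, ?_, le_max_right _ _, fun z hz => hz.2, ?_⟩
  · apply subEnt_le_of
    intro ε hε δ hδ
    filter_upwards [sepMaxCard_le_of_subEnt hKe hε hδ] with n hn
    exact (hmono n ε).trans hn
  · refine le_trans ?_ (hyB.trans (le_iSup₂_of_le U ⟨hU1, hU2⟩ le_rfl))
    exact_mod_cast le_max_right _ _
  · intro n hn
    exact (hmono n _).trans (hM0 n ((le_max_left _ _).trans hn))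

lemma poly_le_exp {δ : ℝ} (hδ : 0 < δ) :
    ∀ᶠ n : ℕ in atTop, (n : ℝ) + 1 ≤ Real.exp (δ * n) := by
  obtain ⟨N, hN⟩ := exists_nat_gt (2 / δ ^ 2)
  filter_upwards [eventually_ge_atTop N] with n hn
  have hn' : (N : ℝ) ≤ n := by exact_mod_cast hn
  have h1 := Real.quadratic_le_exp_of_nonneg (show 0 ≤ δ * n by positivity)
  rw [div_lt_iff₀ (by positivity)] at hN
  have hn0 : (0 : ℝ) ≤ n := by positivity
  have h2 : 2 ≤ n * δ ^ 2 := by nlinarith [sq_nonneg δ]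
  have h3 : 0 ≤ δ * n := by positivity
  nlinarith

lemma union_lemma [MetricSpace X] [CompactSpace X] {T : X → X} (hT : Continuous T) {H h : ℝ}
    (hH : subEnt T (univ : Set X) = (H : EReal)) (h0 : 0 < h) (hhH : h ≤ H) :
    ∃ K : Set X, K.Nonempty ∧ IsCompact K ∧ hB T K = (h : EReal) ∧ subEnt T K = (h : EReal) := by
  classical
  choose K M y hKc hKe hKB hjM hKy hKn using pieces hT hH h0 hhH
  obtain ⟨x, -, φ, hφ, hlim⟩ := isCompact_univ.tendsto_subseq (fun j => mem_univ (y j))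
  have hq : ∀ l : ℕ, ∃ j : ℕ, l ≤ j ∧ ∀ z ∈ K j, BowClose T (l + 1) (1 / ((l : ℝ) + 1)) z x := by
    intro l
    have hl : (0 : ℝ) < 1 / (2 * ((l : ℝ) + 1)) := by positivity
    have h1 : ∀ᶠ k in atTop, ∀ i ∈ Finset.range (l + 1),
        dist (T^[i] (y (φ k))) (T^[i] x) < 1 / (2 * ((l : ℝ) + 1)) := by
      rw [Filter.eventually_all_finset]
      intro i _
      have : Tendsto (fun k => T^[i] (y (φ k))) atTop (𝓝 (T^[i] x)) :=
        ((hT.iterate i).tendsto x).comp hlim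
      exact (Metric.tendsto_nhds.1 this) _ hl
    obtain ⟨k, hk1, hk2⟩ := (h1.and (eventually_ge_atTop (2 * l + 1))).exists
    have hk3 : 2 * l + 1 ≤ φ k := hk2.trans (hφ.id_le k)
    refine ⟨φ k, by omega, fun z hz => ?_⟩
    have h2 : BowClose T (l + 1) (1 / (2 * ((l : ℝ) + 1))) z (y (φ k)) := by
      refine (hKy (φ k) z hz).mono ((by omega : l + 1 ≤ φ k).trans (hjM _)) ?_
      apply one_div_le_one_div_of_le (by positivity)
      have : ((2 * l + 1 : ℕ) : ℝ) ≤ φ k := by exact_mod_cast hk3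
      push_cast at this
      linarith
    have h3 : BowClose T (l + 1) (1 / (2 * ((l : ℝ) + 1))) (y (φ k)) x :=
      fun i hi => (hk1 i (Finset.mem_range.2 hi)).le
    refine (h2.trans h3).mono le_rfl (le_of_eq ?_)
    field_simp
    norm_num
  choose q hql hqx using hq
  set Kf : Set X := {x} ∪ ⋃ l, K (q l) with hKf
  have hne : Kf.Nonempty := ⟨x, Or.inl rfl⟩
  have hball : ∀ L l : ℕ, L ≤ l → K (q l) ⊆ closedBall x (1 / ((L : ℝ) + 1)) := by
    intro L l hLl z hz
    have := hqx l z hz 0 (by omega)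
    refine mem_closedBall.2 (le_trans this ?_)
    apply one_div_le_one_div_of_le (by positivity)
    have : (L : ℝ) ≤ l := by exact_mod_cast hLl
    linarith
  have hclosed : IsClosed Kf := by
    have : Kf = ⋂ L : ℕ, ((⋃ l ∈ Finset.range L, K (q l)) ∪ closedBall x (1 / ((L : ℝ) + 1))) := by
      apply Subset.antisymm
      · rintro z (hz | hz)
        · rw [mem_singleton_iff] at hz
          subst hz
          exact mem_iInter.2 fun L => Or.inr (mem_closedBall_self (by positivity))
        · obtain ⟨l, hl⟩ := mem_iUnion.1 hz
          refine mem_iInter.2 fun L => ?_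
          rcases lt_or_ge l L with hlL | hlL
          · left
            simp only [mem_iUnion]
            exact ⟨l, Finset.mem_range.2 hlL, hl⟩
          · exact Or.inr (hball L l hlL hl)
      · intro z hz
        by_cases hzK : ∃ l, z ∈ K (q l)
        · exact Or.inr (mem_iUnion.2 hzK)
        · left
          rw [mem_singleton_iff]
          have : ∀ L : ℕ, dist z x ≤ 1 / ((L : ℝ) + 1) := by
            intro L
            rcases mem_iInter.1 hz L with h1 | h1
            · simp only [mem_iUnion] at h1
              obtain ⟨l, _, hl⟩ := h1
              exact absurd ⟨l, hl⟩ hzK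
            · exact mem_closedBall.1 h1
          exact dist_le_zero.1 (ge_of_tendsto' tendsto_one_div_add_atTop_nhds_zero_nat this)
    rw [this]
    refine isClosed_iInter fun L => IsClosed.union ?_ isClosed_closedBall
    exact Set.Finite.isClosed_biUnion (Finset.finite_toSet _) fun l _ => (hKc _).isClosed
  have hBge : (h : EReal) ≤ hB T Kf := by
    apply EReal.ge_of_forall_gt_iff_ge.1
    intro z hz
    have hz : z < h := by exact_mod_cast hz
    obtain ⟨l, hl⟩ := exists_nat_one_div_lt (sub_pos.2 hz)
    refine le_trans ?_ ((hKB (q l)).trans (hB_mono (show K (q l) ⊆ Kf from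
      (subset_iUnion (fun l => K (q l)) l).trans subset_union_right)))
    have : 1 / ((q l : ℝ) + 1) ≤ 1 / ((l : ℝ) + 1) := by
      apply one_div_le_one_div_of_le (by positivity)
      have : (l : ℝ) ≤ q l := by exact_mod_cast hql l
      linarith
    exact_mod_cast (by linarith : z ≤ h - 1 / ((q l : ℝ) + 1))
  have hsub : subEnt T Kf ≤ (h : EReal) := by
    apply subEnt_le_of
    intro ε hε δ hδ
    obtain ⟨L, hL⟩ := exists_nat_one_div_lt (show 0 < min (ε / 2) (δ / 2) by positivity)
    have hLε := hL.trans_le (min_le_left _ _)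
    have hLδ := hL.trans_le (min_le_right _ _)
    have hdec : ∀ l : ℕ, L ≤ l → 1 / ((l : ℝ) + 1) ≤ 1 / ((L : ℝ) + 1) := by
      intro l hl
      apply one_div_le_one_div_of_le (by positivity)
      have : (L : ℝ) ≤ l := by exact_mod_cast hl
      linarith
    have hsmall : ∀ᶠ n : ℕ in atTop, ∀ l ∈ Finset.range L, sepMaxCard T n ε (K (q l)) ≤
        ENNReal.ofReal (Real.exp ((h + δ / 2) * n)) := by
      rw [Filter.eventually_all_finset]
      intro l _
      exact sepMaxCard_le_of_subEnt (hKe (q l)) hε (by positivity)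
    filter_upwards [hsmall, eventually_ge_atTop L, poly_le_exp (half_pos hδ)] with n hn1 hn2 hn3
    have hpiece : ∀ l, sepMaxCard T n ε (K (q l)) ≤
        ENNReal.ofReal (Real.exp ((h + δ / 2) * n)) := by
      intro l
      rcases lt_or_ge l L with hl | hl
      · exact hn1 l (Finset.mem_range.2 hl)
      · have hq1 := hdec (q l) (hl.trans (hql l))
        rcases le_total n (M (q l)) with hnM | hnM
        · refine (sepMaxCard_le_one (y := y (q l)) fun z hz =>
            (hKy (q l) z hz).mono hnM (by linarith)).trans ?_
          rw [ENNReal.one_le_ofReal, Real.one_le_exp_iff]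
          positivity
        · refine (sepMaxCard_mono subset_rfl (by linarith)).trans ((hKn (q l) n hnM).trans ?_)
          apply ENNReal.ofReal_le_ofReal
          apply Real.exp_le_exp.2
          exact mul_le_mul_of_nonneg_right (by linarith) (Nat.cast_nonneg _)
    have hcov : Kf ⊆ {z | BowClose T n (ε / 2) z x} ∪ ⋃ l ∈ Finset.range n, K (q l) := by
      rintro z (hz | hz)
      · rw [mem_singleton_iff] at hz
        subst hz
        left
        intro i _
        rw [dist_self]; positivity
      · obtain ⟨l, hl⟩ := mem_iUnion.1 hz
        rcases lt_or_ge l n with hln | hln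
        · right
          simp only [mem_iUnion]
          exact ⟨l, Finset.mem_range.2 hln, hl⟩
        · left
          exact (hqx l z hl).mono (by omega) (by linarith [hdec l (hn2.trans hln)])
    have he : (1 : ℝ) ≤ Real.exp ((h + δ / 2) * n) := by
      rw [Real.one_le_exp_iff]; positivity
    calc sepMaxCard T n ε Kf ≤ _ := sepMaxCard_mono hcov le_rfl
      _ ≤ _ := sepMaxCard_union_le _ _
      _ ≤ 1 + ∑ l ∈ Finset.range n, ENNReal.ofReal (Real.exp ((h + δ / 2) * n)) :=
        add_le_add (sepMaxCard_le_one (y := x) fun z hz => hz)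
          ((sepMaxCard_biUnion_le _ _).trans (Finset.sum_le_sum fun l _ => hpiece l))
      _ ≤ ENNReal.ofReal (Real.exp ((h + δ / 2) * n)) +
          n * ENNReal.ofReal (Real.exp ((h + δ / 2) * n)) := by
        rw [Finset.sum_const, Finset.card_range, nsmul_eq_mul]
        gcongr
        rw [ENNReal.one_le_ofReal]
        exact he
      _ = ENNReal.ofReal (((n : ℝ) + 1) * Real.exp ((h + δ / 2) * n)) := by
        rw [ENNReal.ofReal_mul (by positivity), ENNReal.ofReal_add (by positivity) (by norm_num),
          ENNReal.ofReal_natCast, ENNReal.ofReal_one]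
        ring
      _ ≤ _ := by
        apply ENNReal.ofReal_le_ofReal
        calc ((n : ℝ) + 1) * Real.exp ((h + δ / 2) * n)
            ≤ Real.exp (δ / 2 * n) * Real.exp ((h + δ / 2) * n) := by gcongr
          _ = _ := by rw [← Real.exp_add]; congr 1; ring
  exact ⟨Kf, hne, hclosed.isCompact, le_antisymm (hB_le_of_subEnt hT h0.le hsub) hBge,
    le_antisymm hsub (le_subEnt_of_hB hT hne h0.le hBge)⟩

lemma main_part [MetricSpace X] [CompactSpace X] {T : X → X} (hT : Continuous T)
    (hfin : subEnt T (univ : Set X) < ⊤) (h : ℝ) (h0 : 0 ≤ h)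
    (hh : (h : EReal) ≤ subEnt T (univ : Set X)) :
    ∃ K : Set X, K.Nonempty ∧ IsCompact K ∧ hB T K = (h : EReal) ∧ subEnt T K = (h : EReal) := by
  rcases h0.eq_or_lt with rfl | hpos
  · have hX : Nonempty X := by
      by_contra hcon
      rw [not_nonempty_iff] at hcon
      have : subEnt T (univ : Set X) ≤ ((-1 : ℝ) : EReal) := by
        apply subEnt_le_of
        intro ε _ δ _
        refine Filter.Eventually.of_forall fun n => ?_
        apply iSup₂_le
        rintro E -
        rw [Finset.eq_empty_of_isEmpty E]
        simp
      have h2 : (0 : ℝ) ≤ -1 := by exact_mod_cast hh.trans this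
      norm_num at h2
    obtain ⟨x⟩ := hX
    have hle : subEnt T {x} ≤ ((0 : ℝ) : EReal) := by
      apply subEnt_le_of
      intro ε hε δ hδ
      refine Filter.Eventually.of_forall fun n => ?_
      refine (sepMaxCard_le_one (y := x) ?_).trans ?_
      · rintro z hz i _
        rw [mem_singleton_iff.1 hz, dist_self]
        positivity
      · rw [ENNReal.one_le_ofReal, Real.one_le_exp_iff]
        positivity
    exact ⟨{x}, singleton_nonempty x, isCompact_singleton,
      le_antisymm (hB_le_of_subEnt hT le_rfl hle) (zero_le_hB (singleton_nonempty x)),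
      le_antisymm hle (zero_le_subEnt (singleton_nonempty x))⟩
  · have hbot : subEnt T (univ : Set X) ≠ ⊥ := by
      intro hb
      rw [hb] at hh
      exact absurd (le_bot_iff.1 hh) (EReal.coe_ne_bot h)
    have hH : subEnt T (univ : Set X) = ((subEnt T (univ : Set X)).toReal : EReal) :=
      (EReal.coe_toReal hfin.ne hbot).symm
    refine union_lemma hT hH hpos ?_
    rw [hH] at hh
    exact_mod_cast hh

/-- Every TDS with finite topological entropy is lowerable: for every real
`h` with `0 ≤ h ≤ h_top(T,X)` there is a non-empty compact `K_h ⊆ X` with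
`h^B(T,K_h) = h(T,K_h) = h`. -/
theorem finiteEntropy_lowerable {X : Type*} [MetricSpace X] [CompactSpace X]
    (T : X ≃ₜ X) (hfin : subEnt (⇑T) (univ : Set X) < ⊤) :
    (∀ h : ℝ, 0 ≤ h → (h : EReal) ≤ subEnt (⇑T) (univ : Set X) →
      ∃ K : Set X, K.Nonempty ∧ IsCompact K ∧
        hB (⇑T) K = (h : EReal) ∧ subEnt (⇑T) K = (h : EReal)) ∧
    Lowerable (⇑T) := by
  have hmain := main_part T.continuous hfin
  refine ⟨hmain, ?_⟩
  intro h h0 hh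
  have h1 : h ≠ ⊤ := (hh.trans_lt hfin).ne
  have h2 : h ≠ ⊥ := fun hb => by rw [hb] at h0; simp at h0
  lift h to ℝ using ⟨h1, h2⟩
  obtain ⟨K, hK1, hK2, -, hK4⟩ := hmain h (by exact_mod_cast h0) hh
  exact ⟨K, hK1, hK2, hK4⟩
end
end

section
/- Every expansive topological dynamical system is hereditarily uniformly lowerable (HUL): if (X,T) is an expansive TDS, then for each non-empty compact subset K ⊆ X and each real h with 0 ≤ h ≤ h(T,K) there is a non-empty compact subset K_h ⊆ K with at most one limit point such that h(T,K_h) = h. -/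
open Filter Set Metric MeasureTheory
open scoped ENNReal Topology

noncomputable section

variable {X Y : Type*}

section HULaux

variable {Z : Type*}

lemma sepMaxCard_mono_s2 [PseudoMetricSpace Z] (T : Z → Z) (n : ℕ) (ε : ℝ) {A B : Set Z}
    (h : A ⊆ B) : sepMaxCard T n ε A ≤ sepMaxCard T n ε B := by
  unfold sepMaxCard
  refine iSup₂_le fun E hE => ?_
  exact le_iSup₂_of_le E ⟨hE.1.trans h, hE.2⟩ le_rfl

lemma card_le_sepMaxCard [PseudoMetricSpace Z] (T : Z → Z) (n : ℕ) (ε : ℝ) {A : Set Z}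
    (E : Finset Z) (h : ↑E ⊆ A) (hE : IsSep T n ε (↑E : Set Z)) :
    (E.card : ℝ≥0∞) ≤ sepMaxCard T n ε A := by
  unfold sepMaxCard
  exact le_iSup₂_of_le E ⟨h, hE⟩ le_rfl

lemma sepMaxCard_finset_le [PseudoMetricSpace Z] (T : Z → Z) (n : ℕ) (ε : ℝ) (F : Finset Z) :
    sepMaxCard T n ε (↑F : Set Z) ≤ F.card := by
  unfold sepMaxCard
  refine iSup₂_le fun E hE => ?_
  exact_mod_cast Finset.card_le_card (Finset.coe_subset.1 hE.1)

lemma sepMaxCard_union [PseudoMetricSpace Z] (T : Z → Z) (n : ℕ) (ε : ℝ) (A B : Set Z) :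
    sepMaxCard T n ε (A ∪ B) ≤ sepMaxCard T n ε A + sepMaxCard T n ε B := by
  classical
  conv_lhs => unfold sepMaxCard
  refine iSup₂_le fun E hE => ?_
  have h1 : ((E.filter (· ∈ A)).card : ℝ≥0∞) ≤ sepMaxCard T n ε A :=
    card_le_sepMaxCard T n ε _ (fun x hx => by simp at hx; exact hx.2)
      (hE.2.mono (by intro x hx; simp at hx; exact hx.1))
  have h2 : ((E.filter (¬ · ∈ A)).card : ℝ≥0∞) ≤ sepMaxCard T n ε B :=
    card_le_sepMaxCard T n ε _ (fun x hx => by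
        simp at hx; exact (hE.1 hx.1).resolve_left hx.2)
      (hE.2.mono (by intro x hx; simp at hx; exact hx.1))
  rw [← Finset.card_filter_add_card_filter_not (s := E) (· ∈ A)]
  push_cast
  exact add_le_add h1 h2

lemma sepMaxCard_empty [PseudoMetricSpace Z] (T : Z → Z) (n : ℕ) (ε : ℝ) :
    sepMaxCard T n ε (∅ : Set Z) = 0 := by
  have := sepMaxCard_finset_le T n ε ∅
  simpa using this

lemma sepMaxCard_small [PseudoMetricSpace Z] (T : Z → Z) (n : ℕ) (ε : ℝ) (A : Set Z)
    (h : ∀ x ∈ A, ∀ y ∈ A, ∀ i < n, dist (T^[i] x) (T^[i] y) ≤ ε) :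
    sepMaxCard T n ε A ≤ 1 := by
  unfold sepMaxCard
  refine iSup₂_le fun E hE => ?_
  have : E.card ≤ 1 := by
    rw [Finset.card_le_one]
    intro a ha b hb
    by_contra hab
    obtain ⟨i, hi, hlt⟩ := hE.2 ha hb hab
    exact absurd (h a (hE.1 ha) b (hE.1 hb) i hi) (not_le.2 hlt)
  exact_mod_cast this

lemma exp_unif [MetricSpace Z] [CompactSpace Z] (T : Z ≃ₜ Z)
    (δ : ℝ) (hexp : ExpansiveWith T δ) (ε : ℝ) (hε : 0 < ε) :
    ∃ N : ℕ, ∀ x y : Z, ε < dist x y →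
      ∃ j ≤ N, δ < dist (T^[j] x) (T^[j] y) ∨ δ < dist (T.symm^[j] x) (T.symm^[j] y) := by
  let F : ℕ → Set (Z × Z) := fun N => {p | ε ≤ dist p.1 p.2} ∩
    ⋂ j ∈ Finset.range (N + 1), ({p | dist (T^[j] p.1) (T^[j] p.2) ≤ δ} ∩
      {p | dist (T.symm^[j] p.1) (T.symm^[j] p.2) ≤ δ})
  have hc1 : ∀ j, Continuous (T^[j]) := fun j => T.continuous.iterate j
  have hc2 : ∀ j, Continuous (T.symm^[j]) := fun j => T.symm.continuous.iterate j
  have hFc : ∀ N, IsClosed (F N) := by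
    intro N
    refine (isClosed_le continuous_const (by fun_prop)).inter ?_
    refine isClosed_biInter fun j _ => ?_
    have a1 := hc1 j
    have a2 := hc2 j
    exact (isClosed_le (by fun_prop) continuous_const).inter
      (isClosed_le (by fun_prop) continuous_const)
  by_contra! hcon
  have hne : (⋂ N, F N).Nonempty := by
    refine IsCompact.nonempty_iInter_of_sequence_nonempty_isCompact_isClosed F ?_ ?_
      (hFc 0).isCompact hFc
    · intro N p hp
      refine ⟨hp.1, ?_⟩
      have := hp.2
      simp only [mem_iInter, Finset.mem_range] at this ⊢
      intro j hj
      exact this j (by omega)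
    · intro N
      obtain ⟨x, y, hxy, hj⟩ := hcon N
      refine ⟨(x, y), hxy.le, ?_⟩
      simp only [mem_iInter, Finset.mem_range]
      intro j hj'
      exact hj j (by omega)
  obtain ⟨⟨x, y⟩, hp⟩ := hne
  simp only [mem_iInter] at hp
  have hxy : x ≠ y := by
    have h0 : ε ≤ dist x y := (hp 0).1
    exact dist_pos.1 (hε.trans_le h0)
  have key : ∀ j, dist (T^[j] x) (T^[j] y) ≤ δ ∧ dist (T.symm^[j] x) (T.symm^[j] y) ≤ δ := by
    intro j
    have := (hp j).2
    simp only [mem_iInter, Finset.mem_range] at this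
    exact this j (by omega)
  obtain ⟨n, hn⟩ := hexp x y hxy
  cases n with
  | ofNat n => exact absurd (key n).1 (not_le.2 hn)
  | negSucc n => exact absurd (key (n+1)).2 (not_le.2 hn)

lemma color_exists [MetricSpace Z] [CompactSpace Z] (T : Z ≃ₜ Z) (δ : ℝ) (hδ : 0 < δ) (N : ℕ) :
    ∃ (t : Finset Z) (c : Z → Z), (∀ x, c x ∈ t) ∧ ∀ x y, c x = c y → ∀ i ≤ N,
      dist (T.symm^[i] x) (T.symm^[i] y) ≤ δ := by
  let V : Z → Set Z := fun x => ⋂ i ∈ Finset.range (N + 1),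
    {y | dist (T.symm^[i] y) (T.symm^[i] x) < δ / 2}
  have hV : ∀ x, V x ∈ 𝓝 x := by
    intro x
    refine (Filter.biInter_finset_mem _).2 fun i _ => ?_
    have a2 : Continuous (T.symm^[i]) := T.symm.continuous.iterate i
    refine (isOpen_lt (by fun_prop) continuous_const).mem_nhds ?_
    simp [hδ]
  obtain ⟨t, ht⟩ := CompactSpace.elim_nhds_subcover V hV
  have : ∀ x, ∃ y ∈ t, x ∈ V y := by
    intro x
    have : x ∈ ⋃ y ∈ t, V y := by rw [ht]; trivial
    simpa using this
  choose c hc hcV using this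
  refine ⟨t, c, hc, fun x y hxy i hi => ?_⟩
  have h1 := hcV x
  have h2 := hcV y
  rw [← hxy] at h2
  simp only [V, mem_iInter, Finset.mem_range, mem_ofPred_eq] at h1 h2
  have := dist_triangle_right (T.symm^[i] x) (T.symm^[i] y) (T.symm^[i] (c x))
  linarith [h1 i (by omega), h2 i (by omega)]

lemma sep_compare [MetricSpace Z] [CompactSpace Z] (T : Z ≃ₜ Z)
    (δ : ℝ) (hδ : 0 < δ) (hexp : ExpansiveWith T δ) (ε : ℝ) (hε : 0 < ε) :
    ∃ N C : ℕ, ∀ (n : ℕ) (S : Set Z),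
      sepMaxCard T n ε S ≤ C * sepMaxCard T (n + N) δ S := by
  classical
  obtain ⟨N, hN⟩ := exp_unif T δ hexp ε hε
  obtain ⟨t, c, hc, hcc⟩ := color_exists T δ hδ N
  refine ⟨N, t.card, fun n S => ?_⟩
  conv_lhs => unfold sepMaxCard
  refine iSup₂_le fun E hE => ?_
  rw [Finset.card_eq_sum_card_fiberwise (f := c) (t := t) (fun x _ => hc x)]
  push_cast
  rw [← nsmul_eq_mul]
  refine Finset.sum_le_card_nsmul _ _ _ fun z _ => ?_
  refine card_le_sepMaxCard _ _ _ _ (fun x hx => ?_) ?_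
  · simp at hx; exact hE.1 hx.1
  · intro x hx y hy hxy
    simp at hx hy
    obtain ⟨i, hi, hlt⟩ := hE.2 hx.1 hy.1 hxy
    obtain ⟨j, hj, h | h⟩ := hN _ _ hlt
    · refine ⟨j + i, by omega, ?_⟩
      rwa [Function.iterate_add_apply, Function.iterate_add_apply]
    · by_cases hij : j ≤ i
      · refine ⟨i - j, by omega, ?_⟩
        have e : ∀ w, T.symm^[j] (T^[i] w) = T^[i - j] w := by
          intro w
          conv_lhs => rw [show i = j + (i - j) by omega, Function.iterate_add_apply]
          exact (Function.LeftInverse.iterate T.symm_apply_apply j) _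
        rwa [e, e] at h
      · exfalso
        have e : ∀ w, T.symm^[j] (T^[i] w) = T.symm^[j - i] w := by
          intro w
          conv_lhs => rw [show j = (j - i) + i by omega, Function.iterate_add_apply]
          rw [(Function.LeftInverse.iterate T.symm_apply_apply i) w]
        rw [e, e] at h
        exact absurd (hcc x y (hx.2.trans hy.2.symm) (j - i) (by omega)) (not_le.2 h)

lemma log_div_le {s : ℝ≥0∞} {g : ℝ} {n : ℕ} (hn : 0 < n)
    (h : s ≤ ENNReal.ofReal (Real.exp (g * n))) :
    ENNReal.log s / (n : EReal) ≤ (g : EReal) := by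
  rw [EReal.div_le_iff_le_mul (by exact_mod_cast hn) (EReal.natCast_ne_top n)]
  refine (ENNReal.log_monotone h).trans ?_
  rw [ENNReal.log_ofReal_of_pos (Real.exp_pos _), Real.log_exp]
  rw [mul_comm]
  push_cast
  exact le_rfl

lemma le_log_div {s : ℝ≥0∞} {g : ℝ} {n : ℕ} (hn : 0 < n)
    (h : ENNReal.ofReal (Real.exp (g * n)) ≤ s) :
    (g : EReal) ≤ ENNReal.log s / (n : EReal) := by
  rw [EReal.le_div_iff_mul_le (by exact_mod_cast hn) (EReal.natCast_ne_top n)]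
  refine le_trans ?_ (ENNReal.log_monotone h)
  rw [ENNReal.log_ofReal_of_pos (Real.exp_pos _), Real.log_exp]
  push_cast
  exact le_rfl


lemma ev_bound (D : ℝ) (a g g' : ℝ) (h : g < g') (N : ℕ) :
    ∀ᶠ n : ℕ in atTop, D * (((n + N : ℕ) : ℝ) + a) * Real.exp (g * (n + N : ℕ)) ≤
      Real.exp (g' * n) := by
  have h1 := tendsto_rpow_mul_exp_neg_mul_atTop_nhds_zero 1 (g' - g) (sub_pos.2 h)
  have h2 := tendsto_rpow_mul_exp_neg_mul_atTop_nhds_zero 0 (g' - g) (sub_pos.2 h)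
  have h3 := ((h1.const_mul (D * Real.exp (g * N))).add
    (h2.const_mul (D * (N + a) * Real.exp (g * N)))).comp (tendsto_natCast_atTop_atTop (R := ℝ))
  simp only [mul_zero, add_zero] at h3
  filter_upwards [h3.eventually (gt_mem_nhds one_pos)] with n hn
  simp only [Function.comp, Real.rpow_one, Real.rpow_zero] at hn
  have e : D * (((n + N : ℕ) : ℝ) + a) * Real.exp (g * (n + N : ℕ)) =
      (D * Real.exp (g * N) * (n * Real.exp (-(g' - g) * n)) +
        D * (N + a) * Real.exp (g * N) * (1 * Real.exp (-(g' - g) * n))) * Real.exp (g' * n) := by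
    have e1 : Real.exp (g * (n + N : ℕ)) =
        Real.exp (g * N) * Real.exp (-(g' - g) * n) * Real.exp (g' * n) := by
      rw [← Real.exp_add, ← Real.exp_add]
      congr 1
      push_cast
      ring
    rw [e1]
    push_cast
    ring
  rw [e]
  exact mul_le_of_le_one_left (Real.exp_pos _).le hn.le

lemma subEnt_le [MetricSpace Z] [CompactSpace Z] (T : Z ≃ₜ Z)
    (δ : ℝ) (hδ : 0 < δ) (hexp : ExpansiveWith T δ) (S : Set Z) (D g : ℝ)
    (hS : ∀ n : ℕ, sepMaxCard T n δ S ≤ ENNReal.ofReal (D * ((n : ℝ) + 1) * Real.exp (g * n))) :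
    subEnt T S ≤ (g : EReal) := by
  unfold subEnt
  refine iSup₂_le fun ε hε => ?_
  obtain ⟨N, C, hNC⟩ := sep_compare T δ hδ hexp ε hε
  refine EReal.le_of_forall_lt_iff_le.1 fun g' hg' => ?_
  have hg : g < g' := by exact_mod_cast hg'
  unfold sepEnt
  refine limsup_le_of_le (by isBoundedDefault) ?_
  filter_upwards [ev_bound (C * D) 1 g g' hg N, eventually_gt_atTop 0] with n hn hn0
  refine log_div_le hn0 ?_
  refine (hNC n S).trans ?_
  refine (mul_le_mul_right (hS (n + N)) _).trans ?_
  rw [← ENNReal.ofReal_natCast, ← ENNReal.ofReal_mul (by positivity)]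
  refine ENNReal.ofReal_le_ofReal ?_
  refine le_trans (le_of_eq ?_) hn
  ring


lemma locate_pt [MetricSpace Z] [CompactSpace Z] (T : Z ≃ₜ Z)
    (δ : ℝ) (hδ : 0 < δ) (hexp : ExpansiveWith T δ) (K : Set Z) (hK : IsCompact K)
    (h : ℝ) (hh : (h : EReal) ≤ subEnt T K) :
    ∃ x ∈ K, ∀ U ∈ 𝓝 x, ∀ g < h, ∃ n : ℕ,
      ENNReal.ofReal (Real.exp (g * n)) < sepMaxCard T n δ (K ∩ U) := by
  by_contra! hcon
  have key : ∃ g < h, ∃ C : ℝ, 0 ≤ C ∧ ∀ n : ℕ,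
      sepMaxCard T n δ K ≤ ENNReal.ofReal (C * Real.exp (g * n)) := by
    refine hK.induction_on (p := fun S => ∃ g < h, ∃ C : ℝ, 0 ≤ C ∧ ∀ n : ℕ,
      sepMaxCard T n δ S ≤ ENNReal.ofReal (C * Real.exp (g * n))) ?_ ?_ ?_ ?_
    · refine ⟨h - 1, by linarith, 0, le_rfl, fun n => ?_⟩
      rw [sepMaxCard_empty]
      exact zero_le
    · rintro s t hst ⟨g, hg, C, hC, hb⟩
      exact ⟨g, hg, C, hC, fun n => (sepMaxCard_mono_s2 T n δ hst).trans (hb n)⟩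
    · rintro s t ⟨g, hg, C, hC, hb⟩ ⟨g', hg', C', hC', hb'⟩
      refine ⟨max g g', max_lt hg hg', C + C', by positivity, fun n => ?_⟩
      refine (sepMaxCard_union T n δ s t).trans ?_
      refine (add_le_add (hb n) (hb' n)).trans ?_
      rw [← ENNReal.ofReal_add (by positivity) (by positivity)]
      refine ENNReal.ofReal_le_ofReal ?_
      rw [add_mul]
      gcongr
      · exact le_max_left _ _
      · exact le_max_right _ _
    · intro x hx
      obtain ⟨U, hU, g, hg, hb⟩ := hcon x hx
      exact ⟨K ∩ U, inter_mem self_mem_nhdsWithin (mem_nhdsWithin_of_mem_nhds hU), g, hg, 1,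
        zero_le_one, by simpa using hb⟩
  obtain ⟨g, hg, C, hC, hb⟩ := key
  have := subEnt_le T δ hδ hexp K C g (fun n => (hb n).trans (ENNReal.ofReal_le_ofReal (by
    gcongr
    exact le_mul_of_one_le_right hC (by linarith [Nat.cast_nonneg (α := ℝ) n]))))
  have h2 := hh.trans this
  have : h ≤ g := by exact_mod_cast h2
  linarith

/-- One block of the construction. -/
lemma block_exists [MetricSpace Z] (T : Z ≃ₜ Z) (δ : ℝ) (A : Set Z) (g : ℝ) (hg : 0 ≤ g) (k : ℕ)
    (hsmall : ∀ x ∈ A, ∀ y ∈ A, ∀ i < k, dist (T^[i] x) (T^[i] y) ≤ δ)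
    (hA : ∃ n : ℕ, ENNReal.ofReal (Real.exp (g * n)) < sepMaxCard T n δ A) :
    ∃ E : Finset Z, ↑E ⊆ A ∧
      (∀ m : ℕ, sepMaxCard T m δ (↑E : Set Z) ≤ ENNReal.ofReal (2 * Real.exp (g * m))) ∧
      ∃ n : ℕ, k < n ∧ ENNReal.ofReal (Real.exp (g * n)) ≤ sepMaxCard T n δ (↑E : Set Z) := by
  classical
  have hn := Nat.find_spec hA
  have hmin := fun m (hm : m < Nat.find hA) => not_lt.1 (Nat.find_min hA hm)
  set n := Nat.find hA
  have hone : ∀ m : ℕ, 1 ≤ Real.exp (g * m) := fun m => Real.one_le_exp (by positivity)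
  have hkn : k < n := by
    by_contra hle
    have h1 := sepMaxCard_small T n δ A
      (fun x hx y hy i hi => hsmall x hx y hy i (by omega))
    have h2 : (1 : ℝ≥0∞) ≤ ENNReal.ofReal (Real.exp (g * n)) := by
      rw [← ENNReal.ofReal_one]
      exact ENNReal.ofReal_le_ofReal (hone n)
    exact absurd (hn.trans_le (h1.trans h2)) (lt_irrefl _)
  have hn' := hn
  unfold sepMaxCard at hn'
  simp only [lt_iSup_iff] at hn'
  obtain ⟨E', ⟨hE'A, hE's⟩, hcard⟩ := hn'
  have hcard' : Real.exp (g * n) < E'.card := by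
    rw [← ENNReal.ofReal_natCast] at hcard
    exact (ENNReal.ofReal_lt_ofReal_iff_of_nonneg (Real.exp_pos _).le).1 hcard
  obtain ⟨E, hEE', hEc⟩ := Finset.exists_subset_card_eq
    (s := E') (n := ⌊Real.exp (g * n)⌋₊ + 1)
    (Nat.succ_le_of_lt ((Nat.floor_lt (Real.exp_pos _).le).2 hcard'))
  have hEA : (↑E : Set Z) ⊆ A := (Finset.coe_subset.2 hEE').trans hE'A
  refine ⟨E, hEA, fun m => ?_, n, hkn, ?_⟩
  · rcases lt_or_ge m n with hm | hm
    · refine (sepMaxCard_mono_s2 T m δ hEA).trans ((hmin m hm).trans (ENNReal.ofReal_le_ofReal ?_))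
      linarith [hone m]
    · refine (sepMaxCard_finset_le T m δ E).trans ?_
      rw [hEc, ← ENNReal.ofReal_natCast]
      refine ENNReal.ofReal_le_ofReal ?_
      push_cast
      have h1 := Nat.floor_le (Real.exp_pos (g * n)).le
      have h2 : Real.exp (g * n) ≤ Real.exp (g * m) := by gcongr
      linarith [hone m]
  · refine le_trans ?_ (card_le_sepMaxCard T n δ E subset_rfl
      (hE's.mono (Finset.coe_subset.2 hEE')))
    rw [hEc, ← ENNReal.ofReal_natCast]
    refine ENNReal.ofReal_le_ofReal ?_
    push_cast
    exact (Nat.lt_floor_add_one _).le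

lemma sepMaxCard_biUnion [PseudoMetricSpace Z] (T : Z → Z) (n : ℕ) (ε : ℝ) (A : ℕ → Set Z)
    (c : ℝ≥0∞) (hA : ∀ k, sepMaxCard T n ε (A k) ≤ c) (m : ℕ) :
    sepMaxCard T n ε (⋃ k ∈ Finset.range m, A k) ≤ m * c := by
  induction m with
  | zero => simp [sepMaxCard_empty]
  | succ m ih =>
    rw [Finset.range_add_one, Finset.set_biUnion_insert]
    refine (sepMaxCard_union _ _ _ _ _).trans ?_
    push_cast
    rw [add_mul, one_mul, add_comm]
    exact add_le_add ih (hA m)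

lemma finite_not_acc [MetricSpace Z] {s : Set Z} (hs : s.Finite) (y : Z) : ¬ AccPt y (𝓟 s) := by
  intro h
  rw [accPt_iff_nhds] at h
  have hc : IsClosed (s \ {y}) := (hs.subset sdiff_subset).isClosed
  obtain ⟨z, ⟨hz1, hz2⟩, hz3⟩ := h (s \ {y})ᶜ (hc.isOpen_compl.mem_nhds (by simp))
  exact hz1 ⟨hz2, hz3⟩

lemma acc_unique [MetricSpace Z] (x : Z) (E : ℕ → Finset Z)
    (hE : ∀ k, ∀ y ∈ E k, dist y x < 1 / ((k : ℝ) + 1)) (y : Z)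
    (hy : AccPt y (𝓟 (insert x (⋃ k, (↑(E k) : Set Z))))) : y = x := by
  by_contra hne
  have hpos : 0 < dist y x := dist_pos.2 hne
  obtain ⟨N, hN⟩ := exists_nat_one_div_lt (half_pos hpos)
  have hfin : (insert x (⋃ k ∈ Finset.range N, (↑(E k) : Set Z))).Finite :=
    (Set.Finite.biUnion (Finset.finite_toSet _) fun k _ => Finset.finite_toSet _).insert x
  have hb : ball y (dist y x / 2) ∈ 𝓝 y := ball_mem_nhds _ (half_pos hpos)
  have hacc := hy.nhds_inter hb
  have hsub : ball y (dist y x / 2) ∩ (insert x (⋃ k, (↑(E k) : Set Z))) ⊆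
      insert x (⋃ k ∈ Finset.range N, (↑(E k) : Set Z)) := by
    rintro z ⟨hz, rfl | hz2⟩
    · exact mem_insert _ _
    · right
      obtain ⟨k, hk⟩ := mem_iUnion.1 hz2
      refine mem_biUnion (x := k) ?_ hk
      simp only [Finset.coe_range, mem_Iio]
      by_contra hkN
      have h1 := hE k z hk
      have h2 : 1 / ((k : ℝ) + 1) ≤ 1 / ((N : ℝ) + 1) := by
        have : (N : ℝ) ≤ k := by exact_mod_cast not_lt.1 hkN
        gcongr
      have h3 := dist_triangle_left y x z
      rw [mem_ball] at hz
      linarith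
  exact finite_not_acc (hfin.subset hsub) y hacc

end HULaux

/-- Every expansive TDS is hereditarily uniformly lowerable: for each
non-empty compact `K` and each real `0 ≤ h ≤ h(T,K)` there is a non-empty compact `K_h ⊆ K`
with at most one limit point and `h(T,K_h) = h`. -/
theorem expansive_HUL {X : Type*} [MetricSpace X] [CompactSpace X] (T : X ≃ₜ X)
    (δ : ℝ) (hδ : 0 < δ) (hexp : ExpansiveWith T δ) :
    ∀ K : Set X, K.Nonempty → IsCompact K → ∀ h : ℝ, 0 ≤ h → (h : EReal) ≤ subEnt (⇑T) K →
      ∃ Kh : Set X, Kh ⊆ K ∧ Kh.Nonempty ∧ IsCompact Kh ∧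
        {x | AccPt x (𝓟 Kh)}.Subsingleton ∧ subEnt (⇑T) Kh = (h : EReal) := by
  intro K hKne hK h h0 hh
  rcases h0.eq_or_lt with rfl | hpos
  · obtain ⟨x, hx⟩ := hKne
    have hs : ∀ n ε, sepMaxCard T n ε {x} ≤ 1 := fun n ε => by
      simpa using sepMaxCard_finset_le T n ε {x}
    have hs' : ∀ n ε, 1 ≤ sepMaxCard T n ε {x} := fun n ε => by
      simpa using card_le_sepMaxCard T n ε (A := {x}) {x} (by simp) (by simp [IsSep])
    refine ⟨{x}, by simpa using hx, singleton_nonempty x, isCompact_singleton, ?_, ?_⟩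
    · intro y hy
      exact absurd hy (finite_not_acc (finite_singleton x) y)
    · have : ∀ n ε, sepMaxCard T n ε {x} = 1 := fun n ε => le_antisymm (hs n ε) (hs' n ε)
      unfold subEnt sepEnt
      simp only [this]
      simp
      refine le_antisymm (iSup₂_le fun _ _ => le_rfl) (le_iSup₂_of_le 1 one_pos le_rfl)
  obtain ⟨x, hxK, hx⟩ := locate_pt T δ hδ hexp K hK h hh
  let U : ℕ → Set X := fun k => ball x (1 / ((k : ℝ) + 1)) ∩
    ⋂ i ∈ Finset.range k, {y | dist (T^[i] y) (T^[i] x) < δ / 2}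
  have hU : ∀ k, U k ∈ 𝓝 x := by
    intro k
    refine inter_mem (ball_mem_nhds _ (by positivity)) ?_
    refine (Filter.biInter_finset_mem _).2 fun i _ => ?_
    have a2 : Continuous (T^[i]) := T.continuous.iterate i
    refine (isOpen_lt (by fun_prop) continuous_const).mem_nhds ?_
    simp [hδ]
  have hUs : ∀ k m, m ≤ k → ∀ y ∈ U k, ∀ i < m, dist (T^[i] y) (T^[i] x) < δ / 2 := by
    intro k m hmk y hy i hi
    have := hy.2
    simp only [mem_iInter, Finset.mem_range, mem_ofPred_eq] at this
    exact this i (by omega)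
  let g : ℕ → ℝ := fun k => h * ((k : ℝ) / ((k : ℝ) + 1))
  have hg0 : ∀ k, 0 ≤ g k := fun k => by positivity
  have hgh : ∀ k, g k < h := fun k =>
    mul_lt_of_lt_one_right hpos ((div_lt_one (by positivity)).2 (by linarith))
  have hglim : Tendsto g atTop (𝓝 h) := by
    have := (tendsto_natCast_div_add_atTop (1 : ℝ)).const_mul h
    simpa [g] using this
  have hblk := fun k => block_exists T δ (K ∩ U k) (g k) (hg0 k) k
    (fun y hy z hz i hi => by
      have h1 := hUs k k le_rfl y hy.2 i hi
      have h2 := hUs k k le_rfl z hz.2 i hi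
      have := dist_triangle_right (T^[i] y) (T^[i] z) (T^[i] x)
      linarith)
    (hx (U k) (hU k) (g k) (hgh k))
  choose E hEA hEup n hkn hElow using hblk
  have hacc := acc_unique x E (fun k y hy => (hEA k hy).2.1)
  refine ⟨insert x (⋃ k, (↑(E k) : Set X)), ?_, insert_nonempty _ _, ?_, ?_, ?_⟩
  · exact insert_subset hxK (iUnion_subset fun k => (hEA k).trans inter_subset_left)
  · refine IsClosed.isCompact ?_
    rw [isClosed_iff_accPt]
    intro y hy
    rw [hacc y hy]
    exact mem_insert _ _
  · intro y hy z hz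
    rw [hacc y hy, hacc z hz]
  · apply le_antisymm
    · refine subEnt_le T δ hδ hexp _ 2 h fun m => ?_
      have hsub : insert x (⋃ k, (↑(E k) : Set X)) ⊆
          U m ∪ ⋃ k ∈ Finset.range m, (↑(E k) : Set X) := by
        rintro z (rfl | hz)
        · exact Or.inl (mem_of_mem_nhds (hU m))
        · obtain ⟨k, hk⟩ := mem_iUnion.1 hz
          rcases lt_or_ge k m with hkm | hkm
          · right
            exact mem_biUnion (x := k) (by simpa using hkm) hk
          · left
            have hzU := (hEA k hk).2
            refine ⟨?_, ?_⟩
            · refine ball_subset_ball ?_ hzU.1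
              have : (m : ℝ) ≤ k := by exact_mod_cast hkm
              gcongr
            · simp only [mem_iInter, Finset.mem_range, mem_ofPred_eq]
              exact fun i hi => hUs k m hkm z hzU i hi
      have hone : 1 ≤ Real.exp (h * m) := Real.one_le_exp (by positivity)
      refine (sepMaxCard_mono_s2 T m δ hsub).trans ((sepMaxCard_union _ _ _ _ _).trans ?_)
      have h1 : sepMaxCard T m δ (U m) ≤ 1 := sepMaxCard_small T m δ _ fun y hy z hz i hi => by
        have h1 := hUs m m le_rfl y hy i hi
        have h2 := hUs m m le_rfl z hz i hi
        have := dist_triangle_right (T^[i] y) (T^[i] z) (T^[i] x)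
        linarith
      have h2 := sepMaxCard_biUnion T m δ (fun k => (↑(E k) : Set X))
        (ENNReal.ofReal (2 * Real.exp (h * m))) (fun k => (hEup k m).trans
          (ENNReal.ofReal_le_ofReal (by gcongr; exact (hgh k).le))) m
      refine (add_le_add h1 h2).trans ?_
      rw [← ENNReal.ofReal_one, ← ENNReal.ofReal_natCast, ← ENNReal.ofReal_mul (by positivity),
        ← ENNReal.ofReal_add (by positivity) (by positivity)]
      refine ENNReal.ofReal_le_ofReal ?_
      linarith
    · refine le_trans ?_ (le_iSup₂_of_le (f := fun (ε : ℝ) (_ : 0 < ε) =>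
        sepEnt T ε (insert x (⋃ k, (↑(E k) : Set X)))) δ hδ le_rfl)
      refine EReal.ge_of_forall_gt_iff_ge.1 fun b hb => ?_
      have hb' : b < h := by exact_mod_cast hb
      unfold sepEnt
      refine le_limsup_of_frequently_le ?_ (by isBoundedDefault)
      rw [frequently_atTop]
      intro N
      obtain ⟨k, hk1, hk2⟩ := ((hglim.eventually (lt_mem_nhds hb')).and
        (eventually_ge_atTop N)).exists
      have hlt := hkn k
      refine ⟨n k, by omega, le_log_div (by omega) ?_⟩
      refine le_trans ?_ ((hElow k).trans (sepMaxCard_mono_s2 T _ _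
        ((subset_iUnion (fun k => (↑(E k) : Set X)) k).trans (subset_insert _ _))))
      refine ENNReal.ofReal_le_ofReal ?_
      gcongr
end
end

section
/- Let π : (X,T) → (Y,S) be a factor map between general topological dynamical systems and let E ⊆ X be a non-empty compact subset. Then h(S, π(E)) ≤ h(T,E) ≤ h(S, π(E)) + h_top(T,X|π). In particular, if h_top(S,Y) < ∞ then h(T,E) − h(S,π(E)) ≤ h_top(T,X|π) for every non-empty compact E ⊆ X. -/
open Filter Set Metric MeasureTheory
open scoped ENNReal Topology

noncomputable section

variable {X Y : Type*}

lemma fes_fib {Z : Type*} (F : Finset X) (G : Finset Z) (R : X → Z → Prop)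
    (hR : ∀ u ∈ F, ∃ g ∈ G, R u g) (C : ℝ)
    (hC : ∀ g ∈ G, ∀ F' ⊆ F, (∀ u ∈ F', R u g) → (F'.card : ℝ) ≤ C) :
    (F.card : ℝ) ≤ G.card * C := by
  classical
  by_cases hF : F.Nonempty
  swap
  · rw [Finset.not_nonempty_iff_eq_empty] at hF
    subst hF
    by_cases hG : G.Nonempty
    · obtain ⟨g, hg⟩ := hG
      have := hC g hg ∅ (by simp) (by simp)
      simp at this ⊢
      positivity
    · rw [Finset.not_nonempty_iff_eq_empty] at hG
      simp [hG]
  obtain ⟨u0, hu0⟩ := hF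
  obtain ⟨g0, hg0, _⟩ := hR u0 hu0
  let f : X → Z := fun u => if h : u ∈ F then (hR u h).choose else g0
  have hf : ∀ u ∈ F, f u ∈ G ∧ R u (f u) := by
    intro u hu
    simp only [f, dif_pos hu]
    exact (hR u hu).choose_spec
  rw [Finset.card_eq_sum_card_fiberwise (f := f) (t := G) (fun u hu => (hf u hu).1)]
  push_cast
  calc _ ≤ ∑ _g ∈ G, C := by
        apply Finset.sum_le_sum
        intro g hg
        apply hC g hg _ (Finset.filter_subset _ _)
        intro u hu
        rw [Finset.mem_filter] at hu
        rw [← hu.2]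
        exact (hf u hu.1).2
    _ = _ := by simp

lemma fes_le_card [PseudoMetricSpace X] {T : X → X} {n : ℕ} {ε : ℝ} {K : Set X} (F : Finset X)
    (h : ↑F ⊆ K) (h' : IsSep T n ε (↑F : Set X)) : (F.card : ℝ≥0∞) ≤ sepMaxCard T n ε K :=
  le_iSup₂_of_le (f := fun (E : Finset X) (_ : ↑E ⊆ K ∧ IsSep T n ε (↑E : Set X)) =>
    (E.card : ℝ≥0∞)) F ⟨h, h'⟩ le_rfl

/-- a separated set of maximal cardinality is spanning -/
lemma fes_span [PseudoMetricSpace X] (T : X → X) (n : ℕ) (ε : ℝ) (hε : 0 < ε) (K : Set X) (N : ℕ)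
    (hN : ∀ F : Finset X, ↑F ⊆ K → IsSep T n ε (↑F : Set X) → F.card ≤ N) :
    ∃ G : Finset X, ↑G ⊆ K ∧ IsSep T n ε (↑G : Set X) ∧
      ∀ u ∈ K, ∃ g ∈ G, ∀ i < n, dist (T^[i] u) (T^[i] g) ≤ ε := by
  classical
  let P : ℕ → Prop := fun k => ∃ F : Finset X, (↑F ⊆ K ∧ IsSep T n ε (↑F : Set X)) ∧ F.card = k
  have h0 : P 0 := ⟨∅, ⟨by simp, by simp [IsSep]⟩, rfl⟩
  obtain ⟨G, ⟨hGK, hGs⟩, hGc⟩ := Nat.findGreatest_spec (P := P) (Nat.zero_le N) h0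
  refine ⟨G, hGK, hGs, fun u hu => ?_⟩
  by_contra! hcon
  have huG : u ∉ G := by
    intro h
    obtain ⟨i, _, h2⟩ := hcon u h
    rw [dist_self] at h2
    linarith
  have hins : IsSep T n ε (↑(insert u G) : Set X) := by
    rw [Finset.coe_insert]
    refine Set.Pairwise.insert hGs fun b hb _ => ⟨?_, ?_⟩
    · exact hcon b hb
    · obtain ⟨i, hi, h2⟩ := hcon b hb
      exact ⟨i, hi, by rwa [dist_comm]⟩
  have hsub : (↑(insert u G) : Set X) ⊆ K := by
    rw [Finset.coe_insert]
    exact Set.insert_subset hu hGK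
  have hP : P (insert u G).card := ⟨_, ⟨hsub, hins⟩, rfl⟩
  have := Nat.le_findGreatest (hN _ hsub hins) hP
  rw [Finset.card_insert_of_notMem huG, ← hGc] at this
  omega

lemma fes_nonneg [PseudoMetricSpace X] (T : X → X) (K : Set X) (hK : K.Nonempty) :
    0 ≤ subEnt T K := by
  obtain ⟨x, hx⟩ := hK
  refine le_iSup₂_of_le (1 : ℝ) one_pos ?_
  unfold sepEnt
  refine le_limsup_of_le (by isBoundedDefault) fun b hb => ?_
  obtain ⟨n, hn⟩ := hb.exists
  refine le_trans (EReal.div_nonneg ?_ (by positivity)) hn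
  rw [ENNReal.zero_le_log_iff]
  have := fes_le_card (T := T) (n := n) (ε := 1) (K := K) {x} (by simpa using hx) (by simp [IsSep])
  simpa using this

lemma fes_mono [PseudoMetricSpace X] [PseudoMetricSpace Y] (T : X → X) (S : Y → Y) (ε δ : ℝ)
    (K : Set X) (L : Set Y) (h : ∀ n, sepMaxCard T n ε K ≤ sepMaxCard S n δ L) :
    sepEnt T ε K ≤ sepEnt S δ L := by
  unfold sepEnt
  refine limsup_le_limsup (Eventually.of_forall fun n => ?_)
  exact EReal.div_le_div_right_of_nonneg (by positivity) (ENNReal.log_le_log (h n))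

lemma fes_iter {T : X → X} {S : Y → Y} {π : X → Y} (hcomm : π ∘ T = S ∘ π) (i : ℕ) (x : X) :
    π (T^[i] x) = S^[i] (π x) :=
  (Function.Semiconj.iterate_right (fun x => congrFun hcomm x) i) x

lemma fes_first [MetricSpace X] [CompactSpace X] [MetricSpace Y]
    (T : X → X) (S : Y → Y) (π : X → Y) (hπc : Continuous π)
    (hcomm : π ∘ T = S ∘ π) (E : Set X) : subEnt S (π '' E) ≤ subEnt T E := by
  classical
  refine iSup₂_le fun ε hε => ?_
  obtain ⟨δ, hδ, hd⟩ := Metric.uniformContinuous_iff.1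
    (CompactSpace.uniformContinuous_of_continuous hπc) ε hε
  refine le_iSup₂_of_le (δ / 2) (half_pos hδ) ?_
  refine fes_mono _ _ _ _ _ _ fun n => iSup₂_le fun G hG => ?_
  obtain ⟨hGK, hGs⟩ := hG
  obtain ⟨F, hFE, hFG, hinj⟩ : ∃ F : Finset X, ↑F ⊆ E ∧ F.image π = G ∧ Set.InjOn π ↑F := by
    obtain ⟨F, h1, h2, h3⟩ := Finset.exists_subset_injOn_image_eq_of_surjOn E G hGK
    exact ⟨F, h1, h3, h2⟩
  have hc : G.card = F.card := by rw [← hFG, Finset.card_image_of_injOn hinj]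
  rw [hc]
  refine fes_le_card F hFE fun u hu v hv huv => ?_
  have hne : π u ≠ π v := fun h => huv (hinj hu hv h)
  obtain ⟨i, hi, h⟩ := hGs (by rw [← hFG]; exact_mod_cast Finset.mem_image_of_mem π hu)
    (by rw [← hFG]; exact_mod_cast Finset.mem_image_of_mem π hv) hne
  refine ⟨i, hi, ?_⟩
  by_contra! hle
  have := hd (a := T^[i] u) (b := T^[i] v) (by linarith)
  rw [fes_iter hcomm, fes_iter hcomm] at this
  linarith

/-- choice of `m(y)` and the spanning set `E_y` -/
lemma fes_choose [PseudoMetricSpace X] (T : X → X) (K : Set X) (e : ℝ) (he : 0 < e) (b : ℝ)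
    (hb : subEnt T K < b) :
    ∃ m : ℕ, 0 < m ∧ ∃ G : Finset X, (G.card : ℝ) ≤ Real.exp (b * m) ∧
      ∀ u ∈ K, ∃ g ∈ G, ∀ i < m, dist (T^[i] u) (T^[i] g) ≤ e := by
  have h1 : sepEnt T e K < b := lt_of_le_of_lt
    (le_iSup₂ (f := fun (ε : ℝ) (_ : 0 < ε) => sepEnt T ε K) e he) hb
  obtain ⟨m, hm, hm0⟩ := ((eventually_lt_of_limsup_lt h1).and (eventually_gt_atTop 0)).exists
  have hmE : (0 : EReal) < (m : EReal) := by exact_mod_cast hm0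
  have hlt : ENNReal.log (sepMaxCard T m e K) < ((b * m : ℝ) : EReal) := by
    rw [EReal.div_lt_iff hmE (EReal.natCast_ne_top m)] at hm
    exact_mod_cast hm
  have hlt2 : sepMaxCard T m e K ≤ ENNReal.ofReal (Real.exp (b * m)) := by
    rw [← ENNReal.log_le_log_iff, ENNReal.log_ofReal_of_pos (Real.exp_pos _), Real.log_exp]
    exact hlt.le
  have hcard : ∀ F : Finset X, ↑F ⊆ K → IsSep T m e (↑F : Set X) →
      (F.card : ℝ) ≤ Real.exp (b * m) := by
    intro F h h'
    have := (fes_le_card F h h').trans hlt2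
    rw [← ENNReal.ofReal_natCast, ENNReal.ofReal_le_ofReal_iff (Real.exp_pos _).le] at this
    exact this
  obtain ⟨G, hGK, hGs, hG⟩ := fes_span T m e he K ⌊Real.exp (b * m)⌋₊
    (fun F h h' => Nat.le_floor (hcard F h h'))
  exact ⟨m, hm0, G, hcard G hGK hGs, hG⟩

lemma fes_sub0 [PseudoMetricSpace X] {T : X → X} {ε : ℝ} {F : Finset X}
    (h : IsSep T 0 ε (↑F : Set X)) : F.card ≤ 1 := by
  rw [Finset.card_le_one]
  intro a ha c hc
  by_contra hne
  obtain ⟨i, hi, _⟩ := h ha hc hne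
  omega

/-- the core counting bound -/
lemma fes_core [MetricSpace X] [MetricSpace Y]
    (T : X → X) (S : Y → Y) (π : X → Y) (hcomm : π ∘ T = S ∘ π) (e δ b : ℝ) (M : ℕ)
    (he : 0 < e) (hδ : 0 < δ) (hb : 0 ≤ b)
    (H : ∀ y : Y, ∃ m : ℕ, 0 < m ∧ m ≤ M ∧ ∃ G : Finset X, (G.card : ℝ) ≤ Real.exp (b * m) ∧
      ∀ u, dist (π u) y < δ → ∃ g ∈ G, ∀ i < m, dist (T^[i] u) (T^[i] g) < 2 * e) :
    ∀ n : ℕ, ∀ y : Y, ∀ F : Finset X, IsSep T n (4 * e) (↑F : Set X) →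
      (∀ u ∈ F, ∀ i < n, dist (S^[i] (π u)) (S^[i] y) < δ) →
      (F.card : ℝ) ≤ Real.exp (b * (n + M)) := by
  classical
  intro n
  induction n using Nat.strong_induction_on with
  | _ n ih =>
  intro y F hF hFy
  rcases Nat.eq_zero_or_pos n with rfl | hn
  · have h1 : (F.card : ℝ) ≤ 1 := by exact_mod_cast fes_sub0 hF
    refine h1.trans (Real.one_le_exp (by positivity))
  obtain ⟨m, hm0, hmM, G, hGc, hG⟩ := H y
  have hcov : ∀ u ∈ F, ∃ g ∈ G, ∀ i < m, dist (T^[i] u) (T^[i] g) < 2 * e :=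
    fun u hu => hG u (hFy u hu 0 hn)
  have hlate : ∀ g ∈ G, ∀ F' ⊆ F, (∀ u ∈ F', ∀ i < m, dist (T^[i] u) (T^[i] g) < 2 * e) →
      ∀ u ∈ F', ∀ v ∈ F', u ≠ v → ∃ i, i < n ∧ m ≤ i ∧ 4 * e < dist (T^[i] u) (T^[i] v) := by
    intro g _ F' hF' hu' u hu v hv huv
    obtain ⟨i, hi, h⟩ := hF (hF' hu) (hF' hv) huv
    refine ⟨i, hi, ?_, h⟩
    by_contra! him
    have h1 := hu' u hu i him
    have h2 := hu' v hv i him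
    have h3 := dist_triangle_right (T^[i] u) (T^[i] v) (T^[i] g)
    linarith
  rcases le_or_gt n m with hnm | hnm
  · have := fes_fib F G _ hcov 1 (by
      intro g hg F' hF' hu'
      have : F'.card ≤ 1 := by
        rw [Finset.card_le_one]
        intro u hu v hv
        by_contra hne
        obtain ⟨i, h1, h2, _⟩ := hlate g hg F' hF' hu' u hu v hv hne
        omega
      exact_mod_cast this)
    rw [mul_one] at this
    refine this.trans (hGc.trans (Real.exp_le_exp.2 ?_))
    have : (m : ℝ) ≤ M := by exact_mod_cast hmM
    have hn' : (0 : ℝ) ≤ n := by positivity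
    exact mul_le_mul_of_nonneg_left (by linarith) hb
  · obtain ⟨k, rfl⟩ : ∃ k, n = k + m := ⟨n - m, by omega⟩
    have := fes_fib F G _ hcov (Real.exp (b * (k + M))) (by
      intro g hg F' hF' hu'
      have hl := hlate g hg F' hF' hu'
      have hl' : ∀ u ∈ F', ∀ v ∈ F', u ≠ v →
          ∃ j < k, 4 * e < dist (T^[j] (T^[m] u)) (T^[j] (T^[m] v)) := by
        intro u hu v hv huv
        obtain ⟨i, h1, h2, h3⟩ := hl u hu v hv huv
        obtain ⟨j, rfl⟩ : ∃ j, i = j + m := ⟨i - m, by omega⟩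
        refine ⟨j, by omega, ?_⟩
        rwa [Function.iterate_add_apply, Function.iterate_add_apply] at h3
      have hinj : Set.InjOn (T^[m]) (↑F' : Set X) := by
        intro u hu v hv huv
        by_contra hne
        obtain ⟨j, _, h⟩ := hl' u hu v hv hne
        rw [huv, dist_self] at h
        linarith
      rw [← Finset.card_image_of_injOn hinj]
      refine ih k (by omega) (S^[m] y) _ ?_ ?_
      · intro a ha c hc hac
        rw [Finset.mem_coe, Finset.mem_image] at ha hc
        obtain ⟨u, hu, rfl⟩ := ha
        obtain ⟨v, hv, rfl⟩ := hc
        exact hl' u hu v hv (fun h => hac (by rw [h]))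
      · intro a ha i hi
        rw [Finset.mem_image] at ha
        obtain ⟨u, hu, rfl⟩ := ha
        have := hFy u (hF' hu) (i + m) (by omega)
        rwa [Function.iterate_add_apply, Function.iterate_add_apply, ← fes_iter hcomm m] at this)
    refine this.trans ((mul_le_mul_of_nonneg_right hGc (Real.exp_pos _).le).trans ?_)
    rw [← Real.exp_add]
    apply le_of_eq
    push_cast
    ring_nf

lemma fes_lebesgue [MetricSpace X] [CompactSpace X] [MetricSpace Y] [CompactSpace Y]
    (T : X → X) (hT : Continuous T) (π : X → Y) (hπc : Continuous π) (e b : ℝ) (he : 0 < e)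
    (hb : relEnt T π < b) :
    ∃ δ > 0, ∃ M : ℕ,
      ∀ y : Y, ∃ m : ℕ, 0 < m ∧ m ≤ M ∧ ∃ G : Finset X, (G.card : ℝ) ≤ Real.exp (b * m) ∧
      ∀ u, dist (π u) y < δ → ∃ g ∈ G, ∀ i < m, dist (T^[i] u) (T^[i] g) < 2 * e := by
  have hch := fun y : Y => fes_choose T (π ⁻¹' {y}) e he b
    (lt_of_le_of_lt (le_iSup (fun y : Y => subEnt T (π ⁻¹' {y})) y) hb)
  choose m hm0 G hGc hG using hch
  let U : Y → Set X := fun y => ⋃ g ∈ G y, ⋂ i ∈ Finset.range (m y),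
    {z | dist (T^[i] z) (T^[i] g) < 2 * e}
  have hU : ∀ y, IsOpen (U y) := by
    intro y
    refine isOpen_biUnion fun g _ => isOpen_biInter_finset fun i _ => ?_
    exact isOpen_lt ((hT.iterate i).dist continuous_const) continuous_const
  let W : Y → Set Y := fun y => (π '' (U y)ᶜ)ᶜ
  have hW : ∀ y, IsOpen (W y) := fun y =>
    (hπc.isClosedMap _ (hU y).isClosed_compl).isOpen_compl
  have hyW : ∀ y, y ∈ W y := by
    rintro y ⟨x, hx, hxy⟩
    apply hx
    obtain ⟨g, hg, h⟩ := hG y x hxy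
    simp only [U, Set.mem_iUnion, Set.mem_iInter, Finset.mem_range, Set.mem_setOf_eq]
    exact ⟨g, hg, fun i hi => (h i hi).trans_lt (by linarith)⟩
  obtain ⟨t, ht⟩ := isCompact_univ.elim_finite_subcover W hW
    (fun y _ => Set.mem_iUnion.2 ⟨y, hyW y⟩)
  obtain ⟨δ, hδ, hL⟩ := lebesgue_number_lemma_of_metric (c := fun c : t => W c) isCompact_univ
    (fun c => hW c) (by simpa [Set.iUnion_subtype] using ht)
  refine ⟨δ, hδ, t.sup m, fun y => ?_⟩
  obtain ⟨c, hc⟩ := hL y (Set.mem_univ y)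
  refine ⟨m c, hm0 c, Finset.le_sup c.2, G c, hGc c, fun u hu => ?_⟩
  have h1 : π u ∈ W c := hc hu
  have h2 : u ∈ U c := by
    by_contra h
    exact h1 ⟨u, h, rfl⟩
  simpa only [U, Set.mem_iUnion, Set.mem_iInter, Finset.mem_range, Set.mem_setOf_eq,
    exists_prop] using h2

lemma fes_count [MetricSpace X] [CompactSpace X] [MetricSpace Y] [CompactSpace Y]
    (T : X → X) (hT : Continuous T) (S : Y → Y) (π : X → Y) (hπc : Continuous π)
    (hcomm : π ∘ T = S ∘ π) (E : Set X) (e b : ℝ) (he : 0 < e) (hb0 : 0 ≤ b)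
    (hb : relEnt T π < b) :
    ∃ δ > 0, ∃ M : ℕ, ∀ n : ℕ, sepMaxCard T n (4 * e) E ≤
      sepMaxCard S n δ (π '' E) * ENNReal.ofReal (Real.exp (b * (n + M))) := by
  classical
  obtain ⟨δ, hδ, M, H⟩ := fes_lebesgue T hT π hπc e b he hb
  refine ⟨δ / 2, half_pos hδ, M, fun n => iSup₂_le fun F hF => ?_⟩
  obtain ⟨hFE, hFs⟩ := hF
  obtain ⟨G, hGF, hGs, hG⟩ := fes_span S n (δ / 2) (half_pos hδ) (↑(F.image π) : Set Y)
    (F.image π).card (fun F' h _ => Finset.card_le_card (by exact_mod_cast h))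
  have key := fes_fib F G (fun u g => ∀ i < n, dist (S^[i] (π u)) (S^[i] g) ≤ δ / 2)
    (fun u hu => hG (π u) (by exact_mod_cast Finset.mem_image_of_mem π hu))
    (Real.exp (b * (n + M))) (by
      intro g _ F' hF' hu'
      refine fes_core T S π hcomm e δ b M he hδ hb0 H n g F' ?_ ?_
      · exact Set.Pairwise.mono (by exact_mod_cast hF') hFs
      · intro u hu i hi
        exact (hu' u hu i hi).trans_lt (half_lt_self hδ))
  have hGE : (↑G : Set Y) ⊆ π '' E := by
    refine hGF.trans ?_
    rw [Finset.coe_image]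
    exact Set.image_mono hFE
  refine le_trans ?_ (mul_le_mul_left (fes_le_card G hGE hGs) _)
  rw [← ENNReal.ofReal_natCast, ← ENNReal.ofReal_natCast,
    ← ENNReal.ofReal_mul (by positivity)]
  exact ENNReal.ofReal_le_ofReal key

lemma fes_step [MetricSpace X] [CompactSpace X] [MetricSpace Y] [CompactSpace Y]
    (T : X → X) (hT : Continuous T) (S : Y → Y) (π : X → Y) (hπc : Continuous π)
    (hcomm : π ∘ T = S ∘ π) (E : Set X) (b : ℝ) (hb0 : 0 ≤ b)
    (hb : relEnt T π < b) : subEnt T E ≤ subEnt S (π '' E) + b := by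
  refine iSup₂_le fun ε hε => ?_
  obtain ⟨δ, hδ, M, H⟩ := fes_count T hT S π hπc hcomm E (ε / 4) b (by linarith) hb0 hb
  rw [mul_div_cancel₀ ε (by norm_num : (4 : ℝ) ≠ 0)] at H
  refine le_trans ?_ (add_le_add_left
    (le_iSup₂ (f := fun (ε : ℝ) (_ : 0 < ε) => sepEnt S ε (π '' E)) δ hδ) (b : EReal))
  have hlim : Tendsto (fun n : ℕ => ((b * (n + M) / n : ℝ) : EReal)) atTop (𝓝 (b : EReal)) := by
    refine (continuous_coe_real_ereal.tendsto b).comp ?_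
    have h1 : Tendsto (fun n : ℕ => b + b * M / (n : ℝ)) atTop (𝓝 (b + 0)) :=
      tendsto_const_nhds.add (tendsto_const_div_atTop_nhds_zero_nat _)
    rw [add_zero] at h1
    refine h1.congr' ?_
    filter_upwards [eventually_gt_atTop 0] with n hn
    have : (n : ℝ) ≠ 0 := by positivity
    field_simp
  have hls := hlim.limsup_eq
  unfold sepEnt
  calc _ ≤ limsup ((fun n : ℕ => ENNReal.log (sepMaxCard S n δ (π '' E)) / (n : EReal)) +
        fun n : ℕ => ((b * (n + M) / n : ℝ) : EReal)) atTop := by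
        refine limsup_le_limsup (Eventually.of_forall fun n => ?_)
        have h1 := ENNReal.log_le_log (H n)
        rw [ENNReal.log_mul_add, ENNReal.log_ofReal_of_pos (Real.exp_pos _), Real.log_exp] at h1
        have h2 := EReal.div_le_div_right_of_nonneg (c := (n : EReal)) (by positivity) h1
        rw [EReal.add_div_of_nonneg_right (by positivity)] at h2
        simpa [EReal.coe_div] using h2
    _ ≤ _ := by
        refine (EReal.limsup_add_le ?_ ?_).trans_eq (by rw [hls])
        · right; rw [hls]; exact EReal.coe_ne_top b
        · right; rw [hls]; exact EReal.coe_ne_bot b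

lemma fes_second [MetricSpace X] [CompactSpace X] [MetricSpace Y] [CompactSpace Y]
    (T : X → X) (hT : Continuous T) (S : Y → Y) (π : X → Y) (hπc : Continuous π)
    (hcomm : π ∘ T = S ∘ π) (E : Set X) (hE : E.Nonempty) :
    subEnt T E ≤ subEnt S (π '' E) + relEnt T π := by
  have h0 : 0 ≤ subEnt S (π '' E) := fes_nonneg S _ (hE.image π)
  have hr : 0 ≤ relEnt T π := by
    obtain ⟨x, _⟩ := hE
    exact le_iSup_of_le (π x) (fes_nonneg T _ ⟨x, rfl⟩)
  refine EReal.le_add_of_forall_gt (Or.inl (ne_of_gt (lt_of_lt_of_le EReal.bot_lt_zero h0)))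
    (Or.inr (ne_of_gt (lt_of_lt_of_le EReal.bot_lt_zero hr))) fun a ha c hc => ?_
  obtain ⟨b, hb1, hb2⟩ := EReal.lt_iff_exists_real_btwn.1 hc
  have hb0 : 0 ≤ b := by exact_mod_cast hr.trans hb1.le
  exact (fes_step T hT S π hπc hcomm E b hb0 hb1).trans (add_le_add ha.le hb2.le)

/-- Bowen-type inequality. For a factor map `π : (X,T) → (Y,S)` between
GTDSs and a non-empty compact `E ⊆ X`:
`h(S,π(E)) ≤ h(T,E) ≤ h(S,π(E)) + h_top(T,X|π)`; in particular, if `h_top(S,Y) < ∞` then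
`h(T,E) - h(S,π(E)) ≤ h_top(T,X|π)`. -/
theorem factor_entropy_subset {X Y : Type*} [MetricSpace X] [CompactSpace X]
    [MetricSpace Y] [CompactSpace Y]
    (T : X → X) (hT : Continuous T) (S : Y → Y) (hS : Continuous S)
    (π : X → Y) (hπc : Continuous π) (hπs : Function.Surjective π)
    (hcomm : π ∘ T = S ∘ π)
    (E : Set X) (hEne : E.Nonempty) (hEc : IsCompact E) :
    subEnt S (π '' E) ≤ subEnt T E ∧
    subEnt T E ≤ subEnt S (π '' E) + relEnt T π ∧
    (subEnt S (univ : Set Y) < ⊤ → subEnt T E - subEnt S (π '' E) ≤ relEnt T π) := by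
  have h2 := fes_second T hT S π hπc hcomm E hEne
  exact ⟨fes_first T S π hπc hcomm E, h2, fun _ => EReal.sub_le_of_le_add' h2⟩
end
end

section
/- Let π : (X,T) → (Y,S) be a factor map between general topological dynamical systems with h_top(S,Y) < ∞. Then the supremum over all non-empty compact subsets E ⊆ X of h(T,E) − h(S,π(E)) equals h_top(T,X|π). -/
open Filter Set Metric MeasureTheory
open scoped ENNReal Topology

noncomputable section

variable {X Y : Type*}

lemma aux_exists_span {X : Type*} [PseudoMetricSpace X] (T : X → X) (n : ℕ) (ε : ℝ) (hε : 0 < ε)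
    (K : Set X) (h : sepMaxCard T n ε K ≠ ⊤) :
    ∃ Z : Finset X, (Z.card : ℝ≥0∞) ≤ sepMaxCard T n ε K ∧
      ∀ x ∈ K, ∃ z ∈ Z, ∀ i < n, dist (T^[i] x) (T^[i] z) ≤ ε := by
  classical
  have hle : ∀ E : Finset X, ↑E ⊆ K → IsSep T n ε (↑E : Set X) →
      (E.card : ℝ≥0∞) ≤ sepMaxCard T n ε K := fun E h1 h2 =>
    le_iSup₂_of_le (f := fun (E : Finset X) (_ : ↑E ⊆ K ∧ IsSep T n ε (↑E : Set X)) =>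
      (E.card : ℝ≥0∞)) E ⟨h1, h2⟩ le_rfl
  obtain ⟨N, hN⟩ := ENNReal.exists_nat_gt h
  let P : ℕ → Prop := fun k => ∃ E : Finset X, ↑E ⊆ K ∧ IsSep T n ε (↑E : Set X) ∧ E.card = k
  have hP0 : P 0 := ⟨∅, by simp, by simp [IsSep], rfl⟩
  obtain ⟨E, hEK, hEs, hEc⟩ : P (Nat.findGreatest P N) := Nat.findGreatest_spec (Nat.zero_le N) hP0
  refine ⟨E, hle E hEK hEs, fun x hx => ?_⟩
  by_contra! hcon
  have hxE : x ∉ E := fun hxE => by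
    obtain ⟨i, hi, hlt⟩ := hcon x hxE
    simp at hlt
    linarith
  have hP : P (E.card + 1) := by
    refine ⟨insert x E, ?_, ?_, Finset.card_insert_of_notMem hxE⟩
    · rw [Finset.coe_insert]; exact Set.insert_subset hx hEK
    · rw [Finset.coe_insert]
      refine Set.Pairwise.insert hEs ?_
      intro b hb _
      obtain ⟨i, hi, hlt⟩ := hcon b hb
      exact ⟨⟨i, hi, hlt⟩, ⟨i, hi, by rwa [dist_comm]⟩⟩
  have hlt : E.card + 1 ≤ N := by
    obtain ⟨E', h1, h2, h3⟩ := hP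
    have := (hle E' h1 h2).trans_lt hN
    rw [h3] at this
    exact_mod_cast this.le
  have := Nat.le_findGreatest hlt hP
  omega

lemma aux_nonneg {X : Type*} [PseudoMetricSpace X] (T : X → X) (K : Set X) (hK : K.Nonempty) :
    0 ≤ subEnt T K := by
  obtain ⟨x, hx⟩ := hK
  refine le_iSup₂_of_le (1 : ℝ) one_pos ?_
  have h1 : ∀ n, 1 ≤ sepMaxCard T n 1 K := fun n =>
    le_iSup₂_of_le (f := fun (E : Finset X) (_ : ↑E ⊆ K ∧ IsSep T n 1 (↑E : Set X)) =>
      (E.card : ℝ≥0∞)) {x} ⟨by simpa using hx, by simp [IsSep]⟩ (by simp)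
  refine le_limsup_of_frequently_le (Frequently.of_forall fun n => ?_)
  refine EReal.div_nonneg ?_ (by exact_mod_cast Nat.zero_le n)
  rw [← ENNReal.log_one]
  exact ENNReal.log_monotone (h1 n)

lemma aux_singleton {X : Type*} [PseudoMetricSpace X] (T : X → X) (x : X) :
    subEnt T {x} ≤ 0 := by
  refine iSup₂_le fun ε _ => ?_
  have h1 : ∀ n, sepMaxCard T n ε {x} ≤ 1 := fun n => by
    refine iSup₂_le fun E hE => ?_
    have : E ⊆ {x} := by intro y hy; simpa using hE.1 hy
    exact_mod_cast (Finset.card_le_card this)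
  refine limsup_le_of_le (h := Eventually.of_forall fun n => ?_)
  refine EReal.div_nonpos_of_nonpos_of_nonneg ?_ (by exact_mod_cast Nat.zero_le n)
  rw [← ENNReal.log_one]
  exact ENNReal.log_monotone (h1 n)

lemma aux_local {X Y : Type*} [MetricSpace X] [CompactSpace X]
    [MetricSpace Y] [CompactSpace Y]
    (T : X → X) (hT : Continuous T) (π : X → Y) (hπc : Continuous π)
    (a : ℝ) (ha : relEnt T π < a) (ε : ℝ) (hε : 0 < ε) (y : Y) :
    ∃ (m : ℕ) (Z : Finset X), 1 ≤ m ∧ (Z.card : ℝ) ≤ Real.exp (a * m) ∧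
      ∀ᶠ y' in 𝓝 y, ∀ x ∈ π ⁻¹' {y'}, ∃ z ∈ Z, ∀ i < m, dist (T^[i] x) (T^[i] z) < 2 * ε := by
  have h1 : sepEnt T ε (π ⁻¹' {y}) < a := by
    refine lt_of_le_of_lt ?_ ha
    refine le_trans ?_ (le_iSup (fun y => subEnt T (π ⁻¹' {y})) y)
    exact le_iSup₂_of_le (f := fun (ε : ℝ) (_ : 0 < ε) => sepEnt T ε (π ⁻¹' {y})) ε hε le_rfl
  obtain ⟨m, hm1, hm⟩ := ((eventually_lt_of_limsup_lt h1).and (eventually_ge_atTop 1)).exists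
  have hmpos : (0 : EReal) < (m : EReal) := by exact_mod_cast hm
  rw [EReal.div_lt_iff hmpos (EReal.natCast_ne_top m)] at hm1
  have hc : sepMaxCard T m ε (π ⁻¹' {y}) < ENNReal.ofReal (Real.exp (a * m)) := by
    rw [← ENNReal.log_lt_log_iff, ENNReal.log_ofReal_of_pos (Real.exp_pos _), Real.log_exp]
    exact_mod_cast hm1
  obtain ⟨Z, hZ, hZs⟩ := aux_exists_span T m ε hε _ (hc.trans_le le_top).ne
  refine ⟨m, Z, hm, ?_, ?_⟩
  · have := hZ.trans hc.le
    rw [← ENNReal.ofReal_natCast] at this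
    exact (ENNReal.ofReal_le_ofReal_iff (Real.exp_pos _).le).1 this
  · refine hπc.isClosedMap.eventually_nhds_fiber y fun x₀ hx₀ => ?_
    obtain ⟨z, hz, hzs⟩ := hZs x₀ hx₀
    have : ∀ᶠ x in 𝓝 x₀, ∀ i ∈ Finset.range m, dist (T^[i] x) (T^[i] z) < 2 * ε := by
      rw [Filter.eventually_all_finset]
      intro i hi
      have hcont : Continuous fun x => dist (T^[i] x) (T^[i] z) :=
        (hT.iterate i).dist continuous_const
      refine hcont.continuousAt.eventually_lt continuousAt_const ?_
      have := hzs i (Finset.mem_range.1 hi)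
      linarith
    filter_upwards [this] with x hx
    exact ⟨z, hz, fun i hi => hx i (Finset.mem_range.2 hi)⟩

lemma aux_unif {X Y : Type*} [MetricSpace X] [CompactSpace X]
    [MetricSpace Y] [CompactSpace Y]
    (T : X → X) (hT : Continuous T) (π : X → Y) (hπc : Continuous π)
    (a : ℝ) (ha : relEnt T π < a) (ε : ℝ) (hε : 0 < ε) :
    ∃ (δ : ℝ) (M : ℕ), 0 < δ ∧ ∀ y : Y, ∃ (m : ℕ) (Z : Finset X), 1 ≤ m ∧ m ≤ M ∧
      (Z.card : ℝ) ≤ Real.exp (a * m) ∧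
      ∀ x, dist (π x) y ≤ δ → ∃ z ∈ Z, ∀ i < m, dist (T^[i] x) (T^[i] z) < 2 * ε := by
  choose m Z hm hZ hev using aux_local T hT π hπc a ha ε hε
  choose W hW hWo hyW using fun y => _root_.eventually_nhds_iff.1 (hev y)
  obtain ⟨t, -, ht⟩ := isCompact_univ.elim_nhds_subcover W
    (fun y _ => (hWo y).mem_nhds (hyW y))
  obtain ⟨δ, hδ, hL⟩ := lebesgue_number_lemma_of_metric (c := fun i : t => W i)
    (isCompact_univ (X := Y)) (fun i => hWo i) (by
      intro y hy
      obtain ⟨i, hi, hyi⟩ := mem_iUnion₂.1 (ht hy)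
      exact mem_iUnion.2 ⟨⟨i, hi⟩, hyi⟩)
  refine ⟨δ / 2, t.sup m, by positivity, fun y => ?_⟩
  obtain ⟨i, hi⟩ := hL y (mem_univ y)
  refine ⟨m i, Z i, hm i, Finset.le_sup (f := m) i.2, hZ i, fun x hx => ?_⟩
  exact hW i (π x) (hi (by rw [mem_ball]; linarith)) x rfl

lemma aux_count {X Y : Type*} [MetricSpace X] [MetricSpace Y]
    (T : X → X) (S : Y → Y) (π : X → Y)
    (hcomm : π ∘ T = S ∘ π) (a : ℝ) (ha : 0 ≤ a) (ε δ : ℝ) (M : ℕ)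
    (H : ∀ y : Y, ∃ (m : ℕ) (Z : Finset X), 1 ≤ m ∧ m ≤ M ∧
      (Z.card : ℝ) ≤ Real.exp (a * m) ∧
      ∀ x, dist (π x) y ≤ δ → ∃ z ∈ Z, ∀ i < m, dist (T^[i] x) (T^[i] z) < 2 * ε) (n : ℕ) :
    ∀ (y : Y) (F : Finset X), IsSep T n (4 * ε) (F : Set X) →
      (∀ x ∈ F, ∀ i < n, dist (S^[i] (π x)) (S^[i] y) ≤ δ) →
      (F.card : ℝ) ≤ Real.exp (a * (n + M)) := by
  classical
  have hsemi : ∀ k x, π (T^[k] x) = S^[k] (π x) := fun k x =>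
    (show Function.Semiconj π T S from fun x => congrFun hcomm x).iterate_right k x
  induction n using Nat.strong_induction_on with
  | _ n ih =>
  intro y F hF hFy
  have hone : ∀ F' : Finset X, F' ⊆ F → (∀ x ∈ F', ∀ x' ∈ F', x = x') → (F'.card : ℝ) ≤ 1 := by
    intro F' _ h
    exact_mod_cast Finset.card_le_one.2 h
  rcases Nat.eq_zero_or_pos n with hn | hn
  · subst hn
    refine (hone F subset_rfl ?_).trans (Real.one_le_exp (by positivity))
    intro x hx x' hx'
    by_contra hne
    obtain ⟨i, hi, -⟩ := hF hx hx' hne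
    omega
  obtain ⟨m, Z, hm1, hmM, hZc, hZ⟩ := H y
  let G : X → Finset X := fun z => F.filter fun x => ∀ i < m, dist (T^[i] x) (T^[i] z) < 2 * ε
  have hcov : F ⊆ Z.biUnion G := by
    intro x hx
    obtain ⟨z, hz, hzs⟩ := hZ x (by simpa using hFy x hx 0 hn)
    exact Finset.mem_biUnion.2 ⟨z, hz, Finset.mem_filter.2 ⟨hx, hzs⟩⟩
  have hcard : (F.card : ℝ) ≤ ∑ z ∈ Z, ((G z).card : ℝ) := by
    exact_mod_cast (Finset.card_le_card hcov).trans Finset.card_biUnion_le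
  have hsep : ∀ z, ∀ x ∈ G z, ∀ x' ∈ G z, x ≠ x' →
      ∃ i, m ≤ i ∧ i < n ∧ 4 * ε < dist (T^[i] x) (T^[i] x') := by
    intro z x hx x' hx' hne
    obtain ⟨hxF, hxz⟩ := Finset.mem_filter.1 hx
    obtain ⟨hxF', hxz'⟩ := Finset.mem_filter.1 hx'
    obtain ⟨i, hi, hd⟩ := hF hxF hxF' hne
    refine ⟨i, ?_, hi, hd⟩
    by_contra! him
    have h1 := hxz i him
    have h2 := hxz' i him
    have h3 := dist_triangle_right (T^[i] x) (T^[i] x') (T^[i] z)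
    linarith
  obtain ⟨B, hB0, hB, hGB⟩ : ∃ B : ℝ, 0 ≤ B ∧ Real.exp (a * m) * B ≤ Real.exp (a * (n + M)) ∧
      ∀ z ∈ Z, ((G z).card : ℝ) ≤ B := by
    rcases le_or_gt n m with hnm | hmn
    · refine ⟨1, zero_le_one, ?_, fun z _ => ?_⟩
      · rw [mul_one]
        apply Real.exp_le_exp.2
        apply mul_le_mul_of_nonneg_left _ ha
        have : (m : ℝ) ≤ M := by exact_mod_cast hmM
        have : (0 : ℝ) ≤ n := Nat.cast_nonneg n
        linarith
      · refine hone _ (Finset.filter_subset _ _) ?_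
        intro x hx x' hx'
        by_contra hne
        obtain ⟨i, h1, h2, -⟩ := hsep z x hx x' hx' hne
        omega
    · refine ⟨Real.exp (a * ((n - m : ℕ) + M)), (Real.exp_pos _).le, ?_, fun z _ => ?_⟩
      · rw [← Real.exp_add]
        apply Real.exp_le_exp.2
        rw [Nat.cast_sub hmn.le]
        apply le_of_eq
        ring
      · have hsh : ∀ x ∈ G z, ∀ x' ∈ G z, x ≠ x' →
            ∃ i < n - m, 4 * ε < dist (T^[i] (T^[m] x)) (T^[i] (T^[m] x')) := by
          intro x hx x' hx' hne
          obtain ⟨i, h1, h2, h3⟩ := hsep z x hx x' hx' hne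
          refine ⟨i - m, by omega, ?_⟩
          rw [← Function.iterate_add_apply, ← Function.iterate_add_apply, Nat.sub_add_cancel h1]
          exact h3
        by_cases hε : 0 ≤ ε
        · have hinj : Set.InjOn T^[m] (G z : Set X) := by
            intro x hx x' hx' heq
            by_contra hne
            obtain ⟨i, -, hd⟩ := hsh x hx x' hx' hne
            rw [heq, dist_self] at hd
            linarith
          rw [← Finset.card_image_of_injOn hinj]
          refine ih (n - m) (by omega) (S^[m] y) _ ?_ ?_
          · intro u hu v hv huv
            obtain ⟨x, hx, rfl⟩ := Finset.mem_image.1 (Finset.mem_coe.1 hu)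
            obtain ⟨x', hx', rfl⟩ := Finset.mem_image.1 (Finset.mem_coe.1 hv)
            exact hsh x hx x' hx' (fun h => huv (by rw [h]))
          · intro u hu i hi
            obtain ⟨x, hx, rfl⟩ := Finset.mem_image.1 hu
            rw [hsemi, ← Function.iterate_add_apply, ← Function.iterate_add_apply]
            exact hFy x (Finset.mem_filter.1 hx).1 _ (by omega)
        · have : G z = ∅ := by
            refine Finset.eq_empty_of_forall_notMem fun x hx => ?_
            have h1 := (Finset.mem_filter.1 hx).2 0 (by omega)
            have h2 := dist_nonneg (x := T^[0] x) (y := T^[0] z)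
            linarith
          rw [this]
          simpa using (Real.exp_pos _).le
  calc (F.card : ℝ) ≤ ∑ z ∈ Z, ((G z).card : ℝ) := hcard
    _ ≤ ∑ z ∈ Z, B := Finset.sum_le_sum hGB
    _ = Z.card * B := by rw [Finset.sum_const, nsmul_eq_mul]
    _ ≤ Real.exp (a * m) * B := mul_le_mul_of_nonneg_right hZc hB0
    _ ≤ _ := hB

lemma aux_bowen {X Y : Type*} [MetricSpace X] [CompactSpace X]
    [MetricSpace Y] [CompactSpace Y]
    (T : X → X) (hT : Continuous T) (S : Y → Y)
    (π : X → Y) (hπc : Continuous π)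
    (hcomm : π ∘ T = S ∘ π) (a : ℝ) (ha0 : 0 ≤ a) (ha : relEnt T π < a) (E : Set X) :
    subEnt T E ≤ a + subEnt S (π '' E) := by
  classical
  refine iSup₂_le fun ε' hε' => ?_
  obtain ⟨ε, rfl⟩ : ∃ ε, ε' = 4 * ε := ⟨ε' / 4, by ring⟩
  have hε : 0 < ε := by linarith
  obtain ⟨δ, M, hδ, H⟩ := aux_unif T hT π hπc a ha ε hε
  have key : ∀ n, sepMaxCard T n (4 * ε) E ≤
      ENNReal.ofReal (Real.exp (a * (n + M))) * sepMaxCard S n δ (π '' E) := by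
    intro n
    by_cases htop : sepMaxCard S n δ (π '' E) = ⊤
    · rw [htop, ENNReal.mul_top]
      · exact le_top
      · simpa using Real.exp_pos _
    obtain ⟨A, hA, hAs⟩ := aux_exists_span S n δ hδ _ htop
    refine iSup₂_le fun F hF => ?_
    let G : Y → Finset X := fun y => F.filter fun x => ∀ i < n, dist (S^[i] (π x)) (S^[i] y) ≤ δ
    have hcov : F ⊆ A.biUnion G := by
      intro x hx
      obtain ⟨z, hz, hzs⟩ := hAs (π x) ⟨x, hF.1 hx, rfl⟩
      exact Finset.mem_biUnion.2 ⟨z, hz, Finset.mem_filter.2 ⟨hx, hzs⟩⟩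
    have hcard : (F.card : ℝ) ≤ ∑ z ∈ A, ((G z).card : ℝ) := by
      exact_mod_cast (Finset.card_le_card hcov).trans Finset.card_biUnion_le
    have hG : ∀ z ∈ A, ((G z).card : ℝ) ≤ Real.exp (a * (n + M)) := fun z _ =>
      aux_count T S π hcomm a ha0 ε δ M H n z (G z)
        (hF.2.mono (by exact_mod_cast Finset.filter_subset _ _))
        (fun x hx => (Finset.mem_filter.1 hx).2)
    have h2 : (F.card : ℝ) ≤ Real.exp (a * (n + M)) * A.card := by
      refine (hcard.trans (Finset.sum_le_sum hG)).trans_eq ?_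
      rw [Finset.sum_const, nsmul_eq_mul, mul_comm]
    refine le_trans ?_ (mul_le_mul_right hA _)
    rw [← ENNReal.ofReal_natCast, ← ENNReal.ofReal_natCast,
      ← ENNReal.ofReal_mul (Real.exp_pos _).le]
    exact ENNReal.ofReal_le_ofReal h2
  have hlim : limsup (fun n : ℕ => ((a * (n + M) : ℝ) : EReal) / (n : EReal)) atTop = a := by
    apply Tendsto.limsup_eq
    have h1 : Tendsto (fun n : ℕ => a * (1 + M / (n : ℝ))) atTop (𝓝 a) := by
      have := (tendsto_const_div_atTop_nhds_zero_nat (M : ℝ))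
      simpa using (this.const_add 1).const_mul a
    refine (EReal.tendsto_coe.2 h1).congr' ?_
    filter_upwards [eventually_ge_atTop 1] with n hn
    have hn' : (n : ℝ) ≠ 0 := by positivity
    rw [← EReal.coe_coe_eq_natCast, ← EReal.coe_div]
    congr 1
    field_simp
  have hstep : sepEnt T (4 * ε) E ≤ a + sepEnt S δ (π '' E) := by
    rw [← hlim]
    refine le_trans ?_ (EReal.limsup_add_le (by rw [hlim]; simp) (by rw [hlim]; simp))
    refine limsup_le_limsup (Eventually.of_forall fun n => ?_)
    simp only [Pi.add_apply]
    have hn0 : (0 : EReal) ≤ (n : EReal) := by exact_mod_cast Nat.zero_le n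
    rw [← EReal.add_div_of_nonneg_right hn0]
    refine EReal.div_le_div_right_of_nonneg hn0 ?_
    refine (ENNReal.log_monotone (key n)).trans_eq ?_
    rw [ENNReal.log_mul_add, ENNReal.log_ofReal_of_pos (Real.exp_pos _), Real.log_exp]
  refine hstep.trans (add_le_add le_rfl ?_)
  exact le_iSup₂_of_le (f := fun (ε : ℝ) (_ : 0 < ε) => sepEnt S ε (π '' E)) δ hδ le_rfl

/-- If `π : (X,T) → (Y,S)` is a factor map between GTDSs with
`h_top(S,Y) < ∞`, then `sup_{E ∈ 2^X} (h(T,E) - h(S,π(E))) = h_top(T,X|π)`. -/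
theorem sup_entropy_difference_eq_relEnt {X Y : Type*} [MetricSpace X] [CompactSpace X]
    [MetricSpace Y] [CompactSpace Y]
    (T : X → X) (hT : Continuous T) (S : Y → Y) (hS : Continuous S)
    (π : X → Y) (hπc : Continuous π) (hπs : Function.Surjective π)
    (hcomm : π ∘ T = S ∘ π) (hfin : subEnt S (univ : Set Y) < ⊤) :
    (⨆ (E : Set X) (_ : E.Nonempty ∧ IsCompact E), (subEnt T E - subEnt S (π '' E)))
      = relEnt T π := by
  apply le_antisymm
  · refine iSup₂_le fun E hE => ?_
    obtain ⟨x, hx⟩ := hE.1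
    have h0 : 0 ≤ relEnt T π :=
      (aux_nonneg T (π ⁻¹' {π x}) ⟨x, rfl⟩).trans (le_iSup (fun y => subEnt T (π ⁻¹' {y})) (π x))
    refine le_of_forall_gt fun c hc => ?_
    obtain ⟨a, ha, hac⟩ := EReal.lt_iff_exists_real_btwn.1 hc
    refine lt_of_le_of_lt (EReal.sub_le_of_le_add ?_) hac
    exact aux_bowen T hT S π hπc hcomm a (by exact_mod_cast (h0.trans ha.le)) ha E
  · refine iSup_le fun y => ?_
    obtain ⟨x, rfl⟩ := hπs y
    refine le_iSup₂_of_le (π ⁻¹' {π x})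
      ⟨⟨x, rfl⟩, (isClosed_singleton.preimage hπc).isCompact⟩ ?_
    rw [image_preimage_eq _ hπs]
    calc subEnt T (π ⁻¹' {π x}) = subEnt T (π ⁻¹' {π x}) - 0 := by simp
      _ ≤ _ := EReal.sub_le_sub le_rfl (aux_singleton S (π x))
end
end
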